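/- arXiv:2010.10336 — 10 statements merged into one kernel-verified Lean document; each statement's English description precedes it below -/
import Mathlib

section
/- Let 0 < a < 1, let 0 < α < 1 < β, let λ > 0, and let p : ℝ → ℝ be measurable with α ≤ p(x) ≤ β for a.e. x ∈ [−π, −aπ]. Suppose e : ℝ → ℝ is three times continuously differentiable on [−π, −aπ] and satisfies the Volterra identity e'''(x) = e'''(−π) + λ ∫_{−π}^{x} p(t) e(t) dt for all x ∈ [−π, −aπ], together with e(−π) = 0 and e''(−π) = 0. If either (e'(−π) = 0 and e'''(−π) > 0) or (e'(−π) > 0 and e'''(−π) = 0), then e(x) > 0 for all x ∈ (−π, −aπ]. -/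
open Real MeasureTheory Set Filter
open scoped Topology

/-!
As long as `e` is nonnegative, the Volterra identity keeps `e'''` above its initial value, and three
integrations make `e''` and `e'` nonnegative and `e` nondecreasing. Nonnegative initial data that do
not all vanish make `e` positive just to the right of the left endpoint, and `e` can then never
return to zero, because it is nondecreasing up to the first point where it would do so.
-/

theorem forall_mem_Icc_lt_of_forall_Ico_lt {X Y : Type*}
    [LinearOrder X] [TopologicalSpace X] [OrderClosedTopology X] [CompactIccSpace X]
    [LinearOrder Y] [TopologicalSpace Y] [ClosedIicTopology Y]
    {f : X → Y} {a b : X} {m : Y} (hf : ContinuousOn f (Icc a b))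
    (hstep : ∀ y ∈ Icc a b, (∀ z ∈ Ico a y, m < f z) → m < f y) :
    ∀ x ∈ Icc a b, m < f x := by
  by_contra! ⟨x, hx, hfx⟩
  have hcompact : IsCompact (Icc a b ∩ f ⁻¹' Iic m) :=
    isCompact_Icc.of_isClosed_subset (hf.preimage_isClosed_of_isClosed isClosed_Icc isClosed_Iic)
      inter_subset_left
  obtain ⟨y, ⟨hy, hfy⟩, hleast⟩ := hcompact.exists_isLeast ⟨x, hx, hfx⟩
  refine (hstep y hy fun z hz => ?_).not_ge hfy
  by_contra! hfz
  exact hz.2.not_ge (hleast ⟨⟨hz.1, hz.2.le.trans hy.2⟩, hfz⟩)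

theorem monotoneOn_of_subset_of_hasDerivWithinAt_nonneg {f f' : ℝ → ℝ} {s t : Set ℝ}
    (hf : ∀ x ∈ s, HasDerivWithinAt f (f' x) s x) (ht : Convex ℝ t) (hts : t ⊆ s)
    (hf' : ∀ x ∈ interior t, 0 ≤ f' x) : MonotoneOn f t :=
  monotoneOn_of_hasDerivWithinAt_nonneg ht
    (fun x hx => (hf x (hts hx)).continuousWithinAt.mono hts)
    (fun x hx => (hf x (hts (interior_subset hx))).mono (interior_subset.trans hts)) hf'

theorem strictMonoOn_of_subset_of_hasDerivWithinAt_pos {f f' : ℝ → ℝ} {s t : Set ℝ}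
    (hf : ∀ x ∈ s, HasDerivWithinAt f (f' x) s x) (ht : Convex ℝ t) (hts : t ⊆ s)
    (hf' : ∀ x ∈ interior t, 0 < f' x) : StrictMonoOn f t :=
  strictMonoOn_of_hasDerivWithinAt_pos ht
    (fun x hx => (hf x (hts hx)).continuousWithinAt.mono hts)
    (fun x hx => (hf x (hts (interior_subset hx))).mono (interior_subset.trans hts)) hf'

section Icc

variable {b c : ℝ} {f f' : ℝ → ℝ}

theorem nonneg_on_Ico_of_hasDerivWithinAt_nonneg {y : ℝ} (hy : y ≤ c)
    (hf : ∀ x ∈ Icc b c, HasDerivWithinAt f (f' x) (Icc b c) x) (hb : 0 ≤ f b)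
    (hf' : ∀ x ∈ Ico b y, 0 ≤ f' x) : ∀ x ∈ Ico b y, 0 ≤ f x := by
  intro x hx
  have hmono : MonotoneOn f (Ico b y) :=
    monotoneOn_of_subset_of_hasDerivWithinAt_nonneg hf (convex_Ico b y)
      (Ico_subset_Icc_self.trans (Icc_subset_Icc_right hy)) fun z hz => hf' z (interior_subset hz)
  exact hb.trans (hmono ⟨le_rfl, hx.1.trans_lt hx.2⟩ hx hx.1)

theorem eventually_pos_nhdsGT_of_continuousOn_Icc (hbc : b < c) (hf : ContinuousOn f (Icc b c))
    (hb : 0 < f b) : ∀ᶠ x in 𝓝[>] b, 0 < f x := by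
  have hright : Tendsto f (𝓝[>] b) (𝓝 (f b)) := by
    rw [← nhdsWithin_Ioc_eq_nhdsGT hbc]
    exact (hf b (left_mem_Icc.2 hbc.le)).mono Ioc_subset_Icc_self
  exact hright.eventually_const_lt hb

theorem eventually_pos_nhdsGT_of_hasDerivWithinAt (hbc : b < c)
    (hf : ∀ x ∈ Icc b c, HasDerivWithinAt f (f' x) (Icc b c) x) (hb : 0 ≤ f b)
    (hpos : 0 < f b ∨ ∀ᶠ x in 𝓝[>] b, 0 < f' x) : ∀ᶠ x in 𝓝[>] b, 0 < f x := by
  rcases hpos with hpos | hpos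
  · exact eventually_pos_nhdsGT_of_continuousOn_Icc hbc
      (fun x hx => (hf x hx).continuousWithinAt) hpos
  obtain ⟨u, hbu, hu⟩ := mem_nhdsGT_iff_exists_Ioc_subset.1 hpos
  filter_upwards [Ioc_mem_nhdsGT hbu, Ioc_mem_nhdsGT hbc] with x hxu hxc
  have hmono : StrictMonoOn f (Icc b x) := by
    refine strictMonoOn_of_subset_of_hasDerivWithinAt_pos hf (convex_Icc b x)
      (Icc_subset_Icc_right hxc.2) fun z hz => ?_
    rw [interior_Icc] at hz
    exact hu ⟨hz.1, hz.2.le.trans hxu.2⟩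
  exact hb.trans_lt (hmono (left_mem_Icc.2 hxc.1.le) (right_mem_Icc.2 hxc.1.le) hxc.1)

theorem pos_on_Ioc_of_forall_nonneg_imp_monotoneOn (hf : ContinuousOn f (Icc b c)) (hb : 0 ≤ f b)
    (hright : ∀ᶠ x in 𝓝[>] b, 0 < f x)
    (hmono : ∀ y ≤ c, (∀ x ∈ Ico b y, 0 ≤ f x) → MonotoneOn f (Icc b y)) :
    ∀ x ∈ Ioc b c, 0 < f x := by
  intro x hx
  obtain ⟨d, hbd : b < d, hd⟩ := mem_nhdsGT_iff_exists_Ioc_subset.1 hright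
  rcases le_or_gt x d with hxd | hdx
  · exact hd ⟨hx.1, hxd⟩
  have hsub : Icc d x ⊆ Icc b c := Icc_subset_Icc hbd.le hx.2
  refine forall_mem_Icc_lt_of_forall_Ico_lt (hf.mono hsub) (fun y hy hpos => ?_) x
    (right_mem_Icc.2 hdx.le)
  have hnonneg : ∀ z ∈ Ico b y, 0 ≤ f z := by
    intro z hz
    rcases hz.1.eq_or_lt with rfl | hbz
    · exact hb
    rcases le_or_gt z d with hzd | hdz
    · exact le_of_lt (hd ⟨hbz, hzd⟩)
    · exact (hpos z ⟨hdz.le, hz.2⟩).le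
  calc
    0 < f d := hd (right_mem_Ioc.2 hbd)
    _ ≤ f y := hmono y (hsub hy).2 hnonneg ⟨hbd.le, hy.1⟩ (right_mem_Icc.2 (hsub hy).1) hy.1

theorem continuousOn_of_eq_add_mul_integral {q : ℝ → ℝ} {C r : ℝ} (hq : IntegrableOn q (Icc b c))
    (hf : ∀ x ∈ Icc b c, f x = C + r * ∫ t in b..x, q t) : ContinuousOn f (Icc b c) := by
  rcases lt_or_ge c b with hcb | hbc
  · simp only [Icc_eq_empty hcb.not_ge, continuousOn_empty]
  have hprim : ContinuousOn (fun x => ∫ t in b..x, q t) (Icc b c) := by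
    rw [← uIcc_of_le hbc] at hq ⊢
    exact intervalIntegral.continuousOn_primitive_interval hq
  exact (continuousOn_const.add (continuousOn_const.mul hprim)).congr hf

theorem intervalIntegral_mul_nonneg {g : ℝ → ℝ} (hbc : b ≤ c)
    (hf : ∀ᵐ x ∂(volume.restrict (Icc b c)), 0 ≤ f x) (hg : ∀ x ∈ Icc b c, 0 ≤ g x) :
    0 ≤ ∫ x in b..c, f x * g x := by
  refine intervalIntegral.integral_nonneg_of_ae_restrict hbc ?_
  filter_upwards [hf, ae_restrict_mem measurableSet_Icc] with x hfx hx
  exact mul_nonneg hfx (hg x hx)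

end Icc

section Beam

variable {b c lam : ℝ} {p e e' e'' e''' : ℝ → ℝ}

theorem monotoneOn_Icc_of_volterra_of_nonneg (hlam : 0 ≤ lam)
    (hp : ∀ᵐ x ∂(volume.restrict (Icc b c)), 0 ≤ p x)
    (he : ∀ x ∈ Icc b c, HasDerivWithinAt e (e' x) (Icc b c) x)
    (he' : ∀ x ∈ Icc b c, HasDerivWithinAt e' (e'' x) (Icc b c) x)
    (he'' : ∀ x ∈ Icc b c, HasDerivWithinAt e'' (e''' x) (Icc b c) x)
    (hVolterra : ∀ x ∈ Icc b c, e''' x = e''' b + lam * ∫ t in b..x, p t * e t)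
    (hb1 : 0 ≤ e' b) (hb2 : 0 ≤ e'' b) (hb3 : 0 ≤ e''' b)
    {y : ℝ} (hy : y ≤ c) (hnonneg : ∀ x ∈ Ico b y, 0 ≤ e x) : MonotoneOn e (Icc b y) := by
  have h3 : ∀ x ∈ Ico b y, 0 ≤ e''' x := by
    intro x hx
    have hxc : x ≤ c := hx.2.le.trans hy
    have hint : 0 ≤ ∫ t in b..x, p t * e t :=
      intervalIntegral_mul_nonneg hx.1
        (ae_restrict_of_ae_restrict_of_subset (Icc_subset_Icc_right hxc) hp)
        fun t ht => hnonneg t ⟨ht.1, ht.2.trans_lt hx.2⟩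
    rw [hVolterra x ⟨hx.1, hxc⟩]
    positivity
  have h2 : ∀ x ∈ Ico b y, 0 ≤ e'' x := nonneg_on_Ico_of_hasDerivWithinAt_nonneg hy he'' hb2 h3
  have h1 : ∀ x ∈ Ico b y, 0 ≤ e' x := nonneg_on_Ico_of_hasDerivWithinAt_nonneg hy he' hb1 h2
  refine monotoneOn_of_subset_of_hasDerivWithinAt_nonneg he (convex_Icc b y)
    (Icc_subset_Icc_right hy) fun x hx => ?_
  rw [interior_Icc] at hx
  exact h1 x (Ioo_subset_Ico_self hx)

theorem stmt0_general (hlam : 0 ≤ lam) (hpint : IntegrableOn p (Icc b c))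
    (hp : ∀ᵐ x ∂(volume.restrict (Icc b c)), 0 ≤ p x)
    (he : ∀ x ∈ Icc b c, HasDerivWithinAt e (e' x) (Icc b c) x)
    (he' : ∀ x ∈ Icc b c, HasDerivWithinAt e' (e'' x) (Icc b c) x)
    (he'' : ∀ x ∈ Icc b c, HasDerivWithinAt e'' (e''' x) (Icc b c) x)
    (hVolterra : ∀ x ∈ Icc b c, e''' x = e''' b + lam * ∫ t in b..x, p t * e t)
    (hb0 : 0 ≤ e b) (hb1 : 0 ≤ e' b) (hb2 : 0 ≤ e'' b) (hb3 : 0 ≤ e''' b)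
    (hb : 0 < e b ∨ 0 < e' b ∨ 0 < e'' b ∨ 0 < e''' b) :
    ∀ x ∈ Ioc b c, 0 < e x := by
  intro x hx
  have hbc : b < c := hx.1.trans_le hx.2
  have hcont : ContinuousOn e (Icc b c) := fun z hz => (he z hz).continuousWithinAt
  have hcont3 : ContinuousOn e''' (Icc b c) :=
    continuousOn_of_eq_add_mul_integral (hpint.mul_continuousOn hcont isCompact_Icc) hVolterra
  have hright2 (h : 0 < e'' b ∨ 0 < e''' b) : ∀ᶠ z in 𝓝[>] b, 0 < e'' z :=
    eventually_pos_nhdsGT_of_hasDerivWithinAt hbc he'' hb2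
      (h.imp_right (eventually_pos_nhdsGT_of_continuousOn_Icc hbc hcont3))
  have hright1 (h : 0 < e' b ∨ 0 < e'' b ∨ 0 < e''' b) : ∀ᶠ z in 𝓝[>] b, 0 < e' z :=
    eventually_pos_nhdsGT_of_hasDerivWithinAt hbc he' hb1 (h.imp_right hright2)
  have hright : ∀ᶠ z in 𝓝[>] b, 0 < e z :=
    eventually_pos_nhdsGT_of_hasDerivWithinAt hbc he hb0 (hb.imp_right hright1)
  exact pos_on_Ioc_of_forall_nonneg_imp_monotoneOn hcont hb0 hright
    (fun y hy =>
      monotoneOn_Icc_of_volterra_of_nonneg hlam hp he he' he'' hVolterra hb1 hb2 hb3 hy) x hx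

end Beam

/-- Lemma (Nehari-type positivity, left span): if `e` is `C³` on the left span
`[-π, -aπ]`, satisfies the Volterra identity for the fourth-order beam
equation `e'''' = λ p e` with density `α ≤ p ≤ β` a.e., with hinged data
`e(-π) = e''(-π) = 0`, and either `e'(-π) = 0, e'''(-π) > 0` or
`e'(-π) > 0, e'''(-π) = 0`, then `e > 0` on `(-π, -aπ]`. -/
theorem stmt0 (a α β lam : ℝ) (ha0 : 0 < a) (ha1 : a < 1)
    (hα0 : 0 < α) (hα1 : α < 1) (hβ : 1 < β) (hlam : 0 < lam)
    (p : ℝ → ℝ) (hpmeas : Measurable p)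
    (hpbd : ∀ᵐ x ∂(volume.restrict (Set.Icc (-π) (-(a * π)))), α ≤ p x ∧ p x ≤ β)
    (e e' e'' e''' : ℝ → ℝ)
    (he : ∀ x ∈ Set.Icc (-π) (-(a * π)),
      HasDerivWithinAt e (e' x) (Set.Icc (-π) (-(a * π))) x)
    (he' : ∀ x ∈ Set.Icc (-π) (-(a * π)),
      HasDerivWithinAt e' (e'' x) (Set.Icc (-π) (-(a * π))) x)
    (he'' : ∀ x ∈ Set.Icc (-π) (-(a * π)),
      HasDerivWithinAt e'' (e''' x) (Set.Icc (-π) (-(a * π))) x)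
    (he''' : ContinuousOn e''' (Set.Icc (-π) (-(a * π))))
    (hVolterra : ∀ x ∈ Set.Icc (-π) (-(a * π)),
      e''' x = e''' (-π) + lam * ∫ t in (-π)..x, p t * e t)
    (hb0 : e (-π) = 0) (hb2 : e'' (-π) = 0)
    (hcase : (e' (-π) = 0 ∧ 0 < e''' (-π)) ∨ (0 < e' (-π) ∧ e''' (-π) = 0)) :
    ∀ x ∈ Set.Ioc (-π) (-(a * π)), 0 < e x := by
  refine stmt0_general hlam.le (Integrable.of_mem_Icc α β hpmeas.aemeasurable hpbd)
    (hpbd.mono fun x hx => hα0.le.trans hx.1) he he' he'' hVolterra hb0.ge ?_ hb2.ge ?_ ?_ <;> grind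
end

section
/- Let 0 < a < 1, let 0 < α < 1 < β, let λ > 0, and let p : ℝ → ℝ be measurable with α ≤ p(x) ≤ β for a.e. x ∈ [−π, −aπ]. Suppose e : ℝ → ℝ is three times continuously differentiable on [−π, −aπ], satisfies e'''(x) = e'''(−π) + λ ∫_{−π}^{x} p(t) e(t) dt for all x ∈ [−π, −aπ], and satisfies the boundary conditions e(−π) = 0, e''(−π) = 0 and e(−aπ) = 0. If e is not identically zero on [−π, −aπ], then e'(−π) ≠ 0 and e'''(−π) ≠ 0. -/
open Real MeasureTheory Set Filter

/-!
If `y⁗ = q y` with `q ≥ 0` and `y, y', y'', y'''` are nonnegative at the left endpoint, they stay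
nonnegative. On an interval so short that its length is at most `1` and `∫ q < 1`, a negative
minimum `-c` of `y` would give `y''' ≥ -c ∫ q`, hence `y ≥ -c ∫ q > -c` by integrating three times;
nonnegativity of all the derivatives then allows restarting from the right end of that interval.
Thus `y` is increasing, and if it vanishes at the right endpoint it is zero. For a nonzero beam with
`y = y'' = 0` at the left endpoint and `y = 0` at the right one, this, applied to `y` and to `-y`,
forces `y'` and `y'''` to have strictly opposite signs at the left endpoint.
-/

open scoped Topology

lemma mul_sub_le_sub_of_le_hasDerivWithinAt {f f' : ℝ → ℝ} {a b C x : ℝ}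
    (hf : ∀ y ∈ Icc a b, HasDerivWithinAt f (f' y) (Icc a b) y)
    (hC : ∀ y ∈ Icc a b, C ≤ f' y) (hx : x ∈ Icc a b) : C * (x - a) ≤ f x - f a := by
  have hderiv : ∀ y ∈ interior (Icc a b), HasDerivAt f (f' y) y := fun y hy =>
    (hf y (interior_subset hy)).hasDerivAt (mem_interior_iff_mem_nhds.1 hy)
  refine (convex_Icc a b).mul_sub_le_image_sub_of_le_deriv
    (fun y hy => (hf y hy).continuousWithinAt)
    (fun y hy => (hderiv y hy).differentiableAt.differentiableWithinAt)
    (fun y hy => ?_) a (left_mem_Icc.2 (hx.1.trans hx.2)) x hx hx.1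
  rw [(hderiv y hy).deriv]
  exact hC y (interior_subset hy)

lemma eventually_nhdsGT_integral_lt {q : ℝ → ℝ} {a b ε : ℝ}
    (hq : IntegrableOn q (Icc a b)) (hab : a < b) (hε : 0 < ε) :
    ∀ᶠ c in 𝓝[>] a, ∫ t in a..c, q t < ε := by
  have hcont : ContinuousOn (fun c => ∫ t in a..c, q t) (Icc a b) := by
    rw [← uIcc_of_le hab.le] at hq ⊢
    exact intervalIntegral.continuousOn_primitive_interval hq
  refine ((hcont a (left_mem_Icc.2 hab.le)).mono_of_mem_nhdsWithin
    (Icc_mem_nhdsGT hab)).eventually_lt_const ?_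
  simpa only [intervalIntegral.integral_same] using hε

/-- The functions `u 0, …, u (n + 1)` are `y, y', …, y⁽ⁿ⁺¹⁾` on `[a, b]` for a solution `y` of the
linear differential equation `y⁽ⁿ⁺²⁾ = q y`; the beam equation is the case `n = 2`. The equation is
imposed in integrated form, so that it makes sense for `q` merely integrable; the order is at least
two, so that `y` is continuous. -/
structure IsODESolutionOn (q : ℝ → ℝ) (a b : ℝ) {n : ℕ} (u : Fin (n + 2) → ℝ → ℝ) : Prop where
  hasDerivWithinAt : ∀ i : Fin (n + 1), ∀ x ∈ Icc a b,
    HasDerivWithinAt (u i.castSucc) (u i.succ x) (Icc a b) x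
  last_eq : ∀ x ∈ Icc a b,
    u (Fin.last (n + 1)) x = u (Fin.last (n + 1)) a + ∫ t in a..x, q t * u 0 t

namespace IsODESolutionOn

variable {q : ℝ → ℝ} {a b : ℝ} {n : ℕ} {u : Fin (n + 2) → ℝ → ℝ}

lemma continuousOn_zero (h : IsODESolutionOn q a b u) : ContinuousOn (u 0) (Icc a b) :=
  fun x hx => (h.hasDerivWithinAt 0 x hx).continuousWithinAt

lemma integrableOn_mul (h : IsODESolutionOn q a b u) (hq : IntegrableOn q (Icc a b)) :
    IntegrableOn (fun t => q t * u 0 t) (Icc a b) :=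
  hq.mul_continuousOn h.continuousOn_zero isCompact_Icc

lemma continuousOn (h : IsODESolutionOn q a b u) (hq : IntegrableOn q (Icc a b))
    (i : Fin (n + 2)) : ContinuousOn (u i) (Icc a b) := by
  induction i using Fin.lastCases with
  | cast i => exact fun x hx => (h.hasDerivWithinAt i x hx).continuousWithinAt
  | last =>
    refine ContinuousOn.congr (continuousOn_const.add ?_) h.last_eq
    refine (intervalIntegral.continuousOn_primitive (h.integrableOn_mul hq)).congr fun x hx => ?_
    exact intervalIntegral.integral_of_le hx.1

lemma mono (h : IsODESolutionOn q a b u) (hq : IntegrableOn q (Icc a b)) {c d : ℝ}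
    (hcd : Icc c d ⊆ Icc a b) : IsODESolutionOn q c d u where
  hasDerivWithinAt i x hx := (h.hasDerivWithinAt i x (hcd hx)).mono hcd
  last_eq x hx := by
    have hc : c ∈ Icc a b := hcd (left_mem_Icc.2 (hx.1.trans hx.2))
    have hint : ∀ {r s : ℝ}, r ∈ Icc a b → s ∈ Icc a b →
        IntervalIntegrable (fun t => q t * u 0 t) volume r s := fun hr hs =>
      ((h.integrableOn_mul hq).mono_set (ordConnected_Icc.uIcc_subset hr hs)).intervalIntegrable
    have ha : a ∈ Icc a b := left_mem_Icc.2 (hc.1.trans hc.2)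
    rw [h.last_eq x (hcd hx), h.last_eq c hc, add_assoc,
      intervalIntegral.integral_add_adjacent_intervals (hint ha hc) (hint hc (hcd hx))]

lemma neg (h : IsODESolutionOn q a b u) : IsODESolutionOn q a b (-u) where
  hasDerivWithinAt i x hx := (h.hasDerivWithinAt i x hx).neg
  last_eq x hx := by
    simp only [Pi.neg_apply, mul_neg, intervalIntegral.integral_neg, h.last_eq x hx, neg_add]

lemma neg_mul_integral_le_last (h : IsODESolutionOn q a b u) (hq : IntegrableOn q (Icc a b))
    (hq0 : 0 ≤ᵐ[volume.restrict (Icc a b)] q) (ha : 0 ≤ u (Fin.last (n + 1)) a) {c : ℝ}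
    (hc : 0 ≤ c) (hu : ∀ x ∈ Icc a b, -c ≤ u 0 x) :
    ∀ x ∈ Icc a b, -(c * ∫ t in a..b, q t) ≤ u (Fin.last (n + 1)) x := by
  intro x hx
  have hsub : Icc a x ⊆ Icc a b := Icc_subset_Icc_right hx.2
  have hqab : IntervalIntegrable q volume a b :=
    (intervalIntegrable_iff_integrableOn_Icc_of_le (hx.1.trans hx.2)).2 hq
  have hqx : IntervalIntegrable q volume a x :=
    (intervalIntegrable_iff_integrableOn_Icc_of_le hx.1).2 (hq.mono_set hsub)
  have hqux : IntervalIntegrable (fun t => q t * u 0 t) volume a x :=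
    (intervalIntegrable_iff_integrableOn_Icc_of_le hx.1).2 ((h.integrableOn_mul hq).mono_set hsub)
  have hq_le : ∫ t in a..x, q t ≤ ∫ t in a..b, q t :=
    intervalIntegral.integral_mono_interval le_rfl hx.1 hx.2
      (ae_restrict_of_ae_restrict_of_subset Ioc_subset_Icc_self hq0) hqab
  have hqu_ge : ∫ t in a..x, q t * -c ≤ ∫ t in a..x, q t * u 0 t := by
    refine intervalIntegral.integral_mono_ae_restrict hx.1 (hqx.mul_const _) hqux ?_
    filter_upwards [ae_restrict_of_ae_restrict_of_subset hsub hq0,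
      ae_restrict_mem measurableSet_Icc] with t hqt ht
    exact mul_le_mul_of_nonneg_left (hu t (hsub ht)) hqt
  calc -(c * ∫ t in a..b, q t) ≤ -(c * ∫ t in a..x, q t) := by gcongr
    _ = ∫ t in a..x, q t * -c := by rw [intervalIntegral.integral_mul_const]; ring
    _ ≤ ∫ t in a..x, q t * u 0 t := hqu_ge
    _ ≤ u (Fin.last (n + 1)) x := by rw [h.last_eq x hx]; linarith

lemma neg_mul_integral_le (h : IsODESolutionOn q a b u) (hq : IntegrableOn q (Icc a b))
    (hq0 : 0 ≤ᵐ[volume.restrict (Icc a b)] q) (hab : b ≤ a + 1) (ha : ∀ i, 0 ≤ u i a) {c : ℝ}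
    (hc : 0 ≤ c) (hu : ∀ x ∈ Icc a b, -c ≤ u 0 x) (i : Fin (n + 2)) :
    ∀ x ∈ Icc a b, -(c * ∫ t in a..b, q t) ≤ u i x := by
  induction i using Fin.reverseInduction with
  | last => exact h.neg_mul_integral_le_last hq hq0 (ha _) hc hu
  | cast i ih =>
    intro x hx
    have hQ : 0 ≤ ∫ t in a..b, q t :=
      intervalIntegral.integral_nonneg_of_ae_restrict (hx.1.trans hx.2) hq0
    have hmvt := mul_sub_le_sub_of_le_hasDerivWithinAt (h.hasDerivWithinAt i) ih hx
    have hlen : c * (∫ t in a..b, q t) * (x - a) ≤ c * ∫ t in a..b, q t :=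
      mul_le_of_le_one_right (mul_nonneg hc hQ) (by linarith [hx.2])
    linarith [ha i.castSucc]

lemma nonneg_of_integral_lt_one (h : IsODESolutionOn q a b u) (hq : IntegrableOn q (Icc a b))
    (hq0 : 0 ≤ᵐ[volume.restrict (Icc a b)] q) (hab : b ≤ a + 1) (hq1 : ∫ t in a..b, q t < 1)
    (ha : ∀ i, 0 ≤ u i a) (i : Fin (n + 2)) : ∀ x ∈ Icc a b, 0 ≤ u i x := by
  have hu : ∀ x ∈ Icc a b, 0 ≤ u 0 x := by
    intro x hx
    obtain ⟨y, hy, hmin⟩ := isCompact_Icc.exists_isMinOn ⟨x, hx⟩ h.continuousOn_zero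
    refine le_trans ?_ (hmin hx)
    by_contra! hneg
    have hle : -(-u 0 y * ∫ t in a..b, q t) ≤ u 0 y :=
      h.neg_mul_integral_le hq hq0 hab ha (neg_nonneg.2 hneg.le)
        (fun z hz => (neg_neg (u 0 y)).trans_le (hmin hz)) 0 y hy
    have hlt : -u 0 y * ∫ t in a..b, q t < -u 0 y :=
      mul_lt_of_lt_one_right (neg_pos.2 hneg) hq1
    linarith
  simpa using h.neg_mul_integral_le hq hq0 hab ha le_rfl (by simpa using hu) i

theorem nonneg_of_nonneg_left (h : IsODESolutionOn q a b u) (hq : IntegrableOn q (Icc a b))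
    (hq0 : 0 ≤ᵐ[volume.restrict (Icc a b)] q) (ha : ∀ i, 0 ≤ u i a) :
    ∀ x ∈ Icc a b, ∀ i, 0 ≤ u i x := by
  have hclosed : IsClosed ({x | ∀ i, 0 ≤ u i x} ∩ Icc a b) := by
    have hcont : ContinuousOn (fun x i => u i x) (Icc a b) :=
      continuousOn_pi.2 (h.continuousOn hq)
    rw [inter_comm]
    exact hcont.preimage_isClosed_of_isClosed isClosed_Icc isClosed_Ici
  refine hclosed.Icc_subset_of_forall_mem_nhdsWithin ha fun x ⟨hux, hx⟩ => ?_
  obtain ⟨c, hqc, hxc, hc⟩ : ∃ c, ∫ t in x..c, q t < 1 ∧ c ∈ Ioc x (min b (x + 1)) :=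
    ((eventually_nhdsGT_integral_lt (hq.mono_set (Icc_subset_Icc_left hx.1)) hx.2 one_pos).and
      (Ioc_mem_nhdsGT (lt_min hx.2 (lt_add_one x)))).exists
  obtain ⟨hcb, hcx⟩ := le_min_iff.1 hc
  have hsub : Icc x c ⊆ Icc a b := Icc_subset_Icc hx.1 hcb
  have hshort : ∀ i, ∀ y ∈ Icc x c, 0 ≤ u i y :=
    (h.mono hq hsub).nonneg_of_integral_lt_one (hq.mono_set hsub)
      (ae_restrict_of_ae_restrict_of_subset hsub hq0) hcx hqc hux
  exact mem_of_superset (Icc_mem_nhdsGT hxc) fun y hy i => hshort i y hy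

theorem eq_zero_of_nonneg_left (h : IsODESolutionOn q a b u) (hq : IntegrableOn q (Icc a b))
    (hq0 : 0 ≤ᵐ[volume.restrict (Icc a b)] q) (ha : ∀ i, 0 ≤ u i a) (hb : u 0 b = 0) :
    ∀ x ∈ Icc a b, u 0 x = 0 := by
  have hnonneg := h.nonneg_of_nonneg_left hq hq0 ha
  have hmono : MonotoneOn (u 0) (Icc a b) :=
    monotoneOn_of_hasDerivWithinAt_nonneg (convex_Icc a b) h.continuousOn_zero
      (fun x hx => (h.hasDerivWithinAt 0 x (interior_subset hx)).mono interior_subset)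
      (fun x hx => hnonneg x (interior_subset hx) _)
  intro x hx
  have hle : u 0 x ≤ u 0 b := hmono hx (right_mem_Icc.2 (hx.1.trans hx.2)) hx.2
  exact le_antisymm (hle.trans_eq hb) (hnonneg x hx 0)

theorem eq_zero_of_nonpos_left (h : IsODESolutionOn q a b u) (hq : IntegrableOn q (Icc a b))
    (hq0 : 0 ≤ᵐ[volume.restrict (Icc a b)] q) (ha : ∀ i, u i a ≤ 0) (hb : u 0 b = 0) :
    ∀ x ∈ Icc a b, u 0 x = 0 := fun x hx =>
  neg_eq_zero.1 <| h.neg.eq_zero_of_nonneg_left hq hq0 (fun i => neg_nonneg.2 (ha i))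
    (neg_eq_zero.2 hb) x hx

end IsODESolutionOn

theorem stmt2_general {A L lam : ℝ} (hlam : 0 ≤ lam) {p : ℝ → ℝ}
    (hp : IntegrableOn p (Icc A L)) (hp0 : 0 ≤ᵐ[volume.restrict (Icc A L)] p)
    {e e' e'' e''' : ℝ → ℝ}
    (he : ∀ x ∈ Icc A L, HasDerivWithinAt e (e' x) (Icc A L) x)
    (he' : ∀ x ∈ Icc A L, HasDerivWithinAt e' (e'' x) (Icc A L) x)
    (he'' : ∀ x ∈ Icc A L, HasDerivWithinAt e'' (e''' x) (Icc A L) x)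
    (hVolterra : ∀ x ∈ Icc A L, e''' x = e''' A + lam * ∫ t in A..x, p t * e t)
    (hb0 : e A = 0) (hb2 : e'' A = 0) (hpier : e L = 0)
    (hnontriv : ¬ ∀ x ∈ Icc A L, e x = 0) :
    e' A * e''' A < 0 := by
  have hsol : IsODESolutionOn (fun t => lam * p t) A L ![e, e', e'', e'''] :=
    { hasDerivWithinAt := Fin.forall_fin_succ.2 ⟨he, Fin.forall_fin_two.2 ⟨he', he''⟩⟩
      last_eq := fun x hx => by
        simp only [mul_assoc, intervalIntegral.integral_const_mul]
        exact hVolterra x hx }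
  have hq : IntegrableOn (fun t => lam * p t) (Icc A L) := hp.const_mul lam
  have hq0 : 0 ≤ᵐ[volume.restrict (Icc A L)] fun t => lam * p t :=
    hp0.mono fun t ht => mul_nonneg hlam ht
  by_contra! hsign : 0 ≤ e' A * e''' A
  rcases mul_nonneg_iff.1 hsign with ⟨hslope, hshear⟩ | ⟨hslope, hshear⟩
  · exact hnontriv <| hsol.eq_zero_of_nonneg_left hq hq0
      (by simp [Fin.forall_fin_succ, hb0, hslope, hb2, hshear]) hpier
  · exact hnontriv <| hsol.eq_zero_of_nonpos_left hq hq0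
      (by simp [Fin.forall_fin_succ, hb0, hslope, hb2, hshear]) hpier

/-- A nontrivial eigenfunction of the multi-point beam problem on the left
span `[-π, -aπ]`, with hinged conditions `e(-π) = e''(-π) = 0` and pier
condition `e(-aπ) = 0`, has `e'(-π) ≠ 0` and `e'''(-π) ≠ 0`. -/
theorem stmt2 (a α β lam : ℝ) (ha0 : 0 < a) (ha1 : a < 1)
    (hα0 : 0 < α) (hα1 : α < 1) (hβ : 1 < β) (hlam : 0 < lam)
    (p : ℝ → ℝ) (hpmeas : Measurable p)
    (hpbd : ∀ᵐ x ∂(volume.restrict (Set.Icc (-π) (-(a * π)))), α ≤ p x ∧ p x ≤ β)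
    (e e' e'' e''' : ℝ → ℝ)
    (he : ∀ x ∈ Set.Icc (-π) (-(a * π)),
      HasDerivWithinAt e (e' x) (Set.Icc (-π) (-(a * π))) x)
    (he' : ∀ x ∈ Set.Icc (-π) (-(a * π)),
      HasDerivWithinAt e' (e'' x) (Set.Icc (-π) (-(a * π))) x)
    (he'' : ∀ x ∈ Set.Icc (-π) (-(a * π)),
      HasDerivWithinAt e'' (e''' x) (Set.Icc (-π) (-(a * π))) x)
    (he''' : ContinuousOn e''' (Set.Icc (-π) (-(a * π))))
    (hVolterra : ∀ x ∈ Set.Icc (-π) (-(a * π)),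
      e''' x = e''' (-π) + lam * ∫ t in (-π)..x, p t * e t)
    (hb0 : e (-π) = 0) (hb2 : e'' (-π) = 0) (hpier : e (-(a * π)) = 0)
    (hnontriv : ¬ ∀ x ∈ Set.Icc (-π) (-(a * π)), e x = 0) :
    e' (-π) ≠ 0 ∧ e''' (-π) ≠ 0 :=
  mul_ne_zero_iff.1 (stmt2_general hlam.le (.of_mem_Icc α β hpmeas.aemeasurable hpbd)
    (hpbd.mono fun _ hx => hα0.le.trans hx.1) he he' he'' hVolterra hb0 hb2 hpier hnontriv).ne
end

section
/- Let 0 < a < 1, let 0 < α < 1 < β, let λ > 0, and let p : ℝ → ℝ be measurable with α ≤ p(x) ≤ β for a.e. x ∈ [−π, −aπ]. Suppose e₁, e₂ : ℝ → ℝ are each three times continuously differentiable on [−π, −aπ], each satisfies the Volterra identity eᵢ'''(x) = eᵢ'''(−π) + λ ∫_{−π}^{x} p(t) eᵢ(t) dt for all x ∈ [−π, −aπ], and each satisfies eᵢ(−π) = 0, eᵢ''(−π) = 0 and eᵢ(−aπ) = 0. Then e₁ and e₂ are linearly dependent on [−π, −aπ]: there exist constants (c₁, c₂) ≠ (0, 0)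 such that c₁ e₁(x) + c₂ e₂(x) = 0 for all x ∈ [−π, −aπ]. (In particular, every eigenvalue of the multi-point beam eigenvalue problem is simple.) -/
open Real MeasureTheory Set Filter

/-!
Some nontrivial combination `e` of the two solutions also has slope `0` at the left end `l`, so that
`e`, `e'` and `e''` all vanish there. If `e''' l > 0`, then nothing can bring `e'''` back to zero:
as long as `e'''` is positive so is `e`, and then `e''''` is nonnegative. Hence `e > 0` on the whole
span, which contradicts `e = 0` at the pier. By symmetry `e''' l = 0`, and uniqueness for the
initial value problem gives `e = 0`.
-/

theorem forall_mem_Icc_pos_of_forall_lt_pos {α β : Type*} [LinearOrder α] [TopologicalSpace α]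
    [OrderClosedTopology α] [CompactIccSpace α] [LinearOrder β] [Zero β] [TopologicalSpace β]
    [ClosedIicTopology β] {f : α → β} {l b : α} (hf : ContinuousOn f (Icc l b))
    (step : ∀ x ∈ Icc l b, (∀ y ∈ Ico l x, 0 < f y) → 0 < f x) : ∀ x ∈ Icc l b, 0 < f x := by
  by_contra! ⟨x, hx, hfx⟩
  have hcompact : IsCompact (Icc l b ∩ f ⁻¹' Iic 0) :=
    isCompact_Icc.of_isClosed_subset
      (hf.preimage_isClosed_of_isClosed isClosed_Icc isClosed_Iic) inter_subset_left
  obtain ⟨z, ⟨hz, hfz⟩, hleast⟩ := hcompact.exists_isLeast ⟨x, hx, hfx⟩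
  refine (step z hz fun y hy => ?_).not_ge hfz
  by_contra! hfy
  exact (hleast ⟨⟨hy.1, hy.2.le.trans hz.2⟩, hfy⟩).not_gt hy.2

theorem pos_of_hasDerivWithinAt_pos {f f' : ℝ → ℝ} {l b : ℝ}
    (hf : ∀ x ∈ Icc l b, HasDerivWithinAt f (f' x) (Icc l b) x) (hl : 0 ≤ f l)
    (hf' : ∀ x ∈ Ioo l b, 0 < f' x) : ∀ x ∈ Ioc l b, 0 < f x := by
  have hmono : StrictMonoOn f (Icc l b) := by
    refine strictMonoOn_of_hasDerivWithinAt_pos (f' := f') (convex_Icc l b)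
      (fun x hx => (hf x hx).continuousWithinAt) (fun x hx => ?_) fun x hx => ?_
    · exact (hf x (interior_subset hx)).mono interior_subset
    · exact hf' x (interior_Icc (α := ℝ) ▸ hx)
  exact fun x hx => hl.trans_lt (hmono ⟨le_rfl, hx.1.le.trans hx.2⟩ (Ioc_subset_Icc_self hx) hx.1)

theorem hasDerivWithinAt_integral_of_continuousOn {E : Type*} [NormedAddCommGroup E]
    [NormedSpace ℝ E] [CompleteSpace E] {f : ℝ → E} {l b x : ℝ} (hf : ContinuousOn f (Icc l b))
    (hx : x ∈ Icc l b) : HasDerivWithinAt (fun y => ∫ t in l..y, f t) (f x) (Icc l b) x := by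
  have : Fact (x ∈ Icc l b) := ⟨hx⟩
  exact intervalIntegral.integral_hasDerivWithinAt_right
    ((hf.mono (Icc_subset_Icc_right hx.2)).intervalIntegrable_of_Icc hx.1)
    (hf.stronglyMeasurableAtFilter_nhdsWithin measurableSet_Icc x) (hf x hx)

theorem norm_integral_mul_le_of_norm_le {p f : ℝ → ℝ} {l b C : ℝ} (hlb : l ≤ b)
    (hp : IntegrableOn p (Icc l b)) (hf : ∀ t ∈ Icc l b, ‖f t‖ ≤ C) :
    ‖∫ t in l..b, p t * f t‖ ≤ (∫ t in l..b, ‖p t‖) * C := by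
  rw [← intervalIntegral.integral_mul_const]
  refine intervalIntegral.norm_integral_le_of_norm_le hlb (ae_of_all _ fun t ht => ?_)
    (((intervalIntegrable_iff_integrableOn_Icc_of_le hlb).2 hp).norm.mul_const C)
  rw [norm_mul]
  exact mul_le_mul_of_nonneg_left (hf t (Ioc_subset_Icc_self ht)) (norm_nonneg _)

/-- `e` solves the beam equation `e'''' = lam * p * e` almost everywhere on `[l, b]`, with `e'''`
absolutely continuous; `e'`, `e''`, `e'''` are its derivatives, one-sided at the end points. The
equation is encoded by its integrated (Volterra) form, which is meaningful when `p` is integrable on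
`[l, b]`; no fourth derivative appears. -/
structure IsBeamSolution (p : ℝ → ℝ) (lam l b : ℝ) (e e' e'' e''' : ℝ → ℝ) : Prop where
  hasDeriv_zero : ∀ x ∈ Icc l b, HasDerivWithinAt e (e' x) (Icc l b) x
  hasDeriv_one : ∀ x ∈ Icc l b, HasDerivWithinAt e' (e'' x) (Icc l b) x
  hasDeriv_two : ∀ x ∈ Icc l b, HasDerivWithinAt e'' (e''' x) (Icc l b) x
  continuousOn_three : ContinuousOn e''' (Icc l b)
  volterra : ∀ x ∈ Icc l b, e''' x = e''' l + lam * ∫ t in l..x, p t * e t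

namespace IsBeamSolution

variable {p : ℝ → ℝ} {lam l b : ℝ} {e e' e'' e''' f f' f'' f''' : ℝ → ℝ}

theorem mono_right (h : IsBeamSolution p lam l b e e' e'' e''') {c : ℝ} (hcb : c ≤ b) :
    IsBeamSolution p lam l c e e' e'' e''' where
  hasDeriv_zero x hx :=
    (h.hasDeriv_zero x (Icc_subset_Icc_right hcb hx)).mono (Icc_subset_Icc_right hcb)
  hasDeriv_one x hx :=
    (h.hasDeriv_one x (Icc_subset_Icc_right hcb hx)).mono (Icc_subset_Icc_right hcb)
  hasDeriv_two x hx :=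
    (h.hasDeriv_two x (Icc_subset_Icc_right hcb hx)).mono (Icc_subset_Icc_right hcb)
  continuousOn_three := h.continuousOn_three.mono (Icc_subset_Icc_right hcb)
  volterra x hx := h.volterra x (Icc_subset_Icc_right hcb hx)

theorem continuousOn (h : IsBeamSolution p lam l b e e' e'' e''') : ContinuousOn e (Icc l b) :=
  fun x hx => (h.hasDeriv_zero x hx).continuousWithinAt

theorem continuousOn_one (h : IsBeamSolution p lam l b e e' e'' e''') :
    ContinuousOn e' (Icc l b) :=
  fun x hx => (h.hasDeriv_one x hx).continuousWithinAt

theorem intervalIntegrable_mul (h : IsBeamSolution p lam l b e e' e'' e''')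
    (hp : IntegrableOn p (Icc l b)) {x : ℝ} (hx : x ∈ Icc l b) :
    IntervalIntegrable (fun t => p t * e t) volume l x := by
  rw [intervalIntegrable_iff_integrableOn_Icc_of_le hx.1]
  exact (hp.mul_continuousOn h.continuousOn isCompact_Icc).mono_set (Icc_subset_Icc_right hx.2)

theorem const_mul (c : ℝ) (h : IsBeamSolution p lam l b e e' e'' e''') :
    IsBeamSolution p lam l b (fun x => c * e x) (fun x => c * e' x) (fun x => c * e'' x)
      (fun x => c * e''' x) where
  hasDeriv_zero x hx := (h.hasDeriv_zero x hx).const_mul c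
  hasDeriv_one x hx := (h.hasDeriv_one x hx).const_mul c
  hasDeriv_two x hx := (h.hasDeriv_two x hx).const_mul c
  continuousOn_three := h.continuousOn_three.const_mul c
  volterra x hx := by
    simp only [mul_left_comm _ c, intervalIntegral.integral_const_mul, h.volterra x hx, mul_add]

theorem add (hp : IntegrableOn p (Icc l b)) (he : IsBeamSolution p lam l b e e' e'' e''')
    (hf : IsBeamSolution p lam l b f f' f'' f''') :
    IsBeamSolution p lam l b (fun x => e x + f x) (fun x => e' x + f' x) (fun x => e'' x + f'' x)
      (fun x => e''' x + f''' x) where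
  hasDeriv_zero x hx := (he.hasDeriv_zero x hx).add (hf.hasDeriv_zero x hx)
  hasDeriv_one x hx := (he.hasDeriv_one x hx).add (hf.hasDeriv_one x hx)
  hasDeriv_two x hx := (he.hasDeriv_two x hx).add (hf.hasDeriv_two x hx)
  continuousOn_three := he.continuousOn_three.add hf.continuousOn_three
  volterra x hx := by
    simp only [mul_add, intervalIntegral.integral_add (he.intervalIntegrable_mul hp hx)
      (hf.intervalIntegrable_mul hp hx), he.volterra x hx, hf.volterra x hx]
    ring

theorem pos_of_third_pos (h : IsBeamSolution p lam l b e e' e'' e''') (h0 : 0 ≤ e l)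
    (h1 : 0 ≤ e' l) (h2 : 0 ≤ e'' l) (h3 : ∀ x ∈ Ioo l b, 0 < e''' x) : ∀ x ∈ Ioc l b, 0 < e x := by
  have second_pos := pos_of_hasDerivWithinAt_pos h.hasDeriv_two h2 h3
  have first_pos := pos_of_hasDerivWithinAt_pos h.hasDeriv_one h1
    fun x hx => second_pos x (Ioo_subset_Ioc_self hx)
  exact pos_of_hasDerivWithinAt_pos h.hasDeriv_zero h0
    fun x hx => first_pos x (Ioo_subset_Ioc_self hx)

theorem pos_of_initial_third_pos (h : IsBeamSolution p lam l b e e' e'' e''') (hlam : 0 ≤ lam)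
    (hp : ∀ᵐ x ∂(volume.restrict (Icc l b)), 0 ≤ p x) (h0 : 0 ≤ e l) (h1 : 0 ≤ e' l)
    (h2 : 0 ≤ e'' l) (h3 : 0 < e''' l) : ∀ x ∈ Ioc l b, 0 < e x := by
  have third_pos : ∀ x ∈ Icc l b, 0 < e''' x := by
    refine forall_mem_Icc_pos_of_forall_lt_pos h.continuousOn_three fun x hx hlt => ?_
    have hpos : ∀ t ∈ Ioc l x, 0 < e t :=
      (h.mono_right hx.2).pos_of_third_pos h0 h1 h2 fun y hy => hlt y (Ioo_subset_Ico_self hy)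
    have hnonneg : ∀ t ∈ Icc l x, 0 ≤ e t := fun t ht =>
      ht.1.eq_or_lt.elim (fun hlt => hlt ▸ h0) fun hlt => (hpos t ⟨hlt, ht.2⟩).le
    have hint : 0 ≤ ∫ t in l..x, p t * e t := by
      refine intervalIntegral.integral_nonneg_of_ae_restrict hx.1 ?_
      filter_upwards [ae_restrict_of_ae_restrict_of_subset (Icc_subset_Icc_right hx.2) hp,
        ae_restrict_mem measurableSet_Icc] with t hpt ht
      exact mul_nonneg hpt (hnonneg t ht)
    rw [h.volterra x hx]
    exact add_pos_of_pos_of_nonneg h3 (mul_nonneg hlam hint)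
  exact h.pos_of_third_pos h0 h1 h2 fun x hx => third_pos x (Ioo_subset_Icc_self hx)

theorem norm_le_integral_norm_deriv (h : IsBeamSolution p lam l b e e' e'' e''') (h0 : e l = 0)
    (hlb : l ≤ b) : ‖e b‖ ≤ ∫ t in l..b, ‖e' t‖ := by
  have hderiv : ∀ x ∈ Ioo l b, HasDerivAt e (e' x) x := fun x hx =>
    (h.hasDeriv_zero x (Ioo_subset_Icc_self hx)).hasDerivAt (Icc_mem_nhds hx.1 hx.2)
  simpa only [h0, sub_zero] using norm_sub_le_integral_of_norm_deriv_le_of_le hlb h.continuousOn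
    (fun x hx => (hderiv x hx).differentiableAt.differentiableWithinAt)
    (ae_of_all _ fun x hx => (congrArg norm (hderiv x hx).deriv).le)
    (h.continuousOn_one.intervalIntegrable_of_Icc hlb).norm

theorem norm_third_le (h : IsBeamSolution p lam l b e e' e'' e''')
    (hp : IntegrableOn p (Icc l b)) (h0 : e l = 0) (h3 : e''' l = 0) {x : ℝ} (hx : x ∈ Icc l b) :
    ‖e''' x‖ ≤ |lam| * (∫ t in l..b, ‖p t‖) * ∫ t in l..x, ‖e' t‖ := by
  have hnonneg {c d : ℝ} {g : ℝ → ℝ} : 0 ≤ᵐ[volume.restrict (Ioc c d)] fun t => ‖g t‖ :=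
    ae_of_all _ fun t => norm_nonneg _
  have hbound : ∀ t ∈ Icc l x, ‖e t‖ ≤ ∫ s in l..x, ‖e' s‖ := fun t ht =>
    ((h.mono_right (ht.2.trans hx.2)).norm_le_integral_norm_deriv h0 ht.1).trans <|
      intervalIntegral.integral_mono_interval le_rfl ht.1 ht.2 hnonneg
        ((h.mono_right hx.2).continuousOn_one.intervalIntegrable_of_Icc hx.1).norm
  have hpint : ∫ t in l..x, ‖p t‖ ≤ ∫ t in l..b, ‖p t‖ :=
    intervalIntegral.integral_mono_interval le_rfl hx.1 hx.2 hnonneg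
      ((intervalIntegrable_iff_integrableOn_Icc_of_le (hx.1.trans hx.2)).2 hp).norm
  calc ‖e''' x‖ = |lam| * ‖∫ t in l..x, p t * e t‖ := by
        rw [h.volterra x hx, h3, zero_add, norm_mul, norm_eq_abs lam]
    _ ≤ |lam| * ((∫ t in l..x, ‖p t‖) * ∫ t in l..x, ‖e' t‖) := by
        gcongr
        exact norm_integral_mul_le_of_norm_le hx.1 (hp.mono_set (Icc_subset_Icc_right hx.2)) hbound
    _ ≤ |lam| * ((∫ t in l..b, ‖p t‖) * ∫ t in l..x, ‖e' t‖) := by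
        gcongr
        exact intervalIntegral.integral_nonneg hx.1 fun t _ => norm_nonneg _
    _ = |lam| * (∫ t in l..b, ‖p t‖) * ∫ t in l..x, ‖e' t‖ := (mul_assoc ..).symm

theorem eq_zero_of_initial_eq_zero (h : IsBeamSolution p lam l b e e' e'' e''')
    (hp : IntegrableOn p (Icc l b)) (h0 : e l = 0) (h1 : e' l = 0) (h2 : e'' l = 0)
    (h3 : e''' l = 0) : ∀ x ∈ Icc l b, e x = 0 := by
  -- The Volterra equation bounds `e'''` only through the past of `e`. Carrying `∫ ‖e'‖`, which
  -- dominates that past, as a third component turns it into a pointwise differential inequality.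
  let v : ℝ → ℝ × ℝ × ℝ := fun x => (e' x, e'' x, ∫ t in l..x, ‖e' t‖)
  let v' : ℝ → ℝ × ℝ × ℝ := fun x => (e'' x, e''' x, ‖e' x‖)
  let K := max 1 (|lam| * ∫ t in l..b, ‖p t‖)
  have hK : 1 ≤ K := le_max_left _ _
  have hv : ∀ x ∈ Icc l b, HasDerivWithinAt v (v' x) (Icc l b) x := fun x hx =>
    (h.hasDeriv_one x hx).prodMk <| (h.hasDeriv_two x hx).prodMk <|
      hasDerivWithinAt_integral_of_continuousOn h.continuousOn_one.norm hx
  have hbound : ∀ x ∈ Icc l b, ‖v' x‖ ≤ K * ‖v x‖ := fun x hx => by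
    have hself : ‖v x‖ ≤ K * ‖v x‖ := le_mul_of_one_le_left (norm_nonneg _) hK
    have hv1 : ‖e' x‖ ≤ ‖v x‖ := norm_fst_le (v x)
    have hv2 : ‖e'' x‖ ≤ ‖v x‖ := (norm_fst_le (v x).2).trans (norm_snd_le (v x))
    have hv3 : ∫ t in l..x, ‖e' t‖ ≤ ‖v x‖ :=
      (le_norm_self _).trans ((norm_snd_le (v x).2).trans (norm_snd_le (v x)))
    have hthird : ‖e''' x‖ ≤ K * ‖v x‖ :=
      (h.norm_third_le hp h0 h3 hx).trans <| mul_le_mul (le_max_right _ _) hv3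
        (intervalIntegral.integral_nonneg hx.1 fun t _ => norm_nonneg _) (zero_le_one.trans hK)
    exact norm_prod_le_iff.2 ⟨hv2.trans hself, norm_prod_le_iff.2
      ⟨hthird, (norm_norm (e' x)).trans_le (hv1.trans hself)⟩⟩
  have hzero : ∀ x ∈ Icc l b, v x = 0 :=
    eq_zero_of_abs_deriv_le_mul_abs_self_of_eq_zero_right
      (fun x hx => (hv x hx).continuousWithinAt)
      (fun x hx => (hv x (Ico_subset_Icc_self hx)).mono_of_mem_nhdsWithin
        (Icc_mem_nhdsGE_of_mem hx))
      (by simp [v, h1, h2]) fun x hx => hbound x (Ico_subset_Icc_self hx)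
  intro x hx
  have hpast : ∫ t in l..x, ‖e' t‖ = 0 := congrArg (fun w => w.2.2) (hzero x hx)
  exact norm_le_zero_iff.1 <|
    ((h.mono_right hx.2).norm_le_integral_norm_deriv h0 hx.1).trans_eq hpast

theorem eq_zero_of_right_eq_zero (h : IsBeamSolution p lam l b e e' e'' e''') (hlam : 0 ≤ lam)
    (hp : IntegrableOn p (Icc l b)) (hp0 : ∀ᵐ x ∂(volume.restrict (Icc l b)), 0 ≤ p x)
    (h0 : e l = 0) (h1 : e' l = 0) (h2 : e'' l = 0) (hb : e b = 0) : ∀ x ∈ Icc l b, e x = 0 := by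
  intro x hx
  rcases (hx.1.trans hx.2).eq_or_lt with rfl | hlb
  · exact le_antisymm hx.2 hx.1 ▸ h0
  rcases lt_trichotomy (e''' l) 0 with h3 | h3 | h3
  · have hneg := (h.const_mul (-1)).pos_of_initial_third_pos hlam hp0 (by simp [h0]) (by simp [h1])
      (by simp [h2]) (by simpa using h3) b (right_mem_Ioc.2 hlb)
    simp [hb] at hneg
  · exact h.eq_zero_of_initial_eq_zero hp h0 h1 h2 h3 x hx
  · have hpos := h.pos_of_initial_third_pos hlam hp0 h0.ge h1.ge h2.ge h3 b (right_mem_Ioc.2 hlb)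
    exact absurd hb hpos.ne'

end IsBeamSolution

theorem stmt3_general {p : ℝ → ℝ} {lam l b : ℝ} (hlam : 0 ≤ lam) (hp : IntegrableOn p (Icc l b))
    (hp0 : ∀ᵐ x ∂(volume.restrict (Icc l b)), 0 ≤ p x)
    {e₁ e₁' e₁'' e₁''' e₂ e₂' e₂'' e₂''' : ℝ → ℝ}
    (h₁ : IsBeamSolution p lam l b e₁ e₁' e₁'' e₁''')
    (h₁0 : e₁ l = 0) (h₁2 : e₁'' l = 0) (h₁b : e₁ b = 0)
    (h₂ : IsBeamSolution p lam l b e₂ e₂' e₂'' e₂''')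
    (h₂0 : e₂ l = 0) (h₂2 : e₂'' l = 0) (h₂b : e₂ b = 0) :
    ∃ c₁ c₂ : ℝ, ¬ (c₁ = 0 ∧ c₂ = 0) ∧ ∀ x ∈ Icc l b, c₁ * e₁ x + c₂ * e₂ x = 0 := by
  obtain ⟨c₁, c₂, hc, hslope⟩ :
      ∃ c₁ c₂ : ℝ, ¬ (c₁ = 0 ∧ c₂ = 0) ∧ c₁ * e₁' l + c₂ * e₂' l = 0 := by
    by_cases hz : e₁' l = 0
    · exact ⟨1, 0, by simp, by simp [hz]⟩
    · exact ⟨e₂' l, -e₁' l, by simp [hz], by ring⟩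
  exact ⟨c₁, c₂, hc, ((h₁.const_mul c₁).add hp (h₂.const_mul c₂)).eq_zero_of_right_eq_zero hlam hp
    hp0 (by simp [h₁0, h₂0]) hslope (by simp [h₁2, h₂2]) (by simp [h₁b, h₂b])⟩

/-- Simplicity of the eigenvalues of the multi-point beam problem: two
solutions of `e'''' = λ p e` (in Volterra form) on the left span
`[-π, -aπ]` satisfying the hinged conditions `e(-π) = e''(-π) = 0` and the
pier condition `e(-aπ) = 0` are linearly dependent there. -/
theorem stmt3 (a α β lam : ℝ) (ha0 : 0 < a) (ha1 : a < 1)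
    (hα0 : 0 < α) (hα1 : α < 1) (hβ : 1 < β) (hlam : 0 < lam)
    (p : ℝ → ℝ) (hpmeas : Measurable p)
    (hpbd : ∀ᵐ x ∂(volume.restrict (Set.Icc (-π) (-(a * π)))), α ≤ p x ∧ p x ≤ β)
    (e₁ e₁' e₁'' e₁''' e₂ e₂' e₂'' e₂''' : ℝ → ℝ)
    (he₁ : ∀ x ∈ Set.Icc (-π) (-(a * π)),
      HasDerivWithinAt e₁ (e₁' x) (Set.Icc (-π) (-(a * π))) x)
    (he₁' : ∀ x ∈ Set.Icc (-π) (-(a * π)),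
      HasDerivWithinAt e₁' (e₁'' x) (Set.Icc (-π) (-(a * π))) x)
    (he₁'' : ∀ x ∈ Set.Icc (-π) (-(a * π)),
      HasDerivWithinAt e₁'' (e₁''' x) (Set.Icc (-π) (-(a * π))) x)
    (he₁''' : ContinuousOn e₁''' (Set.Icc (-π) (-(a * π))))
    (hVolterra₁ : ∀ x ∈ Set.Icc (-π) (-(a * π)),
      e₁''' x = e₁''' (-π) + lam * ∫ t in (-π)..x, p t * e₁ t)
    (hb₁0 : e₁ (-π) = 0) (hb₁2 : e₁'' (-π) = 0) (hpier₁ : e₁ (-(a * π)) = 0)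
    (he₂ : ∀ x ∈ Set.Icc (-π) (-(a * π)),
      HasDerivWithinAt e₂ (e₂' x) (Set.Icc (-π) (-(a * π))) x)
    (he₂' : ∀ x ∈ Set.Icc (-π) (-(a * π)),
      HasDerivWithinAt e₂' (e₂'' x) (Set.Icc (-π) (-(a * π))) x)
    (he₂'' : ∀ x ∈ Set.Icc (-π) (-(a * π)),
      HasDerivWithinAt e₂'' (e₂''' x) (Set.Icc (-π) (-(a * π))) x)
    (he₂''' : ContinuousOn e₂''' (Set.Icc (-π) (-(a * π))))
    (hVolterra₂ : ∀ x ∈ Set.Icc (-π) (-(a * π)),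
      e₂''' x = e₂''' (-π) + lam * ∫ t in (-π)..x, p t * e₂ t)
    (hb₂0 : e₂ (-π) = 0) (hb₂2 : e₂'' (-π) = 0) (hpier₂ : e₂ (-(a * π)) = 0) :
    ∃ c₁ c₂ : ℝ, ¬ (c₁ = 0 ∧ c₂ = 0) ∧
      ∀ x ∈ Set.Icc (-π) (-(a * π)), c₁ * e₁ x + c₂ * e₂ x = 0 := by
  have hpint : IntegrableOn p (Icc (-π) (-(a * π))) :=
    Measure.integrableOn_of_bounded (M := β) measure_Icc_lt_top.ne hpmeas.aestronglyMeasurable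
      (hpbd.mono fun _ hx => (abs_of_nonneg (hα0.le.trans hx.1)).trans_le hx.2)
  exact stmt3_general hlam.le hpint (hpbd.mono fun _ hx => hα0.le.trans hx.1)
    ⟨he₁, he₁', he₁'', he₁''', hVolterra₁⟩ hb₁0 hb₁2 hpier₁
    ⟨he₂, he₂', he₂'', he₂''', hVolterra₂⟩ hb₂0 hb₂2 hpier₂
end

section
/- Let 0 < a < 1, let 0 < α < 1 < β, let λ > 0, and let p : ℝ → ℝ be measurable with α ≤ p(x) ≤ β for a.e. x ∈ [0, aπ]. Suppose e : ℝ → ℝ is three times continuously differentiable on [0, aπ] and satisfies e'''(x) = λ ∫_{0}^{x} p(t) e(t) dt for all x ∈ [0, aπ] (so in particular e'''(0) = 0), together with e'(0) = 0 and e(aπ) = 0. If e is not identically zero on [0, aπ], then e(0) ≠ 0 and e(0)·e''(0) < 0. -/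
open Real MeasureTheory Set Filter

/-!
Suppose `e(0) e''(0) ≥ 0`. Up to sign, `e(0)`, `e'(0)`, `e''(0)` are all nonnegative, and then
`e ≥ 0`: otherwise let `c` be the infimum of the points where `e < 0`, let `d` be such a point close
to `c`, and let `m < 0` be the minimum of `e` on `[0, d]`. Only `[c, d]` contributes negatively to
`e''' = ∫ q e`, where `q = λ p`, so `e''' ≥ m ∫_c^d q` on `[0, d]`, and three integrations give
`m ≥ m (d³ / 6) ∫_c^d q`, which is false once `d` is close enough to `c`. From `e ≥ 0` it follows
that `e'''`, `e''` and `e'` are nonnegative, so `e` is nonnegative and increasing, and `e(aπ) = 0`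
forces `e = 0`.
-/

section Interval

variable {a b c m : ℝ} {f f' q : ℝ → ℝ}

lemma mul_pow_div_factorial_le_of_le_deriv {n : ℕ}
    (hf : ∀ x ∈ Icc a b, HasDerivWithinAt f (f' x) (Icc a b) x) (ha : 0 ≤ f a)
    (hf' : ∀ x ∈ Icc a b, m * ((x - a) ^ n / n.factorial) ≤ f' x) :
    ∀ x ∈ Icc a b, m * ((x - a) ^ (n + 1) / (n + 1).factorial) ≤ f x := by
  have hpow (x : ℝ) : HasDerivAt (fun y ↦ m * ((y - a) ^ (n + 1) / (n + 1).factorial))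
      (m * ((x - a) ^ n / n.factorial)) x := by
    refine (((((hasDerivAt_id' x).sub_const a).pow (n + 1)).div_const _).const_mul m).congr_deriv ?_
    rw [Nat.factorial_succ, Nat.add_sub_cancel, mul_one]
    push_cast
    field_simp
  exact image_le_of_deriv_right_le_deriv_boundary
    (fun x _ ↦ (hpow x).continuousAt.continuousWithinAt)
    (fun x _ ↦ (hpow x).hasDerivWithinAt) (by simpa using ha)
    (fun x hx ↦ (hf x hx).continuousWithinAt)
    (fun x hx ↦ (hf x (Ico_subset_Icc_self hx)).mono_of_mem_nhdsWithin
      (Icc_mem_nhdsGE_of_mem hx))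
    (fun x hx ↦ hf' x (Ico_subset_Icc_self hx))

lemma mul_integral_le_integral_mul (hab : a ≤ b) (hq : IntegrableOn q (Icc a b))
    (hq0 : ∀ᵐ x ∂volume.restrict (Icc a b), 0 ≤ q x) (hf : ContinuousOn f (Icc a b))
    (hm : ∀ x ∈ Ioo a b, m ≤ f x) :
    m * ∫ t in a..b, q t ≤ ∫ t in a..b, q t * f t := by
  have hqf : IntegrableOn (fun t ↦ q t * f t) (Icc a b) :=
    hq.mul_continuousOn hf isCompact_Icc
  rw [← intervalIntegral.integral_const_mul]
  simp only [intervalIntegral.integral_of_le hab, integral_Ioc_eq_integral_Ioo]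
  refine integral_mono_ae ((hq.mono_set Ioo_subset_Icc_self).const_mul m)
    (hqf.mono_set Ioo_subset_Icc_self) ?_
  filter_upwards [ae_restrict_of_ae_restrict_of_subset Ioo_subset_Icc_self hq0,
    ae_restrict_mem measurableSet_Ioo] with t hqt ht
  rw [mul_comm m]
  exact mul_le_mul_of_nonneg_left (hm t ht) hqt

lemma mul_integral_le_integral_mul_of_nonneg_left (hc : c ∈ Icc a b)
    (hq : IntegrableOn q (Icc a b)) (hq0 : ∀ᵐ x ∂volume.restrict (Icc a b), 0 ≤ q x)
    (hf : ContinuousOn f (Icc a b)) (hpos : ∀ x ∈ Ioo a c, 0 ≤ f x)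
    (hm : ∀ x ∈ Ioo c b, m ≤ f x) :
    m * ∫ t in c..b, q t ≤ ∫ t in a..b, q t * f t := by
  have hleft : Icc a c ⊆ Icc a b := Icc_subset_Icc_right hc.2
  have hright : Icc c b ⊆ Icc a b := Icc_subset_Icc_left hc.1
  have hqf : IntegrableOn (fun t ↦ q t * f t) (Icc a b) :=
    hq.mul_continuousOn hf isCompact_Icc
  have hac : 0 ≤ ∫ t in a..c, q t * f t := by
    simpa only [zero_mul] using mul_integral_le_integral_mul hc.1 (hq.mono_set hleft)
      (ae_restrict_of_ae_restrict_of_subset hleft hq0) (hf.mono hleft) hpos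
  have hcb : m * ∫ t in c..b, q t ≤ ∫ t in c..b, q t * f t :=
    mul_integral_le_integral_mul hc.2 (hq.mono_set hright)
      (ae_restrict_of_ae_restrict_of_subset hright hq0) (hf.mono hright) hm
  rw [← intervalIntegral.integral_add_adjacent_intervals
    ((intervalIntegrable_iff_integrableOn_Icc_of_le hc.1).2 (hqf.mono_set hleft))
    ((intervalIntegrable_iff_integrableOn_Icc_of_le hc.2).2 (hqf.mono_set hright))]
  exact hcb.trans (le_add_of_nonneg_left hac)

lemma mul_integral_le_primitive_mul_of_nonneg_left (hc : c ∈ Icc a b)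
    (hq : IntegrableOn q (Icc a b)) (hq0 : ∀ᵐ x ∂volume.restrict (Icc a b), 0 ≤ q x)
    (hf : ContinuousOn f (Icc a b)) (hpos : ∀ x ∈ Ioo a c, 0 ≤ f x)
    (hm0 : m ≤ 0) (hm : ∀ x ∈ Ioo c b, m ≤ f x) {x : ℝ} (hx : x ∈ Icc a b) :
    m * ∫ t in c..b, q t ≤ ∫ t in a..x, q t * f t := by
  have hsub : Icc a x ⊆ Icc a b := Icc_subset_Icc_right hx.2
  have hright : Icc c b ⊆ Icc a b := Icc_subset_Icc_left hc.1
  have hq0' := ae_restrict_of_ae_restrict_of_subset hsub hq0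
  have hq0c := ae_restrict_of_ae_restrict_of_subset hright hq0
  rcases le_total x c with hxc | hcx
  · calc m * ∫ t in c..b, q t
        ≤ 0 := mul_nonpos_of_nonpos_of_nonneg hm0
          (intervalIntegral.integral_nonneg_of_ae_restrict hc.2 hq0c)
      _ ≤ ∫ t in a..x, q t * f t := by
          simpa only [zero_mul] using mul_integral_le_integral_mul hx.1 (hq.mono_set hsub) hq0'
            (hf.mono hsub) fun t ht ↦ hpos t ⟨ht.1, ht.2.trans_le hxc⟩
  · calc m * ∫ t in c..b, q t
        ≤ m * ∫ t in c..x, q t := by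
          refine mul_le_mul_of_nonpos_left ?_ hm0
          exact intervalIntegral.integral_mono_interval le_rfl hcx hx.2
            (ae_restrict_of_ae_restrict_of_subset Ioc_subset_Icc_self hq0c)
            ((intervalIntegrable_iff_integrableOn_Icc_of_le hc.2).2 (hq.mono_set hright))
      _ ≤ ∫ t in a..x, q t * f t :=
          mul_integral_le_integral_mul_of_nonneg_left ⟨hc.1, hcx⟩ (hq.mono_set hsub) hq0'
            (hf.mono hsub) hpos fun t ht ↦ hm t ⟨ht.1, ht.2.trans_le hx.2⟩

lemma exists_mem_mul_integral_sInf_lt_one (hq : IntegrableOn q (Icc a b)) {s : Set ℝ}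
    (hs : s.Nonempty) (hsub : s ⊆ Icc a b) (K : ℝ) :
    ∃ d ∈ s, K * ∫ t in sInf s..d, q t < 1 := by
  have hbdd : BddBelow s := bddBelow_Icc.mono hsub
  have hac : a ≤ sInf s := le_csInf hs fun x hx ↦ (hsub hx).1
  have hsub' : s ⊆ Icc (sInf s) b := fun x hx ↦ ⟨csInf_le hbdd hx, (hsub hx).2⟩
  have hcb : sInf s ≤ b := hs.elim fun y hy ↦ (hsub' hy).1.trans (hsub' hy).2
  have hcont : ContinuousWithinAt (fun x ↦ K * ∫ t in sInf s..x, q t) s (sInf s) := by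
    have hprim : ContinuousOn (fun x ↦ ∫ t in sInf s..x, q t) (Icc (sInf s) b) := by
      rw [← uIcc_of_le hcb]
      refine intervalIntegral.continuousOn_primitive_interval ?_
      rw [uIcc_of_le hcb]
      exact hq.mono_set (Icc_subset_Icc_left hac)
    exact continuousWithinAt_const.mul ((hprim _ (left_mem_Icc.2 hcb)).mono hsub')
  have : (nhdsWithin (sInf s) s).NeBot :=
    mem_closure_iff_nhdsWithin_neBot.1 (csInf_mem_closure hs hbdd)
  have hlt : ∀ᶠ x in nhdsWithin (sInf s) s, K * ∫ t in sInf s..x, q t < 1 :=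
    hcont.tendsto.eventually_lt_const (by simp)
  exact (eventually_mem_nhdsWithin.and hlt).exists

end Interval

/-- The functions `e'`, `e''`, `e'''` are the successive derivatives of `e` on `[a, b]`, and `e`
solves the beam equation `e'''' = q e` there with `e'''(a) = 0`. The equation is stated in
integrated (Volterra) form, which makes sense for a weight `q` that is only integrable. -/
structure IsVolterraBeamSolution (q : ℝ → ℝ) (a b : ℝ) (e e' e'' e''' : ℝ → ℝ) : Prop where
  hasDerivWithinAt : ∀ x ∈ Icc a b, HasDerivWithinAt e (e' x) (Icc a b) x
  hasDerivWithinAt' : ∀ x ∈ Icc a b, HasDerivWithinAt e' (e'' x) (Icc a b) x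
  hasDerivWithinAt'' : ∀ x ∈ Icc a b, HasDerivWithinAt e'' (e''' x) (Icc a b) x
  volterra : ∀ x ∈ Icc a b, e''' x = ∫ t in a..x, q t * e t

namespace IsVolterraBeamSolution

variable {a b c m : ℝ} {q e e' e'' e''' : ℝ → ℝ}

protected lemma neg (h : IsVolterraBeamSolution q a b e e' e'' e''') :
    IsVolterraBeamSolution q a b (-e) (-e') (-e'') (-e''') where
  hasDerivWithinAt x hx := (h.hasDerivWithinAt x hx).neg
  hasDerivWithinAt' x hx := (h.hasDerivWithinAt' x hx).neg
  hasDerivWithinAt'' x hx := (h.hasDerivWithinAt'' x hx).neg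
  volterra x hx := by simp [h.volterra x hx]

lemma mono (h : IsVolterraBeamSolution q a b e e' e'' e''') (hcb : c ≤ b) :
    IsVolterraBeamSolution q a c e e' e'' e''' :=
  have hsub : Icc a c ⊆ Icc a b := Icc_subset_Icc_right hcb
  { hasDerivWithinAt x hx := (h.hasDerivWithinAt x (hsub hx)).mono hsub
    hasDerivWithinAt' x hx := (h.hasDerivWithinAt' x (hsub hx)).mono hsub
    hasDerivWithinAt'' x hx := (h.hasDerivWithinAt'' x (hsub hx)).mono hsub
    volterra x hx := h.volterra x (hsub hx) }

protected lemma continuousOn (h : IsVolterraBeamSolution q a b e e' e'' e''') :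
    ContinuousOn e (Icc a b) :=
  fun x hx ↦ (h.hasDerivWithinAt x hx).continuousWithinAt

lemma mul_integral_mul_cube_le (h : IsVolterraBeamSolution q a b e e' e'' e''')
    (hc : c ∈ Icc a b) (hq : IntegrableOn q (Icc a b))
    (hq0 : ∀ᵐ x ∂volume.restrict (Icc a b), 0 ≤ q x)
    (h0 : 0 ≤ e a) (h1 : 0 ≤ e' a) (h2 : 0 ≤ e'' a) (hpos : ∀ x ∈ Ioo a c, 0 ≤ e x)
    (hm0 : m ≤ 0) (hm : ∀ x ∈ Ioo c b, m ≤ e x) :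
    ∀ x ∈ Icc a b, (m * ∫ t in c..b, q t) * ((x - a) ^ 3 / Nat.factorial 3) ≤ e x := by
  have h3 : ∀ x ∈ Icc a b, (m * ∫ t in c..b, q t) * ((x - a) ^ 0 / Nat.factorial 0) ≤ e''' x :=
    fun x hx ↦ by
      simpa [h.volterra x hx] using
        mul_integral_le_primitive_mul_of_nonneg_left hc hq hq0 h.continuousOn hpos hm0 hm hx
  exact mul_pow_div_factorial_le_of_le_deriv h.hasDerivWithinAt h0
    (mul_pow_div_factorial_le_of_le_deriv h.hasDerivWithinAt' h1
      (mul_pow_div_factorial_le_of_le_deriv h.hasDerivWithinAt'' h2 h3))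

lemma nonneg (h : IsVolterraBeamSolution q a b e e' e'' e''') (hq : IntegrableOn q (Icc a b))
    (hq0 : ∀ᵐ x ∂volume.restrict (Icc a b), 0 ≤ q x)
    (h0 : 0 ≤ e a) (h1 : 0 ≤ e' a) (h2 : 0 ≤ e'' a) : ∀ x ∈ Icc a b, 0 ≤ e x := by
  by_contra! hneg
  set s : Set ℝ := {x | x ∈ Icc a b ∧ e x < 0}
  have hsub : s ⊆ Icc a b := fun x hx ↦ hx.1
  have hbdd : BddBelow s := bddBelow_Icc.mono hsub
  obtain ⟨d, ⟨hd, hed⟩, hsmall⟩ :=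
    exists_mem_mul_integral_sInf_lt_one hq (s := s) hneg hsub ((b - a) ^ 3 / Nat.factorial 3)
  have hc : sInf s ∈ Icc a d :=
    ⟨le_csInf hneg fun x hx ↦ hx.1.1, csInf_le hbdd ⟨hd, hed⟩⟩
  have hpos : ∀ x ∈ Ioo a (sInf s), 0 ≤ e x := fun x hx ↦ not_lt.1 fun hex ↦
    notMem_of_lt_csInf hx.2 hbdd ⟨⟨hx.1.le, hx.2.le.trans (hc.2.trans hd.2)⟩, hex⟩
  have had : Icc a d ⊆ Icc a b := Icc_subset_Icc_right hd.2
  have hq0d := ae_restrict_of_ae_restrict_of_subset had hq0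
  obtain ⟨z, hz, hmin⟩ :=
    isCompact_Icc.exists_isMinOn ⟨d, right_mem_Icc.2 hd.1⟩ (h.continuousOn.mono had)
  have hez : e z < 0 := (hmin (right_mem_Icc.2 hd.1)).trans_lt hed
  set I := ∫ t in sInf s..d, q t
  have hI : 0 ≤ I := intervalIntegral.integral_nonneg_of_ae_restrict hc.2
    (ae_restrict_of_ae_restrict_of_subset (Icc_subset_Icc_left hc.1) hq0d)
  have hcube : (z - a) ^ 3 / Nat.factorial 3 * I < 1 := by
    have : 0 ≤ z - a := sub_nonneg.2 hz.1
    have : z ≤ b := hz.2.trans hd.2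
    exact lt_of_le_of_lt (by gcongr) hsmall
  refine lt_irrefl (e z) ?_
  calc e z < e z * ((z - a) ^ 3 / Nat.factorial 3 * I) := by
        simpa only [mul_one] using mul_lt_mul_of_neg_left hcube hez
    _ = e z * I * ((z - a) ^ 3 / Nat.factorial 3) := by ring
    _ ≤ e z := (h.mono hd.2).mul_integral_mul_cube_le hc (hq.mono_set had) hq0d h0 h1 h2 hpos
      hez.le (fun x hx ↦ hmin ⟨hc.1.trans hx.1.le, hx.2.le⟩) z hz

lemma eq_zero (h : IsVolterraBeamSolution q a b e e' e'' e''') (hq : IntegrableOn q (Icc a b))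
    (hq0 : ∀ᵐ x ∂volume.restrict (Icc a b), 0 ≤ q x)
    (h0 : 0 ≤ e a) (h1 : 0 ≤ e' a) (h2 : 0 ≤ e'' a) (hb : e b = 0) :
    ∀ x ∈ Icc a b, e x = 0 := by
  have hnonneg := h.nonneg hq hq0 h0 h1 h2
  have h3 : ∀ x ∈ Icc a b, 0 ≤ e''' x := fun x hx ↦ by
    have hsub : Icc a x ⊆ Icc a b := Icc_subset_Icc_right hx.2
    simpa only [zero_mul, h.volterra x hx] using mul_integral_le_integral_mul hx.1
      (hq.mono_set hsub) (ae_restrict_of_ae_restrict_of_subset hsub hq0)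
      (h.continuousOn.mono hsub) fun t ht ↦ hnonneg t (hsub (Ioo_subset_Icc_self ht))
  have he' : ∀ x ∈ Icc a b, 0 ≤ e' x := by
    simpa using mul_pow_div_factorial_le_of_le_deriv (m := 0) h.hasDerivWithinAt' h1
      (mul_pow_div_factorial_le_of_le_deriv (n := 0) h.hasDerivWithinAt'' h2 (by simpa using h3))
  have hmono : MonotoneOn e (Icc a b) :=
    monotoneOn_of_hasDerivWithinAt_nonneg (convex_Icc a b) h.continuousOn
      (fun x hx ↦ (h.hasDerivWithinAt x (interior_subset hx)).mono interior_subset)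
      (fun x hx ↦ he' x (interior_subset hx))
  exact fun x hx ↦ le_antisymm
    ((hmono hx (right_mem_Icc.2 (hx.1.trans hx.2)) hx.2).trans_eq hb) (hnonneg x hx)

end IsVolterraBeamSolution

theorem stmt4_general {a b : ℝ} {q e e' e'' e''' : ℝ → ℝ}
    (h : IsVolterraBeamSolution q a b e e' e'' e''') (hq : IntegrableOn q (Icc a b))
    (hq0 : ∀ᵐ x ∂volume.restrict (Icc a b), 0 ≤ q x)
    (ha : e' a = 0) (hb : e b = 0) (hne : ¬ ∀ x ∈ Icc a b, e x = 0) :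
    e a ≠ 0 ∧ e a * e'' a < 0 := by
  have hlt : e a * e'' a < 0 := by
    by_contra! hprod
    rcases mul_nonneg_iff.1 hprod with ⟨h0, h2⟩ | ⟨h0, h2⟩
    · exact hne (h.eq_zero hq hq0 h0 ha.ge h2 hb)
    · exact hne fun x hx ↦ neg_eq_zero.1 <| h.neg.eq_zero hq hq0 (neg_nonneg.2 h0)
        (neg_nonneg.2 ha.le) (neg_nonneg.2 h2) (neg_eq_zero.2 hb) x hx
  exact ⟨left_ne_zero_of_mul hlt.ne, hlt⟩

/-- An even eigenfunction of the weighted beam problem, restricted to the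
half middle span `[0, aπ]` (so that `e'(0) = e'''(0) = 0` and `e(aπ) = 0`),
if nontrivial, satisfies `e(0) ≠ 0` and `e(0) e''(0) < 0`. -/
theorem stmt4 (a α β lam : ℝ) (ha0 : 0 < a) (ha1 : a < 1)
    (hα0 : 0 < α) (hα1 : α < 1) (hβ : 1 < β) (hlam : 0 < lam)
    (p : ℝ → ℝ) (hpmeas : Measurable p)
    (hpbd : ∀ᵐ x ∂(volume.restrict (Set.Icc 0 (a * π))), α ≤ p x ∧ p x ≤ β)
    (e e' e'' e''' : ℝ → ℝ)
    (he : ∀ x ∈ Set.Icc 0 (a * π), HasDerivWithinAt e (e' x) (Set.Icc 0 (a * π)) x)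
    (he' : ∀ x ∈ Set.Icc 0 (a * π), HasDerivWithinAt e' (e'' x) (Set.Icc 0 (a * π)) x)
    (he'' : ∀ x ∈ Set.Icc 0 (a * π), HasDerivWithinAt e'' (e''' x) (Set.Icc 0 (a * π)) x)
    (he''' : ContinuousOn e''' (Set.Icc 0 (a * π)))
    (hVolterra : ∀ x ∈ Set.Icc 0 (a * π),
      e''' x = lam * ∫ t in (0 : ℝ)..x, p t * e t)
    (hb1 : e' 0 = 0) (hpier : e (a * π) = 0)
    (hnontriv : ¬ ∀ x ∈ Set.Icc 0 (a * π), e x = 0) :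
    e 0 ≠ 0 ∧ e 0 * e'' 0 < 0 :=
  stmt4_general
    ⟨he, he', he'', by simpa [mul_assoc] using hVolterra⟩
    ((Integrable.of_mem_Icc α β hpmeas.aemeasurable hpbd).const_mul lam)
    (hpbd.mono fun _ hx ↦ mul_nonneg hlam.le (hα0.le.trans hx.1)) hb1 hpier hnontriv
end

section
/- Let λ, ν > 0 with λ < ν and let ζ > √(2(ν − λ)). Let W : ℝ → ℝ be twice differentiable with W''(t) + λ W(t) + W(t)³ = 0 for all t, W(0) = ζ and W'(0) = 0. Then there exists a twice differentiable function ξ : ℝ → ℝ satisfying the Hill equation ξ''(t) + (ν + W(t)²) ξ(t) = 0 for all t ≥ 0 which is unbounded on [0, ∞). -/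
open Real MeasureTheory Set Filter

/-!
The modes `W` and `sn`, where `ζ² = W² + sn²`, solve Hill equations with coefficients `λ + W²` and
`λ + ζ²/2 + W²`, and the hypotheses put `ν` strictly between `λ` and `λ + ζ²/2`. Let `C` be the
solution of `ξ'' + (ν + W²)ξ = 0` with `C(0) = 1`, `C'(0) = 0`, and let `h` be the quarter period
of `W`, so that `W²` has period `2h`. If `C(h) = 0`, then comparison with `W` yields another zero of
`C` in `(0, h)`, and comparison with `sn` forbids two zeros in `(0, h]`; hence `C(h) ≠ 0`.
The function `W² - 2(ν - λ)` is a product of two solutions, so it gives rise to a conserved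
quadratic form in `(C, C')`. At `h` it shows `C'(h) ≠ 0`, whence `C'(2h) = 2 C(h) C'(h) ≠ 0`, and at
`2h` it then shows `|C(2h)| > 1`. Finally `C(2T) = 2 C(T)² - 1` for each period `T` of `W²`, so
`C(2h · 2ⁿ)` is unbounded.
-/

open scoped NNReal

/-! ### Global solutions of ordinary differential equations -/

section IntegralCurve

variable {E : Type*} [NormedAddCommGroup E] [NormedSpace ℝ E] {v : ℝ → E → E}

lemma eqOn_Ioo_of_isIntegralCurveOn {γ γ' : ℝ → E} {K : ℝ≥0} {a b t₀ : ℝ}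
    (hv : ∀ t ∈ Ioo a b, LipschitzWith K (v t)) (ht₀ : t₀ ∈ Ioo a b)
    (hγ : IsIntegralCurveOn γ v (Ioo a b)) (hγ' : IsIntegralCurveOn γ' v (Ioo a b))
    (h : γ t₀ = γ' t₀) : EqOn γ γ' (Ioo a b) :=
  ODE_solution_unique_of_mem_Ioo (s := fun _ => univ) (fun t ht => (hv t ht).lipschitzOnWith) ht₀
    (fun t ht => ⟨(hγ t ht).hasDerivAt (Ioo_mem_nhds ht.1 ht.2), mem_univ _⟩)
    (fun t ht => ⟨(hγ' t ht).hasDerivAt (Ioo_mem_nhds ht.1 ht.2), mem_univ _⟩) h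

lemma eq_of_isIntegralCurve {γ γ' : ℝ → E}
    (hv : ∀ R : ℝ, ∃ K : ℝ≥0, ∀ t ∈ Icc (-R) R, LipschitzWith K (v t))
    (hγ : IsIntegralCurve γ v) (hγ' : IsIntegralCurve γ' v) {t₀ : ℝ} (h : γ t₀ = γ' t₀) :
    γ = γ' := by
  funext t
  obtain ⟨R, hR⟩ := exists_gt (max |t| |t₀|)
  obtain ⟨K, hK⟩ := hv R
  exact eqOn_Ioo_of_isIntegralCurveOn (fun s hs => hK s (Ioo_subset_Icc_self hs))
    (abs_lt.1 ((le_max_right _ _).trans_lt hR)) (hγ.isIntegralCurveOn _) (hγ'.isIntegralCurveOn _) h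
    (abs_lt.1 ((le_max_left _ _).trans_lt hR))

lemma exists_isIntegralCurveOn_Icc_of_bounded [CompleteSpace E] {R : ℝ} (hR : 0 ≤ R) {K M : ℝ≥0}
    (hcont : ∀ x, Continuous (v · x)) (hlip : ∀ t ∈ Icc (-R) R, LipschitzWith K (v t))
    (hbdd : ∀ t ∈ Icc (-R) R, ∀ x, ‖v t x‖ ≤ M) (x₀ : E) :
    ∃ γ : ℝ → E, γ 0 = x₀ ∧ IsIntegralCurveOn γ v (Icc (-R) R) := by
  have hpl : IsPicardLindelof v (⟨0, by simp [hR]⟩ : Icc (-R) R) x₀ (M * R.toNNReal) 0 M K :=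
    { lipschitzOnWith := fun t ht => (hlip t ht).lipschitzOnWith
      continuousOn := fun x _ => (hcont x).continuousOn
      norm_le := fun t ht x _ => hbdd t ht x
      mul_max_le := by simp [hR] }
  exact hpl.exists_eq_forall_mem_Icc_hasDerivWithinAt₀

lemma exists_isIntegralCurve_of_forall_Ioo
    (hv : ∀ R : ℝ, ∃ K : ℝ≥0, ∀ t ∈ Icc (-R) R, LipschitzWith K (v t)) {x₀ : E}
    (hloc : ∀ n : ℕ, ∃ γ : ℝ → E, γ 0 = x₀ ∧ IsIntegralCurveOn γ v (Ioo (-(n : ℝ)) n)) :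
    ∃ γ : ℝ → E, γ 0 = x₀ ∧ IsIntegralCurve γ v := by
  choose γ hγ₀ hγ using hloc
  have heq {m n : ℕ} (hmn : m ≤ n) : EqOn (γ m) (γ n) (Ioo (-(m : ℝ)) m) := fun t ht => by
    obtain ⟨K, hK⟩ := hv m
    have hsub : Ioo (-(m : ℝ)) m ⊆ Ioo (-(n : ℝ)) n := by gcongr
    exact eqOn_Ioo_of_isIntegralCurveOn (fun s hs => hK s (Ioo_subset_Icc_self hs))
      (t₀ := 0) ⟨by linarith [ht.1, ht.2], by linarith [ht.1, ht.2]⟩ (hγ m)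
      (IsIntegralCurveOn.mono (hγ n) hsub) (by rw [hγ₀, hγ₀]) ht
  have hmem (t : ℝ) : t ∈ Ioo (-((⌊|t|⌋₊ + 1 : ℕ) : ℝ)) (⌊|t|⌋₊ + 1 : ℕ) := by
    rw [mem_Ioo, ← abs_lt]
    exact_mod_cast Nat.lt_floor_add_one |t|
  have hglue (n : ℕ) : EqOn (fun t => γ (⌊|t|⌋₊ + 1) t) (γ n) (Ioo (-(n : ℝ)) n) := fun t ht => by
    rcases le_total (⌊|t|⌋₊ + 1) n with h | h
    · exact heq h (hmem t)
    · exact (heq h ht).symm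
  refine ⟨fun t => γ (⌊|t|⌋₊ + 1) t, hγ₀ _, fun t => ?_⟩
  have hnhds := Ioo_mem_nhds (hmem t).1 (hmem t).2
  exact ((hγ _ t (hmem t)).hasDerivAt hnhds).congr_of_eventuallyEq
    (eventually_of_mem hnhds (hglue _))

lemma exists_isIntegralCurve_of_bounded [CompleteSpace E] (hcont : ∀ x, Continuous (v · x))
    (hlip : ∀ R : ℝ, ∃ K : ℝ≥0, ∀ t ∈ Icc (-R) R, LipschitzWith K (v t))
    (hbdd : ∀ R : ℝ, ∃ M : ℝ≥0, ∀ t ∈ Icc (-R) R, ∀ x, ‖v t x‖ ≤ M) (x₀ : E) :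
    ∃ γ : ℝ → E, γ 0 = x₀ ∧ IsIntegralCurve γ v := by
  refine exists_isIntegralCurve_of_forall_Ioo hlip fun n => ?_
  obtain ⟨K, hK⟩ := hlip n
  obtain ⟨M, hM⟩ := hbdd n
  obtain ⟨γ, hγ₀, hγ⟩ := exists_isIntegralCurveOn_Icc_of_bounded n.cast_nonneg hcont hK hM x₀
  exact ⟨γ, hγ₀, hγ.mono Ioo_subset_Icc_self⟩

end IntegralCurve

lemma exists_nnnorm_le_on_Icc {F : Type*} [SeminormedAddCommGroup F] {q : ℝ → F} (hq : Continuous q)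
    (R : ℝ) : ∃ B : ℝ≥0, ∀ t ∈ Icc (-R) R, ‖q t‖₊ ≤ B := by
  obtain ⟨B, hB⟩ := (isCompact_Icc.image (f := fun t => ‖q t‖₊) (by fun_prop)).bddAbove
  exact ⟨B, fun t ht => hB ⟨t, ht, rfl⟩⟩

lemma eq_of_hasDerivAt_zero {F : Type*} [NormedAddCommGroup F] [NormedSpace ℝ F] {f : ℝ → F}
    (hf : ∀ t, HasDerivAt f 0 t) (s t : ℝ) : f s = f t :=
  is_const_of_deriv_eq_zero (fun t => (hf t).differentiableAt) (fun t => (hf t).deriv) s t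

lemma exists_pos_eq_of_le_deriv {φ d : ℝ → ℝ} {a c : ℝ} (hφ : ∀ t, HasDerivAt φ (d t) t)
    (hφ₀ : φ 0 = 0) (hc : 0 < c) (hd : ∀ t, c ≤ d t) (ha : 0 < a) : ∃ h, 0 < h ∧ φ h = a := by
  have hdiff : Differentiable ℝ φ := fun t => (hφ t).differentiableAt
  have hgrow : a ≤ φ (a / c) := by
    have := mul_sub_le_image_sub_of_le_deriv hdiff (fun t => (hφ t).deriv ▸ hd t)
      (div_nonneg ha.le hc.le)
    rwa [hφ₀, sub_zero, sub_zero, mul_div_cancel₀ _ hc.ne'] at this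
  obtain ⟨h, hh, hφh⟩ := intermediate_value_Icc (div_nonneg ha.le hc.le)
    hdiff.continuous.continuousOn ⟨hφ₀.trans_le ha.le, hgrow⟩
  refine ⟨h, hh.1.lt_of_ne ?_, hφh⟩
  rintro rfl
  exact ha.ne' (hφh.symm.trans hφ₀)

lemma eq_mul_cos_and_eq_mul_sin_of_hasDerivAt {x y φ d : ℝ → ℝ} {r : ℝ}
    (hx : ∀ t, HasDerivAt x (-(d t * y t)) t) (hy : ∀ t, HasDerivAt y (d t * x t) t)
    (hφ : ∀ t, HasDerivAt φ (d t) t) (hx₀ : x 0 = r) (hy₀ : y 0 = 0) (hφ₀ : φ 0 = 0) (t : ℝ) :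
    x t = r * cos (φ t) ∧ y t = r * sin (φ t) := by
  have hcos := eq_of_hasDerivAt_zero (f := fun t => x t * cos (φ t) + y t * sin (φ t))
    (fun t => (((hx t).mul (hφ t).cos).add ((hy t).mul (hφ t).sin)).congr_deriv (by ring)) t 0
  have hsin := eq_of_hasDerivAt_zero (f := fun t => y t * cos (φ t) - x t * sin (φ t))
    (fun t => (((hy t).mul (hφ t).cos).sub ((hx t).mul (hφ t).sin)).congr_deriv (by ring)) t 0
  simp only [hx₀, hy₀, hφ₀, cos_zero, sin_zero] at hcos hsin
  constructor
  · linear_combination cos (φ t) * hcos - sin (φ t) * hsin - x t * sin_sq_add_cos_sq (φ t)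
  · linear_combination sin (φ t) * hcos + cos (φ t) * hsin - y t * sin_sq_add_cos_sq (φ t)

/-! ### Hill's equation -/

/-- `y` solves Hill's equation `y'' + q y = 0` on the whole line; `z` stands for `y'`. -/
structure IsHillSol (q y z : ℝ → ℝ) : Prop where
  hasDerivAt : ∀ t, HasDerivAt y (z t) t
  hasDerivAt_deriv : ∀ t, HasDerivAt z (-(q t) * y t) t

lemma isHillSol_zero (q : ℝ → ℝ) : IsHillSol q (fun _ => 0) (fun _ => 0) :=
  ⟨fun t => hasDerivAt_const t 0, fun t => (hasDerivAt_const t 0).congr_deriv (by ring)⟩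

/-- The Prüfer angle `θ` of a solution `y = r sin θ`, `y' = r cos θ` of Hill's equation satisfies
`θ' = cos² θ + q sin² θ`. Unlike Hill's equation itself, this has a bounded right-hand side. -/
lemma exists_pruferAngle {q : ℝ → ℝ} (hq : Continuous q) (θ₀ : ℝ) :
    ∃ θ : ℝ → ℝ, θ 0 = θ₀ ∧
      ∀ t, HasDerivAt θ ((1 + q t) / 2 + (1 - q t) / 2 * cos (2 * θ t)) t := by
  refine exists_isIntegralCurve_of_bounded
    (v := fun t x => (1 + q t) / 2 + (1 - q t) / 2 * cos (2 * x)) (fun x => by fun_prop)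
    (fun R => ?_) (fun R => ?_) θ₀
  · obtain ⟨B, hB⟩ := exists_nnnorm_le_on_Icc (q := fun t => 1 - q t) (by fun_prop) R
    refine ⟨B, fun t ht => LipschitzWith.of_dist_le_mul fun x y => ?_⟩
    have hBt : |1 - q t| ≤ B := hB t ht
    have hcos := abs_cos_sub_cos_le (2 * x) (2 * y)
    rw [dist_add_left, dist_eq, dist_eq, ← mul_sub, abs_mul, abs_div, abs_two]
    rw [← mul_sub, abs_mul, abs_two] at hcos
    calc |1 - q t| / 2 * |cos (2 * x) - cos (2 * y)| ≤ B / 2 * (2 * |x - y|) := by gcongr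
      _ = B * |x - y| := by ring
  · obtain ⟨B, hB⟩ := exists_nnnorm_le_on_Icc hq R
    refine ⟨1 + B, fun t ht x => ?_⟩
    have hBt : |q t| ≤ B := hB t ht
    have hmean : (1 + q t) / 2 + (1 - q t) / 2 * cos (2 * x)
        = cos x ^ 2 + q t * sin x ^ 2 := by
      rw [cos_two_mul]
      linear_combination -(q t) * sin_sq_add_cos_sq x
    calc ‖(1 + q t) / 2 + (1 - q t) / 2 * cos (2 * x)‖ = |cos x ^ 2 + q t * sin x ^ 2| := by
          rw [hmean, norm_eq_abs]
      _ ≤ |cos x ^ 2| + |q t| * |sin x ^ 2| := by rw [← abs_mul]; exact abs_add_le _ _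
      _ ≤ 1 + B * 1 := by
          gcongr <;> rw [abs_of_nonneg (sq_nonneg _)]
          exacts [cos_sq_le_one x, sin_sq_le_one x]
      _ = (1 + B : ℝ≥0) := by simp

lemma exists_isHillSol {q : ℝ → ℝ} (hq : Continuous q) (a b : ℝ) :
    ∃ y z, IsHillSol q y z ∧ y 0 = a ∧ z 0 = b := by
  obtain ⟨θ, hθ₀, hθ⟩ := exists_pruferAngle hq (Complex.arg ⟨b, a⟩)
  have hθc : Continuous θ := continuous_iff_continuousAt.2 fun t => (hθ t).continuousAt
  have hint : Continuous fun t => (1 - q t) * (sin (θ t) * cos (θ t)) := by fun_prop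
  let g (t : ℝ) : ℝ := ∫ s in (0 : ℝ)..t, (1 - q s) * (sin (θ s) * cos (θ s))
  have hg (t : ℝ) : HasDerivAt g ((1 - q t) * (sin (θ t) * cos (θ t))) t :=
    (hint.integral_hasStrictDerivAt 0 t).hasDerivAt
  have hg₀ : g 0 = 0 := intervalIntegral.integral_same
  let r (t : ℝ) : ℝ := ‖(⟨b, a⟩ : ℂ)‖ * exp (g t)
  have hr (t : ℝ) : HasDerivAt r (r t * ((1 - q t) * (sin (θ t) * cos (θ t)))) t :=
    ((hg t).exp.const_mul _).congr_deriv (by ring)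
  refine ⟨fun t => r t * sin (θ t), fun t => r t * cos (θ t), ⟨fun t => ?_, fun t => ?_⟩, ?_, ?_⟩
  · refine ((hr t).mul (hθ t).sin).congr_deriv ?_
    rw [cos_two_mul]
    linear_combination r t * (1 - q t) * cos (θ t) * sin_sq_add_cos_sq (θ t)
  · refine ((hr t).mul (hθ t).cos).congr_deriv ?_
    rw [cos_two_mul]
    ring
  · simp [r, hg₀, hθ₀, Complex.norm_mul_sin_arg]
  · simp [r, hg₀, hθ₀, Complex.norm_mul_cos_arg]

namespace IsHillSol

variable {p q y z y₁ z₁ : ℝ → ℝ}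

lemma continuous (h : IsHillSol q y z) : Continuous y :=
  continuous_iff_continuousAt.2 fun t => (h.hasDerivAt t).continuousAt

lemma add (h : IsHillSol q y z) (h₁ : IsHillSol q y₁ z₁) :
    IsHillSol q (fun t => y t + y₁ t) (fun t => z t + z₁ t) where
  hasDerivAt t := (h.hasDerivAt t).add (h₁.hasDerivAt t)
  hasDerivAt_deriv t :=
    ((h.hasDerivAt_deriv t).add (h₁.hasDerivAt_deriv t)).congr_deriv (by ring)

lemma const_mul (h : IsHillSol q y z) (a : ℝ) :
    IsHillSol q (fun t => a * y t) (fun t => a * z t) where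
  hasDerivAt t := (h.hasDerivAt t).const_mul a
  hasDerivAt_deriv t := ((h.hasDerivAt_deriv t).const_mul a).congr_deriv (by ring)

lemma comp_const_sub (h : IsHillSol q y z) (c : ℝ) :
    IsHillSol (fun t => q (c - t)) (fun t => y (c - t)) (fun t => -z (c - t)) where
  hasDerivAt t := (h.hasDerivAt (c - t)).comp_const_sub c t
  hasDerivAt_deriv t := ((h.hasDerivAt_deriv (c - t)).comp_const_sub c t).neg.congr_deriv (by ring)

lemma comp_add_period (h : IsHillSol q y z) {T : ℝ} (hq : Function.Periodic q T) :
    IsHillSol q (fun t => y (t + T)) (fun t => z (t + T)) where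
  hasDerivAt t := (h.hasDerivAt (t + T)).comp_add_const t T
  hasDerivAt_deriv t :=
    ((h.hasDerivAt_deriv (t + T)).comp_add_const t T).congr_deriv (by rw [hq t])

lemma eq_of_eq_at (h : IsHillSol q y z) (h₁ : IsHillSol q y₁ z₁) (hq : Continuous q) {t₀ : ℝ}
    (hy : y t₀ = y₁ t₀) (hz : z t₀ = z₁ t₀) : y = y₁ ∧ z = z₁ := by
  have hlip (R : ℝ) : ∃ K : ℝ≥0, ∀ t ∈ Icc (-R) R,
      LipschitzWith K fun x : ℝ × ℝ => (x.2, -(q t) * x.1) := by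
    obtain ⟨B, hB⟩ := exists_nnnorm_le_on_Icc hq R
    refine ⟨max 1 (B * 1), fun t ht => LipschitzWith.prod_snd.prodMk ?_⟩
    exact ((lipschitzWith_smul (-(q t))).weaken (by simpa using hB t ht)).comp
      LipschitzWith.prod_fst
  have heq : (fun t => (y t, z t)) = fun t => (y₁ t, z₁ t) := eq_of_isIntegralCurve hlip
    (fun t => (h.hasDerivAt t).prodMk (h.hasDerivAt_deriv t))
    (fun t => (h₁.hasDerivAt t).prodMk (h₁.hasDerivAt_deriv t)) (Prod.ext hy hz)
  exact ⟨congrArg (fun f t => (f t).1) heq, congrArg (fun f t => (f t).2) heq⟩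

lemma hasDerivAt_wronskian (h : IsHillSol q y z) (h₁ : IsHillSol p y₁ z₁) (t : ℝ) :
    HasDerivAt (fun t => y t * z₁ t - z t * y₁ t) ((q t - p t) * (y t * y₁ t)) t :=
  (((h.hasDerivAt t).mul (h₁.hasDerivAt_deriv t)).sub
    ((h.hasDerivAt_deriv t).mul (h₁.hasDerivAt t))).congr_deriv (by ring)

lemma wronskian_eq (h : IsHillSol q y z) (h₁ : IsHillSol q y₁ z₁) (s t : ℝ) :
    y s * z₁ s - z s * y₁ s = y t * z₁ t - z t * y₁ t :=
  eq_of_hasDerivAt_zero (f := fun t => y t * z₁ t - z t * y₁ t)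
    (fun t => (h.hasDerivAt_wronskian h₁ t).congr_deriv (by ring)) s t

lemma exists_zero_of_wronskian_eq (h : IsHillSol q y z) (h₁ : IsHillSol p y₁ z₁) {a b : ℝ}
    (hab : a < b) (hqp : ∀ t ∈ Ioo a b, q t ≠ p t) (hy₁ : ∀ t ∈ Ioo a b, y₁ t ≠ 0)
    (hw : y a * z₁ a - z a * y₁ a = y b * z₁ b - z b * y₁ b) : ∃ t ∈ Ioo a b, y t = 0 := by
  obtain ⟨t, ht, hder⟩ := exists_hasDerivAt_eq_zero hab
    (fun t _ => (h.hasDerivAt_wronskian h₁ t).continuousAt.continuousWithinAt) hw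
    (fun t _ => h.hasDerivAt_wronskian h₁ t)
  exact ⟨t, ht, by simpa [sub_ne_zero.2 (hqp t ht), hy₁ t ht] using hder⟩

lemma hasDerivAt_picone (h : IsHillSol q y z) (h₁ : IsHillSol p y₁ z₁) {t : ℝ} (ht : y₁ t ≠ 0) :
    HasDerivAt (fun t => y t * z t - y t ^ 2 * (z₁ t / y₁ t))
      ((z t - y t * (z₁ t / y₁ t)) ^ 2 + (p t - q t) * y t ^ 2) t := by
  refine (((h.hasDerivAt t).mul (h.hasDerivAt_deriv t)).sub (((h.hasDerivAt t).pow 2).mul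
    ((h₁.hasDerivAt_deriv t).div (h₁.hasDerivAt t) ht))).congr_deriv ?_
  simp only [Pi.pow_apply, Pi.div_apply]
  field_simp
  push_cast
  ring

lemma exists_zero_of_lt_coeff (h : IsHillSol q y z) (h₁ : IsHillSol p y₁ z₁) {a b : ℝ}
    (hab : a < b) (hqp : ∀ t ∈ Ioo a b, q t < p t) (hya : y a = 0) (hyb : y b = 0)
    (hyz : ∀ t, y t = 0 → z t ≠ 0) : ∃ t ∈ Icc a b, y₁ t = 0 := by
  by_contra! hy₁
  obtain ⟨t, ht, hder⟩ := exists_hasDerivAt_eq_zero hab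
    (fun t ht => (h.hasDerivAt_picone h₁ (hy₁ t ht)).continuousAt.continuousWithinAt)
    (by simp [hya, hyb]) (fun t ht => h.hasDerivAt_picone h₁ (hy₁ t (Ioo_subset_Icc_self ht)))
  have hpq := sub_pos.2 (hqp t ht)
  have hyt : y t = 0 := by
    by_contra hne
    have hpos : 0 < (z t - y t * (z₁ t / y₁ t)) ^ 2 + (p t - q t) * y t ^ 2 := by positivity
    exact hpos.ne' hder
  exact hyz t hyt (by simpa [hyt] using hder)

/-- The hypotheses on `F` say `F''' + 4 q F' + 2 q' F = 0`, the equation satisfied by the products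
of two solutions, in a form that does not differentiate `q`. -/
lemma quadratic_form_eq (h : IsHillSol q y z) {F F' G : ℝ → ℝ} (hF : ∀ t, HasDerivAt F (F' t) t)
    (hF' : ∀ t, HasDerivAt F' (2 * (G t - q t * F t)) t)
    (hG : ∀ t, HasDerivAt G (-(q t) * F' t) t) (s t : ℝ) :
    F s * z s ^ 2 - F' s * (y s * z s) + G s * y s ^ 2
      = F t * z t ^ 2 - F' t * (y t * z t) + G t * y t ^ 2 := by
  refine eq_of_hasDerivAt_zero (f := fun t => F t * z t ^ 2 - F' t * (y t * z t) + G t * y t ^ 2)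
    (fun t => ?_) s t
  refine ((((hF t).mul ((h.hasDerivAt_deriv t).pow 2)).sub ((hF' t).mul
    ((h.hasDerivAt t).mul (h.hasDerivAt_deriv t)))).add
    ((hG t).mul ((h.hasDerivAt t).pow 2))).congr_deriv ?_
  simp only [Pi.pow_apply, Pi.mul_apply]
  push_cast
  ring

end IsHillSol

/-- `C` is the cosine-like solution of Hill's equation `y'' + q y = 0`, the one with `C 0 = 1` and
`C' 0 = 0`; `D` stands for `C'`. -/
structure IsCosineSol (q C D : ℝ → ℝ) : Prop extends IsHillSol q C D where
  apply_zero : C 0 = 1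
  deriv_zero : D 0 = 0

namespace IsCosineSol

variable {q C D : ℝ → ℝ} {T : ℝ}

lemma even_and_odd (hC : IsCosineSol q C D) (hq : Continuous q) (hqe : Function.Even q) :
    Function.Even C ∧ Function.Odd D := by
  have hrefl : IsHillSol q (fun t => C (-t)) (fun t => -D (-t)) := by
    simpa only [zero_sub, hqe _] using hC.toIsHillSol.comp_const_sub 0
  obtain ⟨hy, hz⟩ := hrefl.eq_of_eq_at hC.toIsHillSol hq (t₀ := 0) (by simp)
    (by simp [hC.deriv_zero])
  exact ⟨fun t => congrFun hy t, fun t => neg_eq_iff_eq_neg.1 (congrFun hz t)⟩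

lemma apply_two_mul_period (hC : IsCosineSol q C D) (hq : Continuous q) (hqe : Function.Even q)
    (hqT : Function.Periodic q T) : C (2 * T) = 2 * C T ^ 2 - 1 := by
  obtain ⟨hCe, hDo⟩ := hC.even_and_odd hq hqe
  have hsum := (hC.toIsHillSol.comp_add_period hqT).add (hC.toIsHillSol.comp_add_period hqT.neg)
  have heq := (hsum.eq_of_eq_at (hC.toIsHillSol.const_mul (2 * C T)) hq (t₀ := 0)
    (by simp only [zero_add, hCe T, hC.apply_zero]; ring)
    (by simp only [zero_add, hDo T, hC.deriv_zero]; ring)).1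
  have hT := congrFun heq T
  rw [← two_mul, add_neg_cancel, hC.apply_zero] at hT
  linear_combination hT

lemma deriv_two_mul_of_symm (hC : IsCosineSol q C D) {h : ℝ} (hqh : ∀ t, q (2 * h - t) = q t) :
    D (2 * h) = 2 * C h * D h := by
  have hrefl : IsHillSol q (fun t => C (2 * h - t)) (fun t => -D (2 * h - t)) := by
    simpa only [hqh] using hC.toIsHillSol.comp_const_sub (2 * h)
  have hw := hrefl.wronskian_eq hC.toIsHillSol 0 h
  rw [sub_zero, hC.apply_zero, hC.deriv_zero, show 2 * h - h = h by ring] at hw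
  linear_combination hw

lemma unbounded_of_one_lt_abs (hC : IsCosineSol q C D) (hq : Continuous q)
    (hqe : Function.Even q) (hqT : Function.Periodic q T) (hT : 0 ≤ T) (hCT : 1 < |C T|) (M : ℝ) :
    ∃ t, 0 ≤ t ∧ M < |C t| := by
  have hdouble (n : ℕ) : C (2 ^ (n + 1) * T) = 2 * C (2 ^ n * T) ^ 2 - 1 := by
    rw [← hC.apply_two_mul_period hq hqe (by exact_mod_cast hqT.nat_mul (2 ^ n)), pow_succ']
    ring_nf
  have hgrow (n : ℕ) : |C T| ^ 2 ^ n ≤ |C (2 ^ n * T)| := by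
    induction n with
    | zero => simp
    | succ n ih =>
      have hone : 1 ≤ |C (2 ^ n * T)| := (one_le_pow₀ hCT.le).trans ih
      calc |C T| ^ 2 ^ (n + 1) = (|C T| ^ 2 ^ n) ^ 2 := by rw [← pow_mul, ← pow_succ]
        _ ≤ |C (2 ^ n * T)| ^ 2 := by gcongr
        _ ≤ 2 * C (2 ^ n * T) ^ 2 - 1 := by nlinarith [sq_abs (C (2 ^ n * T))]
        _ ≤ |C (2 ^ (n + 1) * T)| := by rw [hdouble]; exact le_abs_self _
  obtain ⟨n, hn⟩ := pow_unbounded_of_one_lt M hCT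
  exact ⟨2 ^ n * T, by positivity,
    (hn.trans_le (pow_le_pow_right₀ hCT.le n.lt_two_pow_self.le)).trans_le (hgrow n)⟩

end IsCosineSol

lemma exists_isCosineSol {q : ℝ → ℝ} (hq : Continuous q) : ∃ C D, IsCosineSol q C D := by
  obtain ⟨C, D, hCD, hC₀, hD₀⟩ := exists_isHillSol hq 1 0
  exact ⟨C, D, hCD, hC₀, hD₀⟩

/-! ### Nonlinear modes -/

/-- `W` solves the Duffing equation `W'' + lam W + W³ = 0`, read as a Hill equation whose
coefficient depends on `W`; `V` stands for `W'`. -/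
abbrev IsDuffingSol (lam : ℝ) (W V : ℝ → ℝ) : Prop :=
  IsHillSol (fun t => lam + W t ^ 2) W V

namespace IsDuffingSol

variable {lam : ℝ} {W V W₁ V₁ : ℝ → ℝ}

lemma neg (hW : IsDuffingSol lam W V) : IsDuffingSol lam (fun t => -W t) (fun t => -V t) where
  hasDerivAt t := (hW.hasDerivAt t).neg
  hasDerivAt_deriv t := (hW.hasDerivAt_deriv t).neg.congr_deriv (by ring)

lemma eq_of_eq_at (hW : IsDuffingSol lam W V) (hW₁ : IsDuffingSol lam W₁ V₁) {t₀ : ℝ}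
    (h : W t₀ = W₁ t₀) (h' : V t₀ = V₁ t₀) : W = W₁ := by
  have hc := hW.continuous
  have hc₁ := hW₁.continuous
  have hsub : IsHillSol (fun t => lam + (W t ^ 2 + W t * W₁ t + W₁ t ^ 2))
      (fun t => W t - W₁ t) (fun t => V t - V₁ t) :=
    { hasDerivAt t := (hW.hasDerivAt t).sub (hW₁.hasDerivAt t)
      hasDerivAt_deriv t :=
        ((hW.hasDerivAt_deriv t).sub (hW₁.hasDerivAt_deriv t)).congr_deriv (by ring) }
  have hzero := (hsub.eq_of_eq_at (isHillSol_zero _) (by fun_prop) (t₀ := t₀)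
    (sub_eq_zero.2 h) (sub_eq_zero.2 h')).1
  exact funext fun t => sub_eq_zero.1 (congrFun hzero t)

end IsDuffingSol

/-- `W` is the `lam`-nonlinear mode of amplitude `ζ`; `V` stands for `W'`. -/
structure IsNonlinearMode (lam ζ : ℝ) (W V : ℝ → ℝ) : Prop where
  isDuffingSol : IsDuffingSol lam W V
  apply_zero : W 0 = ζ
  deriv_zero : V 0 = 0

/-- The analogue of the Jacobi function dn for the mode `W`: the square root of the second factor in
the energy identity `V² = (ζ² - W²) (W² + ζ² + 2 lam) / 2`. -/
noncomputable def modeDn (lam ζ : ℝ) (W : ℝ → ℝ) (t : ℝ) : ℝ :=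
  √((W t ^ 2 + ζ ^ 2 + 2 * lam) / 2)

/-- The analogue of `ζ sn` for the mode `W`, itself the analogue of `ζ cn`. -/
noncomputable def modeSn (lam ζ : ℝ) (W V : ℝ → ℝ) (t : ℝ) : ℝ :=
  -V t / modeDn lam ζ W t

namespace IsNonlinearMode

variable {lam ζ : ℝ} {W V : ℝ → ℝ}

lemma even (hW : IsNonlinearMode lam ζ W V) : Function.Even W := fun t => by
  have hrefl : IsDuffingSol lam (fun t => W (0 - t)) (fun t => -V (0 - t)) :=
    hW.isDuffingSol.comp_const_sub 0
  simpa using congrFun (hrefl.eq_of_eq_at hW.isDuffingSol (t₀ := 0) (by simp)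
    (by simp [hW.deriv_zero])) t

lemma apply_two_mul_zero_sub (hW : IsNonlinearMode lam ζ W V) {h : ℝ} (hh : W h = 0) (t : ℝ) :
    W (2 * h - t) = -W t := by
  have hsub : 2 * h - h = h := by ring
  have hrefl : IsDuffingSol lam (fun t => W (2 * h - t)) (fun t => -V (2 * h - t)) :=
    hW.isDuffingSol.comp_const_sub (2 * h)
  exact congrFun (hrefl.eq_of_eq_at hW.isDuffingSol.neg (t₀ := h)
    (by simp [hsub, hh]) (by simp [hsub])) t

lemma energy (hW : IsNonlinearMode lam ζ W V) (t : ℝ) :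
    V t ^ 2 = (ζ ^ 2 - W t ^ 2) * (W t ^ 2 + ζ ^ 2 + 2 * lam) / 2 := by
  have hder (t : ℝ) : HasDerivAt (fun t => V t ^ 2 + lam * W t ^ 2 + W t ^ 4 / 2) 0 t :=
    ((((hW.isDuffingSol.hasDerivAt_deriv t).pow 2).add
      (((hW.isDuffingSol.hasDerivAt t).pow 2).const_mul lam)).add
      (((hW.isDuffingSol.hasDerivAt t).pow 4).div_const 2)).congr_deriv (by push_cast; ring)
  have hconst := eq_of_hasDerivAt_zero hder t 0
  simp only [hW.apply_zero, hW.deriv_zero] at hconst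
  linear_combination hconst

lemma modeDn_pos (hE : 0 < ζ ^ 2 + 2 * lam) (t : ℝ) : 0 < modeDn lam ζ W t :=
  sqrt_pos.2 (by nlinarith [sq_nonneg (W t)])

lemma modeDn_sq (hE : 0 < ζ ^ 2 + 2 * lam) (t : ℝ) :
    modeDn lam ζ W t ^ 2 = (W t ^ 2 + ζ ^ 2 + 2 * lam) / 2 :=
  sq_sqrt (by nlinarith [sq_nonneg (W t)])

lemma modeDn_mul_modeSn (hE : 0 < ζ ^ 2 + 2 * lam) (t : ℝ) :
    modeDn lam ζ W t * modeSn lam ζ W V t = -V t :=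
  mul_div_cancel₀ _ (modeDn_pos hE t).ne'

lemma modeSn_sq (hW : IsNonlinearMode lam ζ W V) (hE : 0 < ζ ^ 2 + 2 * lam) (t : ℝ) :
    modeSn lam ζ W V t ^ 2 = ζ ^ 2 - W t ^ 2 := by
  refine mul_left_cancel₀ (pow_ne_zero 2 (modeDn_pos (W := W) hE t).ne') ?_
  rw [← mul_pow, modeDn_mul_modeSn hE, modeDn_sq hE]
  linear_combination hW.energy t

lemma hasDerivAt_modeDn (hW : IsNonlinearMode lam ζ W V) (hE : 0 < ζ ^ 2 + 2 * lam) (t : ℝ) :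
    HasDerivAt (modeDn lam ζ W) (-(W t * modeSn lam ζ W V t) / 2) t := by
  have hdn := (modeDn_pos (W := W) hE t).ne'
  refine (((((hW.isDuffingSol.hasDerivAt t).pow 2).add_const (ζ ^ 2)).add_const
    (2 * lam)).div_const 2 |>.sqrt (sqrt_pos.1 (modeDn_pos hE t)).ne').congr_deriv ?_
  change _ / (2 * modeDn lam ζ W t) = _
  rw [modeSn]
  field_simp
  push_cast
  ring

lemma hasDerivAt_modeSn (hW : IsNonlinearMode lam ζ W V) (hE : 0 < ζ ^ 2 + 2 * lam) (t : ℝ) :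
    HasDerivAt (modeSn lam ζ W V) (modeDn lam ζ W t * W t) t := by
  have hdn := (modeDn_pos (W := W) hE t).ne'
  refine ((hW.isDuffingSol.hasDerivAt_deriv t).neg.div (hW.hasDerivAt_modeDn hE t)
    hdn).congr_deriv ((div_eq_iff (pow_ne_zero 2 hdn)).2 ?_)
  simp only [Pi.neg_apply]
  linear_combination W t * modeDn lam ζ W t * (hW.modeSn_sq hE t / 2 - modeDn_sq (W := W) hE t)
    - W t * modeSn lam ζ W V t / 2 * modeDn_mul_modeSn (W := W) (V := V) hE t

lemma isHillSol_modeSn (hW : IsNonlinearMode lam ζ W V) (hE : 0 < ζ ^ 2 + 2 * lam) :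
    IsHillSol (fun t => lam + ζ ^ 2 / 2 + W t ^ 2) (modeSn lam ζ W V)
      (fun t => modeDn lam ζ W t * W t) where
  hasDerivAt := hW.hasDerivAt_modeSn hE
  hasDerivAt_deriv t :=
    ((hW.hasDerivAt_modeDn hE t).mul (hW.isDuffingSol.hasDerivAt t)).congr_deriv (by
      linear_combination modeDn lam ζ W t * modeDn_mul_modeSn (W := W) (V := V) hE t
        - modeSn lam ζ W V t * modeDn_sq (W := W) hE t)

lemma exists_amplitude (hW : IsNonlinearMode lam ζ W V) (hE : 0 < ζ ^ 2 + 2 * lam) :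
    ∃ φ : ℝ → ℝ, φ 0 = 0 ∧ (∀ t, HasDerivAt φ (modeDn lam ζ W t) t) ∧
      ∀ t, W t = ζ * cos (φ t) ∧ modeSn lam ζ W V t = ζ * sin (φ t) := by
  have hcont : Continuous (modeDn lam ζ W) :=
    continuous_iff_continuousAt.2 fun t => (hW.hasDerivAt_modeDn hE t).continuousAt
  have hφ (t : ℝ) := (hcont.integral_hasStrictDerivAt 0 t).hasDerivAt
  refine ⟨fun t => ∫ s in (0 : ℝ)..t, modeDn lam ζ W s, intervalIntegral.integral_same, hφ, ?_⟩
  exact eq_mul_cos_and_eq_mul_sin_of_hasDerivAt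
    (fun t => (hW.isDuffingSol.hasDerivAt t).congr_deriv
      (by rw [modeDn_mul_modeSn hE, neg_neg]))
    (hW.hasDerivAt_modeSn hE) hφ hW.apply_zero (by simp [modeSn, hW.deriv_zero])
    intervalIntegral.integral_same

lemma exists_quarter_period (hW : IsNonlinearMode lam ζ W V) (hE : 0 < ζ ^ 2 + 2 * lam)
    (hζ : ζ ≠ 0) :
    ∃ h, 0 < h ∧ W h = 0 ∧ (∀ t ∈ Ioo 0 h, W t ≠ 0) ∧
      ∀ t ∈ Ioc 0 h, modeSn lam ζ W V t ≠ 0 := by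
  obtain ⟨φ, hφ₀, hφ, hcos_sin⟩ := hW.exists_amplitude hE
  have hmono : StrictMono φ := strictMono_of_hasDerivAt_pos hφ fun t => modeDn_pos hE t
  have hbound : ∀ t, √((ζ ^ 2 + 2 * lam) / 2) ≤ modeDn lam ζ W t := fun t =>
    sqrt_le_sqrt (by nlinarith [sq_nonneg (W t)])
  obtain ⟨h, hh, hφh⟩ := exists_pos_eq_of_le_deriv hφ hφ₀ (by positivity) hbound pi_div_two_pos
  have hcos (t : ℝ) : W t = ζ * cos (φ t) := (hcos_sin t).1
  refine ⟨h, hh, by simp [hcos, hφh], fun t ht => ?_, fun t ht => ?_⟩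
  · have hφt : φ t ∈ Ioo 0 (π / 2) := ⟨hφ₀ ▸ hmono ht.1, hφh ▸ hmono ht.2⟩
    rw [hcos]
    exact mul_ne_zero hζ (cos_pos_of_mem_Ioo ⟨by linarith [hφt.1, pi_pos], hφt.2⟩).ne'
  · have hφt : φ t ∈ Ioc 0 (π / 2) := ⟨hφ₀ ▸ hmono ht.1, hφh ▸ hmono.monotone ht.2⟩
    rw [(hcos_sin t).2]
    exact mul_ne_zero hζ (sin_pos_of_mem_Ioo ⟨hφt.1, by linarith [hφt.2, pi_pos]⟩).ne'

end IsNonlinearMode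

/-! ### The Hill equation of a nonlinear mode -/

namespace IsNonlinearMode

variable {lam ν ζ h : ℝ} {W V C D : ℝ → ℝ}

lemma hill_invariant (hW : IsNonlinearMode lam ζ W V)
    (hC : IsCosineSol (fun t => ν + W t ^ 2) C D) (t : ℝ) :
    (W t ^ 2 - 2 * (ν - lam)) * D t ^ 2 - 2 * W t * V t * (C t * D t)
        + ((ζ ^ 2 + 2 * ν) * (ζ ^ 2 - 2 * (ν - lam)) / 2 - ν * W t ^ 2 - W t ^ 4 / 2) * C t ^ 2
      = -((ν - lam) * (ζ ^ 2 + 2 * ν)) := by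
  have hV := hW.isDuffingSol.hasDerivAt
  have hV' := hW.isDuffingSol.hasDerivAt_deriv
  have hF (t : ℝ) : HasDerivAt (fun t => W t ^ 2 - 2 * (ν - lam)) (2 * W t * V t) t :=
    (((hV t).pow 2).sub_const _).congr_deriv (by push_cast; ring)
  have hF' (t : ℝ) : HasDerivAt (fun t => 2 * W t * V t)
      (2 * (((ζ ^ 2 + 2 * ν) * (ζ ^ 2 - 2 * (ν - lam)) / 2 - ν * W t ^ 2 - W t ^ 4 / 2)
        - (ν + W t ^ 2) * (W t ^ 2 - 2 * (ν - lam)))) t :=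
    (((hV t).const_mul 2).mul (hV' t)).congr_deriv (by linear_combination 2 * hW.energy t)
  have hG (t : ℝ) : HasDerivAt
      (fun t => (ζ ^ 2 + 2 * ν) * (ζ ^ 2 - 2 * (ν - lam)) / 2 - ν * W t ^ 2 - W t ^ 4 / 2)
      (-(ν + W t ^ 2) * (2 * W t * V t)) t :=
    (((((hV t).pow 2).const_mul ν).const_sub _).sub (((hV t).pow 4).div_const 2)).congr_deriv
      (by push_cast; ring)
  have hconst := hC.quadratic_form_eq hF hF' hG t 0
  rw [hW.apply_zero, hW.deriv_zero, hC.apply_zero, hC.deriv_zero] at hconst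
  linear_combination hconst

lemma cosineSol_ne_zero_of_first_zero (hW : IsNonlinearMode lam ζ W V) (hE : 0 < ζ ^ 2 + 2 * lam)
    (hlt : lam < ν) (hζ : 2 * (ν - lam) < ζ ^ 2) (hC : IsCosineSol (fun t => ν + W t ^ 2) C D)
    (hh : 0 < h) (hWh : W h = 0) (hW_ne : ∀ t ∈ Ioo 0 h, W t ≠ 0)
    (hsn_ne : ∀ t ∈ Ioc 0 h, modeSn lam ζ W V t ≠ 0) : C h ≠ 0 := by
  intro hCh
  have hCD (t : ℝ) (hCt : C t = 0) : D t ≠ 0 := by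
    intro hDt
    have hinv := hW.hill_invariant hC t
    have hpos : 0 < (ν - lam) * (ζ ^ 2 + 2 * ν) :=
      mul_pos (sub_pos.2 hlt) (by linarith)
    rw [hCt, hDt] at hinv
    linarith
  obtain ⟨s, hs, hCs⟩ := hC.exists_zero_of_wronskian_eq hW.isDuffingSol hh
    (fun t _ => by simpa using hlt.ne') hW_ne
    (by rw [hW.deriv_zero, hC.deriv_zero, hCh, hWh]; ring)
  obtain ⟨t, ht, hsn⟩ := hC.exists_zero_of_lt_coeff (hW.isHillSol_modeSn hE) hs.2
    (fun t _ => by linarith) hCs hCh hCD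
  exact hsn_ne t ⟨hs.1.trans_le ht.1, ht.2⟩ hsn

lemma deriv_cosineSol_ne_zero_of_zero (hW : IsNonlinearMode lam ζ W V)
    (hE : 0 < ζ ^ 2 + 2 * lam) (hlt : lam < ν) (hζ : 2 * (ν - lam) < ζ ^ 2)
    (hC : IsCosineSol (fun t => ν + W t ^ 2) C D) (hWh : W h = 0) : D h ≠ 0 := by
  intro hDh
  have hinv := hW.hill_invariant hC h
  have hpos : 0 < ζ ^ 2 + 2 * ν := by linarith
  have hδ := sub_pos.2 hlt
  have hgap := sub_pos.2 hζ
  have hleft : 0 ≤ (ζ ^ 2 + 2 * ν) * (ζ ^ 2 - 2 * (ν - lam)) / 2 * C h ^ 2 := by positivity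
  have hright : 0 < (ν - lam) * (ζ ^ 2 + 2 * ν) := by positivity
  rw [hWh, hDh] at hinv
  linarith

lemma one_lt_abs_cosineSol_two_mul (hW : IsNonlinearMode lam ζ W V)
    (hE : 0 < ζ ^ 2 + 2 * lam) (hlt : lam < ν) (hζ : 2 * (ν - lam) < ζ ^ 2)
    (hC : IsCosineSol (fun t => ν + W t ^ 2) C D) (hWh : W h = 0) (hCh : C h ≠ 0) :
    1 < |C (2 * h)| := by
  have hD : D (2 * h) ≠ 0 := by
    rw [hC.deriv_two_mul_of_symm fun t => by simp only [hW.apply_two_mul_zero_sub hWh, neg_sq]]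
    exact mul_ne_zero (mul_ne_zero two_ne_zero hCh)
      (hW.deriv_cosineSol_ne_zero_of_zero hE hlt hζ hC hWh)
  have hW2h : W (2 * h) = -ζ := by simpa [hW.apply_zero] using hW.apply_two_mul_zero_sub hWh 0
  have hV2h : V (2 * h) = 0 := by simpa [hW2h] using hW.energy (2 * h)
  have hinv : (ζ ^ 2 - 2 * (ν - lam)) * D (2 * h) ^ 2
      = (ν - lam) * (ζ ^ 2 + 2 * ν) * (C (2 * h) ^ 2 - 1) := by
    have hinv := hW.hill_invariant hC (2 * h)
    rw [hW2h, hV2h] at hinv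
    linear_combination hinv
  have hcoeff : 0 < (ν - lam) * (ζ ^ 2 + 2 * ν) := mul_pos (sub_pos.2 hlt) (by linarith)
  have hsq : 0 < C (2 * h) ^ 2 - 1 :=
    pos_of_mul_pos_right (hinv ▸ mul_pos (sub_pos.2 hζ) (by positivity)) hcoeff.le
  exact (one_lt_sq_iff_one_lt_abs _).1 (sub_pos.1 hsq)

lemma periodic_const_add_sq (hW : IsNonlinearMode lam ζ W V) (hWh : W h = 0) :
    Function.Periodic (fun t => ν + W t ^ 2) (2 * h) := fun t => by
  have hsymm := hW.apply_two_mul_zero_sub hWh (-t)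
  rw [sub_neg_eq_add, add_comm, hW.even t] at hsymm
  simp only [hsymm, neg_sq]

end IsNonlinearMode

theorem stmt6_general (lam ν ζ : ℝ) (hE : 0 < ζ ^ 2 + 2 * lam) (hlt : lam < ν)
    (hζ : 2 * (ν - lam) < ζ ^ 2)
    (W : ℝ → ℝ) (hW1 : Differentiable ℝ W) (hW2 : Differentiable ℝ (deriv W))
    (hode : ∀ t, deriv (deriv W) t + lam * W t + W t ^ 3 = 0)
    (hW0 : W 0 = ζ) (hW0' : deriv W 0 = 0) :
    ∃ ξ : ℝ → ℝ, Differentiable ℝ ξ ∧ Differentiable ℝ (deriv ξ) ∧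
      (∀ t, deriv (deriv ξ) t + (ν + W t ^ 2) * ξ t = 0) ∧
      ∀ M : ℝ, ∃ t, 0 ≤ t ∧ M < |ξ t| := by
  have hW : IsNonlinearMode lam ζ W (deriv W) :=
    ⟨⟨fun t => (hW1 t).hasDerivAt,
      fun t => (hW2 t).hasDerivAt.congr_deriv (by linear_combination hode t)⟩, hW0, hW0'⟩
  have hζ0 : ζ ≠ 0 := pow_ne_zero_iff two_ne_zero |>.1 (by linarith)
  obtain ⟨h, hh, hWh, hW_ne, hsn_ne⟩ := hW.exists_quarter_period hE hζ0
  have hWc := hW.isDuffingSol.continuous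
  have hq : Continuous fun t => ν + W t ^ 2 := by fun_prop
  obtain ⟨C, D, hC⟩ := exists_isCosineSol hq
  have hCh := hW.cosineSol_ne_zero_of_first_zero hE hlt hζ hC hh hWh hW_ne hsn_ne
  have hD : deriv C = D := funext fun t => (hC.hasDerivAt t).deriv
  refine ⟨C, fun t => (hC.hasDerivAt t).differentiableAt,
    fun t => hD ▸ (hC.hasDerivAt_deriv t).differentiableAt, fun t => ?_, ?_⟩
  · rw [hD, (hC.hasDerivAt_deriv t).deriv]
    ring
  · exact hC.unbounded_of_one_lt_abs hq (fun t => by simp only [hW.even t])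
      (hW.periodic_const_add_sq hWh) (by positivity)
      (hW.one_lt_abs_cosineSol_two_mul hE hlt hζ hC hWh hCh)

/-- Linear instability of the λ-nonlinear mode with respect to the
ν-nonlinear mode: if `W` solves the Duffing problem `W'' + λW + W³ = 0`,
`W(0) = ζ`, `W'(0) = 0`, with `λ < ν` and `ζ > √(2(ν - λ))`, then the Hill
equation `ξ'' + (ν + W²)ξ = 0` has a solution unbounded on `[0, ∞)`. -/
theorem stmt6 (lam ν ζ : ℝ) (hlam : 0 < lam) (hν : 0 < ν) (hlt : lam < ν)
    (hζ : Real.sqrt (2 * (ν - lam)) < ζ)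
    (W : ℝ → ℝ) (hW1 : Differentiable ℝ W) (hW2 : Differentiable ℝ (deriv W))
    (hode : ∀ t, deriv (deriv W) t + lam * W t + W t ^ 3 = 0)
    (hW0 : W 0 = ζ) (hW0' : deriv W 0 = 0) :
    ∃ ξ : ℝ → ℝ, Differentiable ℝ ξ ∧ Differentiable ℝ (deriv ξ) ∧
      (∀ t, 0 ≤ t → deriv (deriv ξ) t + (ν + W t ^ 2) * ξ t = 0) ∧
      ∀ M : ℝ, ∃ t, 0 ≤ t ∧ M < |ξ t| := by
  have hζ2 : 2 * (ν - lam) < ζ ^ 2 := (sqrt_lt' ((sqrt_nonneg _).trans_lt hζ)).1 hζ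
  obtain ⟨ξ, hξ, hξ', hHill, hunb⟩ :=
    stmt6_general lam ν ζ (by linarith) hlt hζ2 W hW1 hW2 hode hW0 hW0'
  exact ⟨ξ, hξ, hξ', fun t _ => hHill t, hunb⟩
end

section
/- Let n ∈ ℕ, let λ : Fin n → ℝ, and let c : ℝ → (Fin n → ℝ) be such that each component c_j is twice differentiable and satisfies, for all t ∈ ℝ and all j, c_j''(t) + λ_j c_j(t) + (Σ_{k} c_k(t)²) c_j(t) = 0. Then the energy E(t) := (1/2) Σ_j c_j'(t)² + (1/2) Σ_j λ_j c_j(t)² + (1/4) (Σ_j c_j(t)²)² is constant in t. -/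
open Real MeasureTheory Set Filter

/- Pairing the equation `u'' + A u + ‖u‖² u = 0` with the velocity `u'` in the inner product gives
the derivative of the energy: symmetry of `A` makes `⟪u', A u⟫` half the derivative of `⟪A u, u⟫`,
and `‖u‖² ⟪u', u⟫` is a quarter of the derivative of `‖u‖⁴`. In the Galerkin system `A` is the
diagonal operator with entries `λ_j` on Euclidean space. -/

open scoped RealInnerProductSpace

section Beam

variable {E : Type*} [NormedAddCommGroup E] [InnerProductSpace ℝ E]

/-- The total energy at position `x` and velocity `v` of the abstract beam equation
`u'' + A u + ‖u‖² u = 0`: the sum of its kinetic, bending and nonlinear parts. The bounded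
operator `A` stands for a Galerkin truncation of `p⁻¹ ∂ₓ⁴`, and `E` for the corresponding subspace
of `L²_p`. -/
noncomputable def beamEnergy (A : E →L[ℝ] E) (x v : E) : ℝ :=
  (1/2) * ‖v‖ ^ 2 + (1/2) * ⟪A x, x⟫ + (1/4) * (‖x‖ ^ 2) ^ 2

theorem hasDerivAt_inner_map_self {A : E →L[ℝ] E} (hA : (A : E →ₗ[ℝ] E).IsSymmetric)
    {u : ℝ → E} {u' : E} {t : ℝ} (hu : HasDerivAt u u' t) :
    HasDerivAt (fun s => ⟪A (u s), u s⟫) (2 * ⟪u', A (u t)⟫) t := by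
  refine ((A.hasFDerivAt.comp_hasDerivAt t hu).inner ℝ hu).congr_deriv ?_
  have hsymm : ⟪A u', u t⟫ = ⟪u', A (u t)⟫ := hA u' (u t)
  simp only [Function.comp_apply]
  rw [hsymm, real_inner_comm]
  ring

theorem hasDerivAt_beamEnergy {A : E →L[ℝ] E} (hA : (A : E →ₗ[ℝ] E).IsSymmetric)
    {u v : ℝ → E} {a : E} {t : ℝ} (hu : HasDerivAt u (v t) t) (hv : HasDerivAt v a t) :
    HasDerivAt (fun s => beamEnergy A (u s) (v s)) ⟪v t, a + A (u t) + ‖u t‖ ^ 2 • u t⟫ t := by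
  have hkinetic := hv.norm_sq.const_mul (1/2)
  have hbending := (hasDerivAt_inner_map_self hA hu).const_mul (1/2)
  have hnonlinear := (hu.norm_sq.fun_pow 2).const_mul (1/4)
  refine ((hkinetic.add hbending).add hnonlinear).congr_deriv ?_
  rw [inner_add_right, inner_add_right, real_inner_smul_right, real_inner_comm (v t) (u t)]
  push_cast
  ring

theorem stmt10_general {A : E →L[ℝ] E} (hA : (A : E →ₗ[ℝ] E).IsSymmetric) {u u' u'' : ℝ → E}
    (hu : ∀ t, HasDerivAt u (u' t) t) (hu' : ∀ t, HasDerivAt u' (u'' t) t)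
    (hode : ∀ t, u'' t + A (u t) + ‖u t‖ ^ 2 • u t = 0) (t s : ℝ) :
    beamEnergy A (u t) (u' t) = beamEnergy A (u s) (u' s) := by
  have henergy (r : ℝ) : HasDerivAt (fun r => beamEnergy A (u r) (u' r)) 0 r := by
    simpa only [hode, inner_zero_right] using hasDerivAt_beamEnergy hA (hu r) (hu' r)
  exact is_const_of_deriv_eq_zero (fun r => (henergy r).differentiableAt)
    (fun r => (henergy r).deriv) t s

end Beam

section Galerkin

open WithLp

theorem hasDerivAt_toLp {𝕜 ι : Type*} {F : ι → Type*} [NontriviallyNormedField 𝕜] [Fintype ι]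
    [∀ j, NormedAddCommGroup (F j)] [∀ j, NormedSpace 𝕜 (F j)] (p : ENNReal) [Fact (1 ≤ p)]
    {f : 𝕜 → ∀ j, F j} {f' : ∀ j, F j} {t : 𝕜} (hf : ∀ j, HasDerivAt (fun s => f s j) (f' j) t) :
    HasDerivAt (F := PiLp p F) (fun s => toLp p (f s)) (toLp p f') t :=
  (PiLp.hasFDerivAt_toLp p (f t)).comp_hasDerivAt t (hasDerivAt_pi.2 hf)

variable {ι : Type*} [Fintype ι] [DecidableEq ι]

/-- The operator on Euclidean space multiplying the `j`-th coordinate by `lam j`. It represents the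
bending operator in the eigenbasis `e_j`. -/
noncomputable def diagonalCLM (lam : ι → ℝ) : EuclideanSpace ℝ ι →L[ℝ] EuclideanSpace ℝ ι :=
  Matrix.toEuclideanCLM (𝕜 := ℝ) (Matrix.diagonal lam)

theorem diagonalCLM_toLp_apply (lam x : ι → ℝ) (j : ι) :
    diagonalCLM lam (toLp 2 x) j = lam j * x j :=
  Matrix.mulVec_diagonal lam x j

theorem isSymmetric_diagonalCLM (lam : ι → ℝ) :
    (diagonalCLM lam : EuclideanSpace ℝ ι →ₗ[ℝ] EuclideanSpace ℝ ι).IsSymmetric :=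
  Matrix.isSymmetric_toEuclideanLin_iff.2 (Matrix.isHermitian_diagonal lam)

theorem beamEnergy_diagonalCLM_toLp (lam x v : ι → ℝ) :
    beamEnergy (diagonalCLM lam) (toLp 2 x) (toLp 2 v) =
      (1/2) * (∑ j, v j ^ 2) + (1/2) * (∑ j, lam j * x j ^ 2) + (1/4) * (∑ j, x j ^ 2) ^ 2 := by
  have hbending : ⟪diagonalCLM lam (toLp 2 x), toLp 2 x⟫ = ∑ j, lam j * x j ^ 2 := by
    rw [PiLp.inner_apply]
    refine Finset.sum_congr rfl fun j _ => ?_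
    rw [diagonalCLM_toLp_apply, RCLike.inner_apply, conj_trivial]
    ring
  rw [beamEnergy, hbending, EuclideanSpace.real_norm_sq_eq, EuclideanSpace.real_norm_sq_eq]

theorem toLp_add_diagonalCLM_add_norm_sq_smul_eq_zero {lam x a : ι → ℝ}
    (h : ∀ j, a j + lam j * x j + (∑ k, x k ^ 2) * x j = 0) :
    toLp 2 a + diagonalCLM lam (toLp 2 x) + ‖toLp 2 x‖ ^ 2 • toLp 2 x = 0 := by
  ext j
  simpa only [EuclideanSpace.real_norm_sq_eq, PiLp.add_apply, PiLp.smul_apply, smul_eq_mul,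
    diagonalCLM_toLp_apply, PiLp.zero_apply] using h j

end Galerkin

/-- Conservation of energy for the Galerkin system
`c_j'' + λ_j c_j + (Σ_k c_k²) c_j = 0`: the total energy
`(1/2) Σ_j (c_j')² + (1/2) Σ_j λ_j c_j² + (1/4)(Σ_j c_j²)²` is constant. -/
theorem stmt10 (n : ℕ) (lam : Fin n → ℝ) (c c' c'' : ℝ → Fin n → ℝ)
    (hc : ∀ j, ∀ t : ℝ, HasDerivAt (fun s => c s j) (c' t j) t)
    (hc' : ∀ j, ∀ t : ℝ, HasDerivAt (fun s => c' s j) (c'' t j) t)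
    (hode : ∀ t : ℝ, ∀ j, c'' t j + lam j * c t j + (∑ k, (c t k) ^ 2) * c t j = 0) :
    ∀ t s : ℝ,
      (1/2) * (∑ j, (c' t j) ^ 2) + (1/2) * (∑ j, lam j * (c t j) ^ 2)
        + (1/4) * (∑ j, (c t j) ^ 2) ^ 2
      = (1/2) * (∑ j, (c' s j) ^ 2) + (1/2) * (∑ j, lam j * (c s j) ^ 2)
        + (1/4) * (∑ j, (c s j) ^ 2) ^ 2 := by
  simpa only [beamEnergy_diagonalCLM_toLp] using
    stmt10_general (isSymmetric_diagonalCLM lam) (fun t => hasDerivAt_toLp 2 (hc · t))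
      (fun t => hasDerivAt_toLp 2 (hc' · t))
      fun t => toLp_add_diagonalCLM_add_norm_sq_smul_eq_zero (hode t)
end

section
/- Let n ∈ ℕ, let λ : Fin n → ℝ with λ_j > 0 for all j, and let g, h : Fin n → ℝ. Then there exists c : ℝ → (Fin n → ℝ), with every component twice continuously differentiable on [0, ∞), such that c_j''(t) + λ_j c_j(t) + (Σ_{k} c_k(t)²) c_j(t) = 0 for all t ≥ 0 and all j, with c_j(0) = g_j and c_j'(0) = h_j for every j. Moreover every such solution is bounded on [0, ∞), with (1/2) Σ_j c_j'(t)² + (1/2) Σ_j λ_j c_j(t)² + (1/4)(Σ_j c_j(t)²)² = (1/2) Σ_j h_j² + (1/2) Σ_j λ_j g_j² + (1/4)(Σ_j g_j²)² for all t ≥ 0. -/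
open Real MeasureTheory Set Filter

open scoped Manifold

/-!
Multiplying a vector field by a scalar function only reparametrizes time, so it keeps every first
integral. If a level set of a first integral of a `C¹` field is bounded, cut the field off outside
a ball containing that level set: the new field has compact support, hence global integral curves,
and those starting on the level set stay where nothing was cut off. The Galerkin system has its
energy as such a first integral, whose level sets are bounded because the quartic term dominates
the quadratic potential.
-/

section FirstIntegral

variable {E F : Type*} [NormedAddCommGroup E] [NormedSpace ℝ E] [NormedAddCommGroup F]
  [NormedSpace ℝ F] {V : E → F} {v : E → E}

theorem exists_isIntegralCurve_of_hasCompactSupport [CompleteSpace E] (hv : ContDiff ℝ 1 v)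
    (hsupp : HasCompactSupport v) (x₀ : E) :
    ∃ γ : ℝ → E, γ 0 = x₀ ∧ IsIntegralCurve γ fun _ ↦ v := by
  obtain ⟨K, hK⟩ := hv.lipschitzWith_of_hasCompactSupport hsupp one_ne_zero
  obtain ⟨C, hC⟩ := hsupp.exists_bound_of_continuous hv.continuous
  lift C to NNReal using (norm_nonneg _).trans (hC x₀)
  have hunit (x : E) : ∃ γ : ℝ → E, γ 0 = x ∧
      IsMIntegralCurveOn (I := 𝓘(ℝ, E)) γ v (Ioo (-1) 1) := by
    have hPL : IsPicardLindelof (fun _ ↦ v) (⟨0, by simp⟩ : Icc (-1 : ℝ) 1) x C 0 C K :=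
      .of_time_independent (fun y _ ↦ hC y) hK.lipschitzOnWith (by simp)
    obtain ⟨γ, hγ₀, hγ⟩ := hPL.exists_eq_forall_mem_Icc_hasDerivWithinAt₀
    refine ⟨γ, hγ₀, fun t ht ↦ ?_⟩
    have hγt := (hγ t (Ioo_subset_Icc_self ht)).mono Ioo_subset_Icc_self
    exact hγt.hasFDerivWithinAt.hasMFDerivWithinAt
  obtain ⟨γ, hγ₀, hγ⟩ := exists_isMIntegralCurve_of_isMIntegralCurveOn (I := 𝓘(ℝ, E))
    (contMDiff_vectorSpace_iff_contDiff.2 hv) one_pos hunit x₀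
  exact ⟨γ, hγ₀, fun t ↦ hasDerivAt_iff_hasFDerivAt.2 (hγ t).hasFDerivAt⟩

/-- `V` is a first integral of the autonomous field `v`: a differentiable function whose derivative
along `v` vanishes, so that it is constant on integral curves. -/
structure IsFirstIntegral (V : E → F) (v : E → E) : Prop where
  differentiable : Differentiable ℝ V
  fderiv_apply_eq_zero : ∀ x, fderiv ℝ V x (v x) = 0

namespace IsFirstIntegral

theorem smul (hV : IsFirstIntegral V v) (χ : E → ℝ) : IsFirstIntegral V fun x ↦ χ x • v x where
  differentiable := hV.differentiable
  fderiv_apply_eq_zero x := by rw [map_smul, hV.fderiv_apply_eq_zero, smul_zero]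

theorem apply_eq_of_isIntegralCurveOn (hV : IsFirstIntegral V v) {γ : ℝ → E} {s : Set ℝ}
    (hs : Convex ℝ s) (hγ : IsIntegralCurveOn γ (fun _ ↦ v) s) {t₀ t : ℝ} (ht₀ : t₀ ∈ s)
    (ht : t ∈ s) : V (γ t) = V (γ t₀) := by
  have hderiv : ∀ r ∈ s, HasDerivWithinAt (V ∘ γ) 0 s r := fun r hr ↦ by
    rw [← hV.fderiv_apply_eq_zero (γ r)]
    exact (hV.differentiable (γ r)).hasFDerivAt.comp_hasDerivWithinAt r (hγ r hr)
  have hle := hs.norm_image_sub_le_of_norm_hasDerivWithin_le hderiv (fun _ _ ↦ norm_zero.le) ht₀ ht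
  rwa [zero_mul, norm_le_zero_iff, sub_eq_zero] at hle

theorem exists_isIntegralCurve [FiniteDimensional ℝ E] (hV : IsFirstIntegral V v)
    (hv : ContDiff ℝ 1 v) {x₀ : E} (hbdd : Bornology.IsBounded {x | V x = V x₀}) :
    ∃ γ : ℝ → E, γ 0 = x₀ ∧ IsIntegralCurve γ fun _ ↦ v := by
  have := FiniteDimensional.complete ℝ E
  obtain ⟨R, hR, hsub⟩ := hbdd.subset_closedBall_lt 0 0
  let χ : ContDiffBump (0 : E) := ⟨R, R + 1, hR, lt_add_one R⟩
  obtain ⟨γ, hγ₀, hγ⟩ := exists_isIntegralCurve_of_hasCompactSupport (χ.contDiff.smul hv)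
    χ.hasCompactSupport.smul_right x₀
  refine ⟨γ, hγ₀, fun t ↦ ?_⟩
  have hlevel : V (γ t) = V x₀ := by
    rw [← hγ₀]
    exact (hV.smul χ).apply_eq_of_isIntegralCurveOn convex_univ (hγ.isIntegralCurveOn _)
      (mem_univ 0) (mem_univ t)
  have hχ : χ (γ t) = 1 := χ.one_of_mem_closedBall (hsub hlevel)
  simpa only [Pi.smul_apply', hχ, one_smul] using hγ t

end IsFirstIntegral

end FirstIntegral

section Galerkin

variable {ι : Type*} [Fintype ι] (lam : ι → ℝ)

/-- The vector field on the phase space of pairs (position, velocity) whose integral curves are the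
solutions of the Galerkin system. -/
def galerkinField (x : (ι → ℝ) × (ι → ℝ)) : (ι → ℝ) × (ι → ℝ) :=
  (x.2, fun j ↦ -(lam j * x.1 j + (∑ k, x.1 k ^ 2) * x.1 j))

/-- The energy of the Galerkin system at the phase point (position, velocity). -/
noncomputable def galerkinEnergy (x : (ι → ℝ) × (ι → ℝ)) : ℝ :=
  (1/2) * (∑ j, x.2 j ^ 2) + (1/2) * (∑ j, lam j * x.1 j ^ 2) + (1/4) * (∑ j, x.1 j ^ 2) ^ 2

theorem contDiff_galerkinField : ContDiff ℝ 1 (galerkinField lam) := by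
  unfold galerkinField
  fun_prop

theorem isIntegralCurveOn_galerkinField_iff {lam : ι → ℝ} {c c' : ℝ → ι → ℝ} {s : Set ℝ} :
    IsIntegralCurveOn (fun t ↦ (c t, c' t)) (fun _ ↦ galerkinField lam) s ↔
      (∀ j, ∀ t ∈ s, HasDerivWithinAt (fun r ↦ c r j) (c' t j) s t) ∧
      ∀ j, ∀ t ∈ s, HasDerivWithinAt (fun r ↦ c' r j)
        (-(lam j * c t j + (∑ k, c t k ^ 2) * c t j)) s t := by
  refine ⟨fun h ↦ ⟨fun j t ht ↦ hasDerivWithinAt_pi.1 (h t ht).fst j,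
    fun j t ht ↦ hasDerivWithinAt_pi.1 (h t ht).snd j⟩, fun h t ht ↦ ?_⟩
  exact (hasDerivWithinAt_pi.2 fun j ↦ h.1 j t ht).prodMk (hasDerivWithinAt_pi.2 fun j ↦ h.2 j t ht)

theorem differentiable_galerkinEnergy : Differentiable ℝ (galerkinEnergy lam) := by
  unfold galerkinEnergy
  fun_prop

theorem fderiv_galerkinEnergy_apply (x y : (ι → ℝ) × (ι → ℝ)) :
    fderiv ℝ (galerkinEnergy lam) x y =
      ∑ j, (x.2 j * y.2 j + (lam j * x.1 j + (∑ k, x.1 k ^ 2) * x.1 j) * y.1 j) := by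
  have hpos (j : ι) : HasFDerivAt (fun z : (ι → ℝ) × (ι → ℝ) ↦ z.1 j ^ 2) _ x :=
    ((hasFDerivAt_apply (𝕜 := ℝ) j x.1).comp x hasFDerivAt_fst).pow 2
  have hvel (j : ι) : HasFDerivAt (fun z : (ι → ℝ) × (ι → ℝ) ↦ z.2 j ^ 2) _ x :=
    ((hasFDerivAt_apply (𝕜 := ℝ) j x.2).comp x hasFDerivAt_snd).pow 2
  have hkinetic := HasFDerivAt.fun_sum (u := Finset.univ) fun j _ ↦ hvel j
  have hlinear := HasFDerivAt.fun_sum (u := Finset.univ) fun j _ ↦ (hpos j).const_mul (lam j)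
  have hsumSq := HasFDerivAt.fun_sum (u := Finset.univ) fun j _ ↦ hpos j
  have henergy : HasFDerivAt (galerkinEnergy lam) _ x :=
    ((hkinetic.const_mul (1/2)).add (hlinear.const_mul (1/2))).add ((hsumSq.pow 2).const_mul (1/4))
  rw [henergy.fderiv]
  set S := ∑ k, x.1 k ^ 2
  simp only [one_div, Function.comp_apply, Nat.add_one_sub_one, pow_one, nsmul_eq_mul,
    Nat.cast_ofNat, add_apply, smul_apply, sum_apply, ContinuousLinearMap.comp_apply,
    ContinuousLinearMap.coe_fst', ContinuousLinearMap.coe_snd', ContinuousLinearMap.proj_apply,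
    smul_eq_mul, Finset.mul_sum, ← Finset.sum_add_distrib]
  refine Finset.sum_congr rfl fun j _ ↦ ?_
  ring

theorem isFirstIntegral_galerkinEnergy :
    IsFirstIntegral (galerkinEnergy lam) (galerkinField lam) where
  differentiable := differentiable_galerkinEnergy lam
  fderiv_apply_eq_zero x := by
    rw [fderiv_galerkinEnergy_apply]
    refine Finset.sum_eq_zero fun j _ ↦ ?_
    simp only [galerkinField]
    ring

theorem sum_sq_add_sum_sq_le_galerkinEnergy {lam : ι → ℝ} {m : ℝ} (hm : ∀ j, m ≤ lam j)
    (x : (ι → ℝ) × (ι → ℝ)) :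
    ∑ j, x.1 j ^ 2 + ∑ j, x.2 j ^ 2 ≤ 2 * galerkinEnergy lam x + (1 - m) ^ 2 / 2 := by
  have hpot : m * ∑ j, x.1 j ^ 2 ≤ ∑ j, lam j * x.1 j ^ 2 := by
    rw [Finset.mul_sum]
    gcongr with j
    exact hm j
  unfold galerkinEnergy
  linarith [sq_nonneg (∑ j, x.1 j ^ 2 - (1 - m))]

theorem norm_le_sqrt_sum_sq_add_sum_sq (x : (ι → ℝ) × (ι → ℝ)) :
    ‖x‖ ≤ √(∑ j, x.1 j ^ 2 + ∑ j, x.2 j ^ 2) := by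
  have hsum (y : ι → ℝ) : 0 ≤ ∑ j, y j ^ 2 := by positivity
  have hle (y : ι → ℝ) (j : ι) : y j ^ 2 ≤ ∑ j, y j ^ 2 :=
    Finset.single_le_sum (f := fun j ↦ y j ^ 2) (fun j _ ↦ sq_nonneg (y j)) (Finset.mem_univ j)
  rw [norm_prod_le_iff, pi_norm_le_iff_of_nonneg (sqrt_nonneg _),
    pi_norm_le_iff_of_nonneg (sqrt_nonneg _)]
  exact ⟨fun j ↦ abs_le_sqrt ((hle x.1 j).trans (le_add_of_nonneg_right (hsum x.2))),
    fun j ↦ abs_le_sqrt ((hle x.2 j).trans (le_add_of_nonneg_left (hsum x.1)))⟩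

theorem exists_norm_le_of_galerkinEnergy_le (e : ℝ) :
    ∃ M, ∀ x, galerkinEnergy lam x ≤ e → ‖x‖ ≤ M := by
  obtain ⟨m, hm⟩ := Finite.bddBelow_range lam
  refine ⟨√(2 * e + (1 - m) ^ 2 / 2), fun x hx ↦ ?_⟩
  refine (norm_le_sqrt_sum_sq_add_sum_sq x).trans (sqrt_le_sqrt ?_)
  linarith [sum_sq_add_sum_sq_le_galerkinEnergy (fun j ↦ hm (mem_range_self j)) x]

theorem exists_isIntegralCurve_galerkinField (x₀ : (ι → ℝ) × (ι → ℝ)) :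
    ∃ γ, γ 0 = x₀ ∧ IsIntegralCurve γ fun _ ↦ galerkinField lam := by
  obtain ⟨M, hM⟩ := exists_norm_le_of_galerkinEnergy_le lam (galerkinEnergy lam x₀)
  exact (isFirstIntegral_galerkinEnergy lam).exists_isIntegralCurve (contDiff_galerkinField lam)
    (isBounded_iff_forall_norm_le.2 ⟨M, fun x hx ↦ hM x (le_of_eq hx)⟩)

theorem stmt11_general {s : Set ℝ} (hs : Convex ℝ s) (h₀ : 0 ∈ s) (g h : ι → ℝ) :
    (∃ c c' c'' : ℝ → ι → ℝ,
      (∀ j, ∀ t ∈ s, HasDerivWithinAt (fun r ↦ c r j) (c' t j) s t) ∧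
      (∀ j, ∀ t ∈ s, HasDerivWithinAt (fun r ↦ c' r j) (c'' t j) s t) ∧
      (∀ j, ContinuousOn (fun t ↦ c'' t j) s) ∧
      (∀ t ∈ s, ∀ j, c'' t j + lam j * c t j + (∑ k, c t k ^ 2) * c t j = 0) ∧
      (∀ j, c 0 j = g j) ∧ (∀ j, c' 0 j = h j)) ∧
    ∀ c c' c'' : ℝ → ι → ℝ,
      (∀ j, ∀ t ∈ s, HasDerivWithinAt (fun r ↦ c r j) (c' t j) s t) →
      (∀ j, ∀ t ∈ s, HasDerivWithinAt (fun r ↦ c' r j) (c'' t j) s t) →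
      (∀ t ∈ s, ∀ j, c'' t j + lam j * c t j + (∑ k, c t k ^ 2) * c t j = 0) →
      (∀ j, c 0 j = g j) → (∀ j, c' 0 j = h j) →
      (∃ M : ℝ, ∀ t ∈ s, ∀ j, |c t j| ≤ M) ∧
      ∀ t ∈ s, galerkinEnergy lam (c t, c' t) = galerkinEnergy lam (g, h) := by
  refine ⟨?_, fun c c' c'' hc hc' hode hg hh ↦ ?_⟩
  · obtain ⟨γ, hγ₀, hγ⟩ := exists_isIntegralCurve_galerkinField lam (g, h)
    obtain ⟨hpos, hvel⟩ := isIntegralCurveOn_galerkinField_iff.1 (hγ.isIntegralCurveOn s)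
    have hcont : Continuous fun t ↦ (galerkinField lam (γ t)).2 :=
      ((contDiff_galerkinField lam).continuous.comp hγ.continuous).snd
    refine ⟨fun t ↦ (γ t).1, fun t ↦ (γ t).2, fun t ↦ (galerkinField lam (γ t)).2, hpos, hvel,
      fun j ↦ ((continuous_apply j).comp hcont).continuousOn, fun t _ j ↦ ?_,
      fun j ↦ by simp only [hγ₀], fun j ↦ by simp only [hγ₀]⟩
    simp only [galerkinField]
    ring
  · have hcurve : IsIntegralCurveOn (fun t ↦ (c t, c' t)) (fun _ ↦ galerkinField lam) s :=
      isIntegralCurveOn_galerkinField_iff.2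
        ⟨hc, fun j t ht ↦ (hc' j t ht).congr_deriv (by linarith [hode t ht j])⟩
    have henergy : ∀ t ∈ s, galerkinEnergy lam (c t, c' t) = galerkinEnergy lam (g, h) := by
      rw [← funext hg, ← funext hh]
      exact fun t ↦
        (isFirstIntegral_galerkinEnergy lam).apply_eq_of_isIntegralCurveOn hs hcurve h₀
    obtain ⟨M, hM⟩ := exists_norm_le_of_galerkinEnergy_le lam (galerkinEnergy lam (g, h))
    refine ⟨⟨M, fun t ht j ↦ ?_⟩, henergy⟩
    calc |c t j| ≤ ‖c t‖ := norm_le_pi_norm (c t) j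
      _ ≤ ‖(c t, c' t)‖ := norm_fst_le (c t, c' t)
      _ ≤ M := hM _ (henergy t ht).le

end Galerkin

/-- Global existence and boundedness for the Galerkin system
`c_j'' + λ_j c_j + (Σ_k c_k²) c_j = 0` with initial data `c(0) = g`,
`c'(0) = h`: a solution exists on `[0, ∞)`, and every solution is bounded,
with conserved energy. -/
theorem stmt11 (n : ℕ) (lam : Fin n → ℝ) (hlam : ∀ j, 0 < lam j)
    (g h : Fin n → ℝ) :
    (∃ c c' c'' : ℝ → Fin n → ℝ,
      (∀ j, ∀ t ∈ Set.Ici (0 : ℝ),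
        HasDerivWithinAt (fun s => c s j) (c' t j) (Set.Ici 0) t) ∧
      (∀ j, ∀ t ∈ Set.Ici (0 : ℝ),
        HasDerivWithinAt (fun s => c' s j) (c'' t j) (Set.Ici 0) t) ∧
      (∀ j, ContinuousOn (fun t => c'' t j) (Set.Ici 0)) ∧
      (∀ t : ℝ, 0 ≤ t → ∀ j,
        c'' t j + lam j * c t j + (∑ k, (c t k) ^ 2) * c t j = 0) ∧
      (∀ j, c 0 j = g j) ∧ (∀ j, c' 0 j = h j)) ∧
    (∀ c c' c'' : ℝ → Fin n → ℝ,
      (∀ j, ∀ t ∈ Set.Ici (0 : ℝ),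
        HasDerivWithinAt (fun s => c s j) (c' t j) (Set.Ici 0) t) →
      (∀ j, ∀ t ∈ Set.Ici (0 : ℝ),
        HasDerivWithinAt (fun s => c' s j) (c'' t j) (Set.Ici 0) t) →
      (∀ j, ContinuousOn (fun t => c'' t j) (Set.Ici 0)) →
      (∀ t : ℝ, 0 ≤ t → ∀ j,
        c'' t j + lam j * c t j + (∑ k, (c t k) ^ 2) * c t j = 0) →
      (∀ j, c 0 j = g j) → (∀ j, c' 0 j = h j) →
      (∃ M : ℝ, ∀ t : ℝ, 0 ≤ t → ∀ j, |c t j| ≤ M) ∧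
      ∀ t : ℝ, 0 ≤ t →
        (1/2) * (∑ j, (c' t j) ^ 2) + (1/2) * (∑ j, lam j * (c t j) ^ 2)
          + (1/4) * (∑ j, (c t j) ^ 2) ^ 2
        = (1/2) * (∑ j, (h j) ^ 2) + (1/2) * (∑ j, lam j * (g j) ^ 2)
          + (1/4) * (∑ j, (g j) ^ 2) ^ 2) := by
  obtain ⟨hexists, hall⟩ := stmt11_general lam (convex_Ici 0) self_mem_Ici g h
  exact ⟨hexists, fun c c' c'' hc hc' _ ↦ hall c c' c'' hc hc'⟩
end

section
/- Let λ > 0 and ζ > 0, and let W : ℝ → ℝ be twice differentiable with W''(t) + λ W(t) + W(t)³ = 0 for all t, W(0) = ζ and W'(0) = 0. Set b = √(λ + ζ²), γ = ζ/(b√2) and T = (4/b) ∫₀^{π/2} dφ/√(1 − γ² sin²φ). Then W is T-periodic: W(t + T) = W(t) for all t ∈ ℝ. -/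
open Real MeasureTheory Set Filter

/-!
As soon as `λ > -ζ²/2`, that is `γ² < 1`, the solution is explicit: `W t = ζ cn(b t, γ)`. Indeed,
since `b² = λ + ζ²` and `2 b² γ² = ζ²`, the derivative formulas for `sn`, `cn`, `dn` show that the
right-hand side solves the same Cauchy problem, and the vector field is smooth, so the two agree.
The function `cn = cos ∘ am` has period `4K(γ)` because `am` inverts the incomplete integral `F`,
which grows by `2K` over each interval of length `π`.
-/

section General

theorem integral_eq_two_nsmul_integral_half_of_symm {E : Type*} [NormedAddCommGroup E]
    [NormedSpace ℝ E] {f : ℝ → E} {c : ℝ} (hf : IntervalIntegrable f volume 0 c)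
    (hsymm : ∀ x, f (c - x) = f x) : ∫ x in 0..c, f x = 2 • ∫ x in 0..(c / 2), f x := by
  have hmid : c / 2 ∈ uIcc 0 c := by
    rcases le_total 0 c with hc | hc
    · exact mem_uIcc_of_le (by linarith) (by linarith)
    · exact mem_uIcc_of_ge (by linarith) (by linarith)
  have hreflect : ∫ x in (c / 2)..c, f x = ∫ x in 0..(c / 2), f x := by
    simpa only [hsymm, sub_zero, sub_half] using
      (intervalIntegral.integral_comp_sub_left f c (a := 0) (b := c / 2)).symm
  rw [← intervalIntegral.integral_add_adjacent_intervals
    (hf.mono_set (uIcc_subset_uIcc_left hmid)) (hf.mono_set (uIcc_subset_uIcc_right hmid)),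
    hreflect, two_nsmul]

theorem continuous_of_rightInverse_of_strictMono {α β : Type*} [LinearOrder α]
    [TopologicalSpace α] [OrderTopology α] [DenselyOrdered α] [LinearOrder β] [TopologicalSpace β]
    [OrderTopology β] {f : α → β} {g : β → α} (hf : StrictMono f)
    (hg : Function.RightInverse g f) : Continuous g := by
  have hmono : Monotone g := fun a b hab ↦ hf.le_iff_le.1 (by rwa [hg a, hg b])
  exact hmono.continuous_of_surjective fun x ↦ ⟨f x, hf.injective (hg (f x))⟩

open scoped Manifold in
theorem isIntegralCurve_eq_of_contDiff {E : Type*} [NormedAddCommGroup E] [NormedSpace ℝ E]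
    [CompleteSpace E] {v : E → E} (hv : ContDiff ℝ 1 v) {γ γ' : ℝ → E} {t₀ : ℝ}
    (hγ : IsIntegralCurve γ fun _ ↦ v) (hγ' : IsIntegralCurve γ' fun _ ↦ v)
    (h : γ t₀ = γ' t₀) : γ = γ' :=
  isMIntegralCurve_Ioo_eq_of_contMDiff_boundaryless (I := 𝓘(ℝ, E))
    (contMDiff_vectorSpace_iff_contDiff.2 hv) (fun t ↦ (hγ t).hasFDerivAt.hasMFDerivAt)
    (fun t ↦ (hγ' t).hasFDerivAt.hasMFDerivAt) h

end General

section EllipticIntegrals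

/-- The delta amplitude `Δ(φ, k) = √(1 - k² sin² φ)` of Legendre's elliptic integrals, as a function
of the modulus `k` (not of the parameter `k²`). -/
noncomputable def deltaAmplitude (k φ : ℝ) : ℝ := √(1 - k ^ 2 * sin φ ^ 2)

/-- Legendre's incomplete elliptic integral of the first kind `F(φ, k)`, with modulus `k`. -/
noncomputable def ellipticF (k φ : ℝ) : ℝ := ∫ θ in (0 : ℝ)..φ, 1 / deltaAmplitude k θ

/-- Legendre's complete elliptic integral of the first kind `K(k)`, with modulus `k`. -/
noncomputable def ellipticK (k : ℝ) : ℝ := ellipticF k (π / 2)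

variable {k : ℝ}

theorem one_sub_mul_sin_sq_pos (hk : k ^ 2 < 1) (φ : ℝ) : 0 < 1 - k ^ 2 * sin φ ^ 2 :=
  sub_pos.2 <| (mul_le_of_le_one_right (sq_nonneg k) (sin_sq_le_one φ)).trans_lt hk

theorem deltaAmplitude_pos (hk : k ^ 2 < 1) (φ : ℝ) : 0 < deltaAmplitude k φ :=
  Real.sqrt_pos.2 (one_sub_mul_sin_sq_pos hk φ)

theorem deltaAmplitude_sq (hk : k ^ 2 < 1) (φ : ℝ) :
    deltaAmplitude k φ ^ 2 = 1 - k ^ 2 * sin φ ^ 2 :=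
  Real.sq_sqrt (one_sub_mul_sin_sq_pos hk φ).le

theorem deltaAmplitude_periodic (k : ℝ) : Function.Periodic (deltaAmplitude k) π := fun φ ↦ by
  simp only [deltaAmplitude, sin_add_pi, neg_sq]

theorem deltaAmplitude_pi_sub (k φ : ℝ) : deltaAmplitude k (π - φ) = deltaAmplitude k φ := by
  simp only [deltaAmplitude, sin_pi_sub]

theorem hasDerivAt_deltaAmplitude (hk : k ^ 2 < 1) (φ : ℝ) :
    HasDerivAt (deltaAmplitude k) (-(k ^ 2 * sin φ * cos φ) / deltaAmplitude k φ) φ := by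
  have hrad : HasDerivAt (fun φ ↦ 1 - k ^ 2 * sin φ ^ 2) (-(k ^ 2 * (2 * sin φ * cos φ))) φ := by
    simpa using (((hasDerivAt_sin φ).pow 2).const_mul (k ^ 2)).const_sub 1
  refine (hrad.sqrt (one_sub_mul_sin_sq_pos hk φ).ne').congr_deriv ?_
  rw [← deltaAmplitude]
  field_simp

theorem continuous_one_div_deltaAmplitude (hk : k ^ 2 < 1) :
    Continuous fun φ ↦ 1 / deltaAmplitude k φ :=
  continuous_const.div (by unfold deltaAmplitude; fun_prop) fun φ ↦ (deltaAmplitude_pos hk φ).ne'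

theorem one_div_deltaAmplitude_periodic (k : ℝ) :
    Function.Periodic (fun φ ↦ 1 / deltaAmplitude k φ) π :=
  (deltaAmplitude_periodic k).comp (1 / ·)

theorem ellipticF_zero_right (k : ℝ) : ellipticF k 0 = 0 :=
  intervalIntegral.integral_same

theorem hasDerivAt_ellipticF (hk : k ^ 2 < 1) (φ : ℝ) :
    HasDerivAt (ellipticF k) (1 / deltaAmplitude k φ) φ :=
  ((continuous_one_div_deltaAmplitude hk).integral_hasStrictDerivAt 0 φ).hasDerivAt

theorem ellipticF_strictMono (hk : k ^ 2 < 1) : StrictMono (ellipticF k) :=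
  strictMono_of_hasDerivAt_pos (hasDerivAt_ellipticF hk) fun φ ↦
    one_div_pos.2 (deltaAmplitude_pos hk φ)

theorem ellipticF_surjective (hk : k ^ 2 < 1) : Function.Surjective (ellipticF k) := by
  have hcont : Continuous (ellipticF k) :=
    continuous_iff_continuousAt.2 fun φ ↦ (hasDerivAt_ellipticF hk φ).continuousAt
  have hint := (continuous_one_div_deltaAmplitude hk).intervalIntegrable (μ := volume) 0 π
  have hpos : ∀ φ, 0 < 1 / deltaAmplitude k φ := fun φ ↦ one_div_pos.2 (deltaAmplitude_pos hk φ)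
  have hper := one_div_deltaAmplitude_periodic k
  exact hcont.surjective (hper.tendsto_atTop_intervalIntegral_of_pos' hint hpos pi_pos)
    (hper.tendsto_atBot_intervalIntegral_of_pos' hint hpos pi_pos)

theorem ellipticF_pi (hk : k ^ 2 < 1) : ellipticF k π = 2 * ellipticK k := by
  have h := integral_eq_two_nsmul_integral_half_of_symm
    ((continuous_one_div_deltaAmplitude hk).intervalIntegrable (μ := volume) 0 π)
    fun φ ↦ by rw [deltaAmplitude_pi_sub]
  rwa [nsmul_eq_mul, Nat.cast_ofNat] at h

theorem ellipticF_add_pi (hk : k ^ 2 < 1) (φ : ℝ) :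
    ellipticF k (φ + π) = ellipticF k φ + 2 * ellipticK k := by
  have h := (one_div_deltaAmplitude_periodic k).intervalIntegral_add_eq_add 0 φ
    (continuous_one_div_deltaAmplitude hk).intervalIntegrable
  rw [zero_add] at h
  rw [← ellipticF_pi hk]
  exact h

end EllipticIntegrals

section JacobiFunctions

/-- Jacobi's amplitude `am(u, k)`, the inverse of `φ ↦ F(φ, k)`. It is meaningful for `k² < 1`,
where that function is a bijection of `ℝ`; for other `k` the value is unspecified. -/
noncomputable def jacobiAm (k : ℝ) : ℝ → ℝ := Function.invFun (ellipticF k)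

/-- Jacobi's elliptic function `sn(u, k) = sin (am(u, k))`. -/
noncomputable def jacobiSn (k u : ℝ) : ℝ := sin (jacobiAm k u)

/-- Jacobi's elliptic function `cn(u, k) = cos (am(u, k))`. -/
noncomputable def jacobiCn (k u : ℝ) : ℝ := cos (jacobiAm k u)

/-- Jacobi's elliptic function `dn(u, k) = Δ(am(u, k), k)`. -/
noncomputable def jacobiDn (k u : ℝ) : ℝ := deltaAmplitude k (jacobiAm k u)

variable {k : ℝ}

theorem ellipticF_jacobiAm (hk : k ^ 2 < 1) (u : ℝ) : ellipticF k (jacobiAm k u) = u :=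
  Function.rightInverse_invFun (ellipticF_surjective hk) u

theorem jacobiAm_ellipticF (hk : k ^ 2 < 1) (φ : ℝ) : jacobiAm k (ellipticF k φ) = φ :=
  Function.leftInverse_invFun (ellipticF_strictMono hk).injective φ

theorem jacobiAm_zero_right (hk : k ^ 2 < 1) : jacobiAm k 0 = 0 := by
  simpa only [ellipticF_zero_right] using jacobiAm_ellipticF hk 0

theorem jacobiAm_add_two_mul_ellipticK (hk : k ^ 2 < 1) (u : ℝ) :
    jacobiAm k (u + 2 * ellipticK k) = jacobiAm k u + π := by
  rw [← jacobiAm_ellipticF hk (jacobiAm k u + π), ellipticF_add_pi hk, ellipticF_jacobiAm hk]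

theorem hasDerivAt_jacobiAm (hk : k ^ 2 < 1) (u : ℝ) :
    HasDerivAt (jacobiAm k) (jacobiDn k u) u := by
  have hcont : Continuous (jacobiAm k) :=
    continuous_of_rightInverse_of_strictMono (ellipticF_strictMono hk) (ellipticF_jacobiAm hk)
  have hinv := (hasDerivAt_ellipticF hk (jacobiAm k u)).of_local_left_inverse hcont.continuousAt
    (one_div_pos.2 (deltaAmplitude_pos hk _)).ne' (.of_forall (ellipticF_jacobiAm hk))
  rwa [one_div, inv_inv] at hinv

theorem jacobiSn_zero_right (hk : k ^ 2 < 1) : jacobiSn k 0 = 0 := by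
  rw [jacobiSn, jacobiAm_zero_right hk, sin_zero]

theorem jacobiCn_zero_right (hk : k ^ 2 < 1) : jacobiCn k 0 = 1 := by
  rw [jacobiCn, jacobiAm_zero_right hk, cos_zero]

theorem jacobiSn_sq_add_jacobiCn_sq (k u : ℝ) : jacobiSn k u ^ 2 + jacobiCn k u ^ 2 = 1 :=
  sin_sq_add_cos_sq _

theorem jacobiDn_sq (hk : k ^ 2 < 1) (u : ℝ) : jacobiDn k u ^ 2 = 1 - k ^ 2 * jacobiSn k u ^ 2 :=
  deltaAmplitude_sq hk _

theorem hasDerivAt_jacobiSn (hk : k ^ 2 < 1) (u : ℝ) :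
    HasDerivAt (jacobiSn k) (jacobiCn k u * jacobiDn k u) u :=
  (hasDerivAt_jacobiAm hk u).sin

theorem hasDerivAt_jacobiCn (hk : k ^ 2 < 1) (u : ℝ) :
    HasDerivAt (jacobiCn k) (-(jacobiSn k u * jacobiDn k u)) u :=
  (hasDerivAt_jacobiAm hk u).cos.congr_deriv (neg_mul _ _)

theorem hasDerivAt_jacobiDn (hk : k ^ 2 < 1) (u : ℝ) :
    HasDerivAt (jacobiDn k) (-(k ^ 2 * jacobiSn k u * jacobiCn k u)) u :=
  ((hasDerivAt_deltaAmplitude hk _).comp u (hasDerivAt_jacobiAm hk u)).congr_deriv <|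
    div_mul_cancel₀ _ (deltaAmplitude_pos hk _).ne'

theorem jacobiCn_antiperiodic (hk : k ^ 2 < 1) :
    Function.Antiperiodic (jacobiCn k) (2 * ellipticK k) := fun u ↦ by
  rw [jacobiCn, jacobiAm_add_two_mul_ellipticK hk, cos_add_pi, jacobiCn]

theorem jacobiCn_periodic (hk : k ^ 2 < 1) : Function.Periodic (jacobiCn k) (4 * ellipticK k) := by
  have h := (jacobiCn_antiperiodic hk).periodic_two_mul
  rwa [← mul_assoc, two_mul (2 : ℝ), two_add_two_eq_four] at h

end JacobiFunctions

section Duffing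

/-- The vector field of the Duffing equation `W'' + λ W + W³ = 0`, written as a first-order system
for the pair `(W, W')`. -/
def duffingField (lam : ℝ) (p : ℝ × ℝ) : ℝ × ℝ := (p.2, -(lam * p.1) - p.1 ^ 3)

theorem contDiff_duffingField {n : WithTop ℕ∞} (lam : ℝ) : ContDiff ℝ n (duffingField lam) := by
  unfold duffingField
  fun_prop

variable {lam ζ : ℝ}

theorem isIntegralCurve_duffingField_jacobiCn {b k : ℝ} (hk : k ^ 2 < 1)
    (hb : b ^ 2 = lam + ζ ^ 2) (hbk : 2 * b ^ 2 * k ^ 2 = ζ ^ 2) :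
    IsIntegralCurve
      (fun t ↦ (ζ * jacobiCn k (b * t), -(ζ * b * (jacobiSn k (b * t) * jacobiDn k (b * t)))))
      fun _ ↦ duffingField lam := by
  intro t
  have hlin : HasDerivAt (fun t ↦ b * t) b t := by simpa using (hasDerivAt_id t).const_mul b
  have hcn := (hasDerivAt_jacobiCn hk (b * t)).comp t hlin
  have hsn := (hasDerivAt_jacobiSn hk (b * t)).comp t hlin
  have hdn := (hasDerivAt_jacobiDn hk (b * t)).comp t hlin
  refine ((hcn.const_mul ζ).congr_deriv ?_).prodMk
    (((hsn.mul hdn).const_mul (ζ * b)).neg.congr_deriv ?_)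
  · ring
  · have hsq := jacobiSn_sq_add_jacobiCn_sq k (b * t)
    have hdsq := jacobiDn_sq hk (b * t)
    simp only [Function.comp_apply]
    generalize jacobiSn k (b * t) = s, jacobiCn k (b * t) = c, jacobiDn k (b * t) = d at *
    calc -(ζ * b * (c * d * b * d + s * (-(k ^ 2 * s * c) * b)))
        = -(ζ * c * (b ^ 2 * d ^ 2 - b ^ 2 * k ^ 2 * s ^ 2)) := by ring
      _ = -(ζ * c * (b ^ 2 - 2 * b ^ 2 * k ^ 2 * s ^ 2)) := by rw [hdsq]; ring
      _ = -(ζ * c * (lam + ζ ^ 2 - ζ ^ 2 * s ^ 2)) := by rw [hbk, hb]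
      _ = -(lam * (ζ * c)) - (ζ * c) ^ 3 := by rw [eq_sub_of_add_eq hsq]; ring

theorem duffing_eq_mul_jacobiCn {b k : ℝ} (hk : k ^ 2 < 1) (hb : b ^ 2 = lam + ζ ^ 2)
    (hbk : 2 * b ^ 2 * k ^ 2 = ζ ^ 2) {W : ℝ → ℝ} (hW1 : Differentiable ℝ W)
    (hW2 : Differentiable ℝ (deriv W)) (hode : ∀ t, deriv (deriv W) t + lam * W t + W t ^ 3 = 0)
    (hW0 : W 0 = ζ) (hW0' : deriv W 0 = 0) : W = fun t ↦ ζ * jacobiCn k (b * t) := by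
  have hcurve : IsIntegralCurve (fun t ↦ (W t, deriv W t)) fun _ ↦ duffingField lam := fun t ↦
    (hW1 t).hasDerivAt.prodMk ((hW2 t).hasDerivAt.congr_deriv (by linarith [hode t]))
  have heq := isIntegralCurve_eq_of_contDiff (t₀ := 0) (contDiff_duffingField lam) hcurve
    (isIntegralCurve_duffingField_jacobiCn hk hb hbk)
    (by simp [hW0, hW0', jacobiCn_zero_right hk, jacobiSn_zero_right hk])
  exact funext fun t ↦ congrArg Prod.fst (congrFun heq t)

theorem stmt14_general (hlam : -(ζ ^ 2 / 2) < lam) {W : ℝ → ℝ} (hW1 : Differentiable ℝ W)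
    (hW2 : Differentiable ℝ (deriv W)) (hode : ∀ t, deriv (deriv W) t + lam * W t + W t ^ 3 = 0)
    (hW0 : W 0 = ζ) (hW0' : deriv W 0 = 0) :
    Function.Periodic W (4 / √(lam + ζ ^ 2) * ellipticK (ζ / (√(lam + ζ ^ 2) * √2))) := by
  have hpos : 0 < lam + ζ ^ 2 := by linarith [sq_nonneg ζ]
  have hb : √(lam + ζ ^ 2) ^ 2 = lam + ζ ^ 2 := Real.sq_sqrt hpos.le
  set b := √(lam + ζ ^ 2)
  set k := ζ / (b * √2) with hk_def
  have hk_sq : k ^ 2 = ζ ^ 2 / (2 * (lam + ζ ^ 2)) := by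
    rw [hk_def, div_pow, mul_pow, hb, Real.sq_sqrt zero_le_two, mul_comm]
  have hk : k ^ 2 < 1 := by
    rw [hk_sq, div_lt_one (by positivity)]
    linarith
  have hbk : 2 * b ^ 2 * k ^ 2 = ζ ^ 2 := by
    rw [hk_sq, hb]
    exact mul_div_cancel₀ _ (by positivity)
  rw [duffing_eq_mul_jacobiCn hk hb hbk hW1 hW2 hode hW0 hW0', div_mul_eq_mul_div,
    div_eq_inv_mul]
  exact ((jacobiCn_periodic hk).const_mul b).comp (ζ * ·)

end Duffing

/-- Periodicity of the Duffing solution: the solution of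
`W'' + λW + W³ = 0`, `W(0) = ζ > 0`, `W'(0) = 0` is `T`-periodic with
`T = (4/b) ∫₀^{π/2} dφ/√(1 - γ² sin²φ)`, where `b = √(λ + ζ²)` and
`γ = ζ/(b√2)`. -/
theorem stmt14 (lam ζ : ℝ) (hlam : 0 < lam) (hζ : 0 < ζ)
    (W : ℝ → ℝ) (hW1 : Differentiable ℝ W) (hW2 : Differentiable ℝ (deriv W))
    (hode : ∀ t, deriv (deriv W) t + lam * W t + W t ^ 3 = 0)
    (hW0 : W 0 = ζ) (hW0' : deriv W 0 = 0) :
    ∀ t : ℝ,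
      W (t + (4 / Real.sqrt (lam + ζ ^ 2)) *
        ∫ φ in (0 : ℝ)..(π / 2),
          1 / Real.sqrt (1 - (ζ / (Real.sqrt (lam + ζ ^ 2) * Real.sqrt 2)) ^ 2
            * Real.sin φ ^ 2)) = W t := by
  exact stmt14_general (by linarith [sq_nonneg ζ]) hW1 hW2 hode hW0 hW0'
end

section
/- Let a < b be real numbers and let T : ℝ → ℝ be integrable on (a, b). If ∫_a^b T(x) φ''(x) dx = 0 for every smooth function φ : ℝ → ℝ with compact support contained in (a, b), then there exist constants c₀, c₁ ∈ ℝ such that T(x) = c₀ x + c₁ for a.e. x ∈ (a, b). -/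
open Real MeasureTheory Set Filter

/-! A linear functional `L` on the test functions on an interval that annihilates every
derivative is a multiple `φ ↦ (∫ φ) • c` of the integral: fix a test function `η` of integral
one; then `φ - (∫ φ) • η` has integral zero, hence a compactly supported primitive, so
`L φ = (∫ φ) • L η`. If `L` only annihilates `(n + 1)`-st derivatives, then `φ ↦ L (deriv φ)`
annihilates `n`-th derivatives, so by induction it is integration against a polynomial `p`; by
parts, adding to `L` integration against a primitive of `p` gives a functional that annihilates
every derivative. Hence `L` is integration against a polynomial of degree at most `n`. Applied to
`L φ = ∫ φ • f`, this gives the theorem, as test functions separate locally integrable functions up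
to null sets. -/

section

open TopologicalSpace Function
open scoped Distributions ContDiff

theorem exists_subset_Icc_subset_of_isCompact {α : Type*} [LinearOrder α] [Nontrivial α]
    [TopologicalSpace α] [OrderClosedTopology α] {K s : Set α} (hK : IsCompact K)
    (hs : s.OrdConnected) (hKs : K ⊆ s) : ∃ c d, K ⊆ Icc c d ∧ Icc c d ⊆ s := by
  rcases K.eq_empty_or_nonempty with rfl | hne
  · obtain ⟨d, c, hdc⟩ := exists_pair_lt α
    exact ⟨c, d, empty_subset _, by simp [Icc_eq_empty_of_lt hdc]⟩
  · obtain ⟨c, hcK, hc⟩ := hK.exists_isLeast hne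
    obtain ⟨d, hdK, hd⟩ := hK.exists_isGreatest hne
    exact ⟨c, d, fun x hx => ⟨hc hx, hd hx⟩, hs.out (hKs hcK) (hKs hdK)⟩

section Primitive

variable {E : Type*} [NormedAddCommGroup E] [NormedSpace ℝ E] {f : ℝ → E}

theorem hasDerivAt_setIntegral_Iic [CompleteSpace E] {x : ℝ} (hf : Integrable f)
    (hx : ContinuousAt f x) : HasDerivAt (fun y => ∫ t in Iic y, f t) (f x) x := by
  have hsplit : (fun y => ∫ t in Iic y, f t) =
      fun y => (∫ t in Iic x, f t) + ∫ t in x..y, f t := funext fun y => by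
    rw [← intervalIntegral.integral_Iic_sub_Iic hf.integrableOn hf.integrableOn,
      add_sub_cancel]
  rw [hsplit]
  exact (intervalIntegral.integral_hasDerivAt_right hf.intervalIntegrable
    hf.aestronglyMeasurable.stronglyMeasurableAtFilter hx).const_add _

theorem support_setIntegral_Iic_subset (hf : Integrable f) (h0 : ∫ t, f t = 0) {s : Set ℝ}
    (hs : s.OrdConnected) (hfs : support f ⊆ s) :
    support (fun x => ∫ t in Iic x, f t) ⊆ s := by
  intro x hx
  have hx' : ∫ t in Ioi x, f t ≠ 0 := fun h => hx <| by
    simpa [h, h0] using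
      intervalIntegral.integral_Iic_add_Ioi (b := x) hf.integrableOn hf.integrableOn
  obtain ⟨y, hyx, hy⟩ : ∃ y ∈ Iic x, f y ≠ 0 := by
    by_contra! h
    exact hx (setIntegral_eq_zero_of_forall_eq_zero h)
  obtain ⟨z, hxz, hz⟩ : ∃ z ∈ Ioi x, f z ≠ 0 := by
    by_contra! h
    exact hx' (setIntegral_eq_zero_of_forall_eq_zero h)
  exact hs.out (hfs hy) (hfs hz) ⟨hyx, (mem_Ioi.1 hxz).le⟩

end Primitive

section TestFunction

variable {Ω : Opens ℝ} {E : Type*} [NormedAddCommGroup E] [NormedSpace ℝ E]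

/-- The derivative of test functions on an open subset of the real line, as a linear map. It is
bundled so that its powers are the higher derivatives. -/
noncomputable def testDeriv : 𝓓(Ω, E) →ₗ[ℝ] 𝓓(Ω, E) :=
  (TestFunction.lineDerivCLM ℝ (1 : ℝ)).toLinearMap

theorem coe_testDeriv (φ : 𝓓(Ω, E)) : ⇑(testDeriv φ) = deriv φ := by
  funext x
  rw [testDeriv, ContinuousLinearMap.coe_coe, TestFunction.lineDerivCLM_apply_of_le le_top,
    (φ.contDiff.differentiable (by simp)).differentiableAt.lineDeriv_eq_fderiv,
    fderiv_apply_one_eq_deriv]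

theorem coe_testDeriv_pow (n : ℕ) (φ : 𝓓(Ω, E)) :
    ⇑((testDeriv ^ n) φ) = iteratedDeriv n φ := by
  induction n with
  | zero => simp
  | succ n ih => rw [pow_succ', Module.End.mul_apply, coe_testDeriv, ih, iteratedDeriv_succ]

theorem hasDerivAt_testDeriv (φ : 𝓓(Ω, E)) (x : ℝ) : HasDerivAt φ (testDeriv φ x) x := by
  rw [coe_testDeriv]
  exact (φ.contDiff.differentiable (by simp) x).hasDerivAt

theorem exists_testDeriv_eq_of_integral_eq_zero [CompleteSpace E]
    (hΩ : (Ω : Set ℝ).OrdConnected) (φ : 𝓓(Ω, E)) (h0 : ∫ x, φ x = 0) :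
    ∃ Φ : 𝓓(Ω, E), testDeriv Φ = φ := by
  have hφ : Integrable φ := φ.continuous.integrable_of_hasCompactSupport φ.hasCompactSupport
  set Φ : ℝ → E := fun x => ∫ t in Iic x, φ t
  have hderiv (x : ℝ) : HasDerivAt Φ (φ x) x :=
    hasDerivAt_setIntegral_Iic hφ φ.continuous.continuousAt
  have hΦ' : deriv Φ = φ := funext fun x => (hderiv x).deriv
  have hsmooth : ContDiff ℝ ∞ Φ :=
    contDiff_infty_iff_deriv.2 ⟨fun x => (hderiv x).differentiableAt, hΦ' ▸ φ.contDiff⟩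
  obtain ⟨c, d, hφcd, hcdΩ⟩ := exists_subset_Icc_subset_of_isCompact
    φ.hasCompactSupport.isCompact hΩ φ.tsupport_subset
  have hsupp : support Φ ⊆ Icc c d :=
    support_setIntegral_Iic_subset hφ h0 ordConnected_Icc ((subset_tsupport φ).trans hφcd)
  exact ⟨⟨Φ, hsmooth, .of_support_subset_isCompact isCompact_Icc hsupp,
    (closure_minimal hsupp isClosed_Icc).trans hcdΩ⟩,
    DFunLike.coe_injective ((coe_testDeriv _).trans hΦ')⟩

theorem exists_testFunction_integral_eq_one {F : Type*} [NormedAddCommGroup F] [NormedSpace ℝ F]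
    [FiniteDimensional ℝ F] [MeasurableSpace F] [BorelSpace F] {U : Opens F}
    (hU : (U : Set F).Nonempty) (μ : Measure F) [IsLocallyFiniteMeasure μ] [μ.IsOpenPosMeasure] :
    ∃ η : 𝓓(U, ℝ), ∫ x, η x ∂μ = 1 := by
  obtain ⟨c, hc⟩ := hU
  obtain ⟨r, hr, hrU⟩ := Metric.nhds_basis_closedBall.mem_iff.1 (U.isOpen.mem_nhds hc)
  let f : ContDiffBump c := ⟨r / 2, r, half_pos hr, half_lt_self hr⟩
  exact ⟨⟨f.normed μ, f.contDiff_normed, f.hasCompactSupport_normed,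
    f.tsupport_normed_eq.trans_subset hrU⟩, f.integral_normed⟩

end TestFunction

section Moment

variable {Ω : Opens ℝ}

theorem integrable_pow_mul_testFunction (k : ℕ) (φ : 𝓓(Ω, ℝ)) :
    Integrable fun x => x ^ k * φ x :=
  ((continuous_pow k).mul φ.continuous).integrable_of_hasCompactSupport
    φ.hasCompactSupport.mul_left

variable (Ω) in
/-- The `k`-th moment `φ ↦ ∫ x ^ k * φ x` of test functions on `Ω`, that is, the distribution
defined by the monomial `x ^ k`, as a linear functional. -/
noncomputable def moment (k : ℕ) : 𝓓(Ω, ℝ) →ₗ[ℝ] ℝ where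
  toFun φ := ∫ x, x ^ k * φ x
  map_add' φ ψ := by
    simp only [add_apply, mul_add]
    exact integral_add (integrable_pow_mul_testFunction k φ) (integrable_pow_mul_testFunction k ψ)
  map_smul' r φ := by
    simp only [smul_apply, smul_eq_mul, mul_left_comm _ r, integral_const_mul, RingHom.id_apply]

theorem moment_apply (k : ℕ) (φ : 𝓓(Ω, ℝ)) : moment Ω k φ = ∫ x, x ^ k * φ x := rfl

theorem moment_zero_apply (φ : 𝓓(Ω, ℝ)) : moment Ω 0 φ = ∫ x, φ x := by
  simp [moment_apply]

theorem moment_succ_testDeriv (k : ℕ) (φ : 𝓓(Ω, ℝ)) :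
    moment Ω (k + 1) (testDeriv φ) = -((k + 1) * moment Ω k φ) := by
  have hpow (x : ℝ) : HasDerivAt (fun y => y ^ (k + 1)) ((k + 1 : ℝ) * x ^ k) x := by
    simpa using hasDerivAt_pow (k + 1) x
  have hparts := integral_mul_deriv_eq_deriv_mul_of_integrable
    (fun x _ => hpow x) (fun x _ => hasDerivAt_testDeriv φ x)
    (integrable_pow_mul_testFunction (k + 1) (testDeriv φ))
    (by simpa only [Pi.mul_def, mul_assoc] using
      (integrable_pow_mul_testFunction k φ).const_mul (k + 1 : ℝ))
    (integrable_pow_mul_testFunction (k + 1) φ)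
  simpa only [moment_apply, mul_assoc, integral_const_mul] using hparts

end Moment

section LinearFunctional

variable {Ω : Opens ℝ} {V : Type*} [AddCommGroup V] [Module ℝ V]

theorem exists_eq_moment_zero_smul_of_testDeriv_eq_zero (hΩ : (Ω : Set ℝ).OrdConnected)
    (L : 𝓓(Ω, ℝ) →ₗ[ℝ] V) (hL : ∀ φ, L (testDeriv φ) = 0) :
    ∃ c : V, ∀ φ, L φ = moment Ω 0 φ • c := by
  rcases (Ω : Set ℝ).eq_empty_or_nonempty with hempty | hne
  · have htriv (φ : 𝓓(Ω, ℝ)) : φ = 0 := DFunLike.coe_injective <| tsupport_eq_empty_iff.1 <|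
      subset_empty_iff.1 (φ.tsupport_subset.trans_eq hempty)
    exact ⟨0, fun φ => by simp [htriv φ]⟩
  · obtain ⟨η, hη⟩ := exists_testFunction_integral_eq_one hne volume
    have hmean (φ : 𝓓(Ω, ℝ)) : ∫ x, (φ - moment Ω 0 φ • η) x = 0 := by
      rw [← moment_zero_apply] at hη ⊢
      simp [hη]
    refine ⟨L η, fun φ => ?_⟩
    obtain ⟨Φ, hΦ⟩ := exists_testDeriv_eq_of_integral_eq_zero hΩ _ (hmean φ)
    have hLΦ := hL Φ
    rwa [hΦ, map_sub, map_smul, sub_eq_zero] at hLΦ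

theorem exists_eq_sum_moment_smul_of_testDeriv_pow_eq_zero (hΩ : (Ω : Set ℝ).OrdConnected)
    (n : ℕ) (L : 𝓓(Ω, ℝ) →ₗ[ℝ] V) (hL : ∀ φ, L ((testDeriv ^ n) φ) = 0) :
    ∃ c : ℕ → V, ∀ φ, L φ = ∑ k ∈ Finset.range n, moment Ω k φ • c k := by
  induction n generalizing L with
  | zero => exact ⟨0, by simpa using hL⟩
  | succ n ih =>
    obtain ⟨c, hc⟩ := ih (L ∘ₗ testDeriv) fun φ => by
      rw [LinearMap.comp_apply, ← Module.End.mul_apply, ← pow_succ', hL φ]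
    let P : 𝓓(Ω, ℝ) →ₗ[ℝ] V := ∑ k ∈ Finset.range n,
      (moment Ω (k + 1)).smulRight ((k + 1 : ℝ)⁻¹ • c k)
    have hP (φ : 𝓓(Ω, ℝ)) : P (testDeriv φ) = -L (testDeriv φ) := by
      rw [← LinearMap.comp_apply L, hc φ, ← Finset.sum_neg_distrib, LinearMap.sum_apply]
      refine Finset.sum_congr rfl fun k _ => ?_
      rw [LinearMap.smulRight_apply, moment_succ_testDeriv, smul_smul, ← neg_smul]
      congr 1
      field_simp
    obtain ⟨c₀, hc₀⟩ := exists_eq_moment_zero_smul_of_testDeriv_eq_zero hΩ (L + P)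
      fun φ => by rw [LinearMap.add_apply, hP, add_neg_cancel]
    refine ⟨fun | 0 => c₀ | k + 1 => -((k + 1 : ℝ)⁻¹ • c k), fun φ => ?_⟩
    rw [Finset.sum_range_succ', ← hc₀ φ]
    simp [P]

end LinearFunctional

section LocallyIntegrable

variable {F : Type*} [NormedAddCommGroup F] [NormedSpace ℝ F] [MeasurableSpace F]
  {U : Opens F} {μ : Measure F} {E : Type*} [NormedAddCommGroup E] [NormedSpace ℝ E]

theorem integrable_testFunction_smul [OpensMeasurableSpace F] {f : F → E}
    (hf : LocallyIntegrableOn f U μ) (φ : 𝓓(U, ℝ)) : Integrable (fun x => φ x • f x) μ :=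
  φ.integrable_bilin (ContinuousLinearMap.lsmul ℝ ℝ) hf

theorem setIntegral_testFunction_smul (f : F → E) (φ : 𝓓(U, ℝ)) :
    ∫ x in U, φ x • f x ∂μ = ∫ x, φ x • f x ∂μ :=
  setIntegral_eq_integral_of_forall_compl_eq_zero fun x hx => by
    rw [image_eq_zero_of_notMem_tsupport fun h => hx (φ.tsupport_subset h), zero_smul]

theorem ae_eq_of_integral_testFunction_smul_eq [FiniteDimensional ℝ F] [BorelSpace F]
    [CompleteSpace E] {f g : F → E} (hf : LocallyIntegrableOn f U μ)
    (hg : LocallyIntegrableOn g U μ)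
    (h : ∀ φ : 𝓓(U, ℝ), ∫ x, φ x • f x ∂μ = ∫ x, φ x • g x ∂μ) :
    f =ᵐ[μ.restrict U] g := by
  have hsub : ∀ᵐ x ∂μ, x ∈ U → (f - g) x = 0 :=
    U.isOpen.ae_eq_zero_of_integral_contDiff_smul_eq_zero (hf.sub hg) fun φ hφ hφc hφU => by
      let ψ : 𝓓(U, ℝ) := ⟨φ, hφ, hφc, hφU⟩
      simp only [Pi.sub_apply, smul_sub]
      exact (integral_sub (integrable_testFunction_smul hf ψ)
        (integrable_testFunction_smul hg ψ)).trans (sub_eq_zero.2 (h ψ))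
  filter_upwards [ae_restrict_of_ae hsub, ae_restrict_mem U.isOpen.measurableSet] with x hx hxU
  exact sub_eq_zero.1 (hx hxU)

theorem integral_testFunction_smul_sum_pow_smul [CompleteSpace E] {Ω : Opens ℝ} (n : ℕ)
    (c : ℕ → E) (φ : 𝓓(Ω, ℝ)) :
    ∫ x, φ x • ∑ k ∈ Finset.range n, x ^ k • c k =
      ∑ k ∈ Finset.range n, moment Ω k φ • c k := by
  simp only [Finset.smul_sum, smul_smul, mul_comm (φ _)]
  rw [integral_finsetSum _ fun k _ => (integrable_pow_mul_testFunction k φ).smul_const (c k)]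
  simp only [integral_smul_const, moment_apply]

end LocallyIntegrable

theorem stmt15_general {E : Type*} [NormedAddCommGroup E] [NormedSpace ℝ E] [CompleteSpace E]
    {s : Set ℝ} (hs : IsOpen s) (hs_conn : s.OrdConnected) {f : ℝ → E}
    (hf : LocallyIntegrableOn f s) (n : ℕ)
    (hweak : ∀ φ : ℝ → ℝ, ContDiff ℝ ∞ φ → HasCompactSupport φ → tsupport φ ⊆ s →
      ∫ x in s, iteratedDeriv n φ x • f x = 0) :
    ∃ c : ℕ → E, ∀ᵐ x ∂(volume.restrict s), f x = ∑ k ∈ Finset.range n, x ^ k • c k := by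
  let Ω : Opens ℝ := ⟨s, hs⟩
  have hfΩ : LocallyIntegrableOn f Ω := hf
  let L : 𝓓(Ω, ℝ) →L[ℝ] E :=
    TestFunction.integralAgainstBilinCLM (ContinuousLinearMap.lsmul ℝ ℝ) volume f
  have hL (φ : 𝓓(Ω, ℝ)) : L φ = ∫ x, φ x • f x :=
    TestFunction.integralAgainstBilinCLM_eq_integral hfΩ
  obtain ⟨c, hc⟩ := exists_eq_sum_moment_smul_of_testDeriv_pow_eq_zero hs_conn n L.toLinearMap
    fun φ => by
      rw [ContinuousLinearMap.coe_coe, hL, ← setIntegral_testFunction_smul, coe_testDeriv_pow]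
      exact hweak φ φ.contDiff φ.hasCompactSupport φ.tsupport_subset
  have hp : Continuous fun x : ℝ => ∑ k ∈ Finset.range n, x ^ k • c k := by fun_prop
  refine ⟨c, ae_eq_of_integral_testFunction_smul_eq hfΩ
    (hp.locallyIntegrable.locallyIntegrableOn _) fun φ => ?_⟩
  rw [integral_testFunction_smul_sum_pow_smul, ← hL]
  exact hc φ

end

/-- du Bois–Reymond lemma: an integrable function on `(a, b)` whose second
distributional derivative vanishes (i.e. `∫ T φ'' = 0` for all smooth `φ`
compactly supported in `(a, b)`) is affine a.e. on `(a, b)`. -/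
theorem stmt15 (a b : ℝ) (hab : a < b) (T : ℝ → ℝ)
    (hT : IntegrableOn T (Set.Ioo a b))
    (hweak : ∀ φ : ℝ → ℝ, ContDiff ℝ (⊤ : ℕ∞) φ → HasCompactSupport φ →
      tsupport φ ⊆ Set.Ioo a b →
      (∫ x in Set.Ioo a b, T x * deriv (deriv φ) x) = 0) :
    ∃ c₀ c₁ : ℝ, ∀ᵐ x ∂(volume.restrict (Set.Ioo a b)), T x = c₀ * x + c₁ := by
  obtain ⟨c, hc⟩ := stmt15_general isOpen_Ioo ordConnected_Ioo hT.locallyIntegrableOn 2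
    fun φ hφ hφc hφs => by
      simpa [iteratedDeriv_succ, mul_comm] using hweak φ hφ hφc hφs
  exact ⟨c 1, c 0, hc.mono fun x hx => by
    simpa [Finset.sum_range_succ, add_comm, mul_comm] using hx⟩
end

section
/- Let 0 < a < 1, 0 < α < 1 < β, λ ∈ ℝ, and let p : ℝ → ℝ be measurable with α ≤ p(x) ≤ β for a.e. x ∈ [−π, π]. Suppose e : ℝ → ℝ is continuously differentiable on [−π, π] and there is an integrable function g : ℝ → ℝ with e'(x) = e'(−π) + ∫_{−π}^{x} g(t) dt for all x ∈ [−π, π], and suppose that for every twice continuously differentiable function v : ℝ → ℝ with v(−π) = v(π) = v(−aπ) = v(aπ) = 0 one has ∫_{−π}^{π} g(x) v''(x) dx = λ ∫_{−π}^{π} p(x) e(x) v(x) dx. Then g coincides a.e. on [−π, π] with a continuous function G, and on each of the three spans [−π, −aπ], [−aπ, aπ], [aπ, π], with left endpoint denoted ξᵢ, there exist constants cᵢ, dᵢ ∈ ℝ such that G(x) = cᵢ x + dᵢ + λ ∫_{ξᵢ}^{x} (x − t) p(t) e(t) dt for all x in that span. In particular e is twice continuously differentiable on [−π, π], three times continuously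 differentiable on each closed span, and e'''' = λ p e a.e. in (−π, π). -/
open Real MeasureTheory Set Filter

/-! The proof inverts the weak form instead of integrating it by parts. Let `q = λ p e`, let `Q` be
the double primitive of `q` with `Q(π) = Q'(π) = 0`, and test with the double primitive `v` of a
continuous `w` with `v(-π) = v'(-π) = 0`. Since double integration from the left endpoint is
adjoint to double integration from the right endpoint, the weak form becomes `∫ (g - Q) w = 0`,
and the node condition `v(xᵢ) = 0` becomes `∫ (xᵢ - t)⁺ w(t) dt = 0`. So the functional `g - Q`
vanishes on the common kernel of finitely many functionals, hence
`g = Q + ∑ cᵢ (xᵢ - ·)⁺` a.e. by linear algebra and the du Bois-Reymond lemma. The corner terms are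
affine between nodes, and moving the base point of `Q` changes it by an affine function.
-/

open scoped CompactlySupported

section DuBoisReymond

/-- The functional `w ↦ ∫ w f dμ` on compactly supported continuous functions, that is, the
distribution of order zero represented by the locally integrable function `f`. -/
noncomputable def integralFunctional {X : Type*} [TopologicalSpace X] [T2Space X]
    [MeasurableSpace X] [OpensMeasurableSpace X] {μ : Measure X} {f : X → ℝ}
    (hf : LocallyIntegrable f μ) : C_c(X, ℝ) →ₗ[ℝ] ℝ where
  toFun w := ∫ x, w x * f x ∂μ
  map_add' v w := by
    have hint (u : C_c(X, ℝ)) : Integrable (fun x => u x * f x) μ :=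
      hf.integrable_smul_left_of_hasCompactSupport u.continuous u.hasCompactSupport
    simp only [CompactlySupportedContinuousMap.coe_add, Pi.add_apply, add_mul]
    exact integral_add (hint v) (hint w)
  map_smul' r w := by
    simp only [CompactlySupportedContinuousMap.coe_smul, Pi.smul_apply, smul_eq_mul, mul_assoc,
      integral_const_mul, RingHom.id_apply]

variable {E : Type*} [NormedAddCommGroup E] [NormedSpace ℝ E] [FiniteDimensional ℝ E]
  [MeasurableSpace E] [BorelSpace E] {μ : Measure E}

theorem ae_eq_of_integralFunctional_eq {f₁ f₂ : E → ℝ} {hf₁ : LocallyIntegrable f₁ μ}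
    {hf₂ : LocallyIntegrable f₂ μ} (h : integralFunctional hf₁ = integralFunctional hf₂) :
    f₁ =ᵐ[μ] f₂ :=
  ae_eq_of_integral_contDiff_smul_eq hf₁ hf₂ fun w hw hw' =>
    LinearMap.congr_fun h ⟨⟨w, hw.continuous⟩, hw'⟩

theorem exists_ae_eq_sum_of_forall_integral_eq_zero {ι : Type*} [Fintype ι] {f : E → ℝ}
    {φ : ι → E → ℝ} (hf : LocallyIntegrable f μ) (hφ : ∀ i, LocallyIntegrable (φ i) μ)
    (h : ∀ w : C_c(E, ℝ), (∀ i, ∫ x, w x * φ i x ∂μ = 0) → ∫ x, w x * f x ∂μ = 0) :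
    ∃ c : ι → ℝ, f =ᵐ[μ] fun x => ∑ i, c i * φ i x := by
  have hspan : integralFunctional hf ∈
      Submodule.span ℝ (range fun i => integralFunctional (hφ i)) :=
    mem_span_of_iInf_ker_le_ker fun w hw => h w fun i => (Submodule.mem_iInf _).1 hw i
  obtain ⟨c, hc⟩ := (Submodule.mem_span_range_iff_exists_fun ℝ).1 hspan
  have hsum : LocallyIntegrable (fun x => ∑ i, c i * φ i x) μ :=
    locallyIntegrable_finsetSum _ fun i _ => (hφ i).smul (c i)
  refine ⟨c, ae_eq_of_integralFunctional_eq (hf₁ := hf) (hf₂ := hsum) ?_⟩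
  ext w
  have hint (i : ι) : Integrable (fun x => w x * φ i x) μ :=
    (hφ i).integrable_smul_left_of_hasCompactSupport w.continuous w.hasCompactSupport
  calc integralFunctional hf w
      = ∑ i, c i * ∫ x, w x * φ i x ∂μ := by
        rw [← hc, LinearMap.sum_apply]
        rfl
    _ = ∑ i, ∫ x, c i * (w x * φ i x) ∂μ := by simp only [integral_const_mul]
    _ = ∫ x, ∑ i, c i * (w x * φ i x) ∂μ :=
        (integral_finsetSum _ fun i _ => (hint i).const_mul (c i)).symm
    _ = integralFunctional hsum w := by
        refine integral_congr_ae (.of_forall fun x => ?_)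
        simp only [Finset.mul_sum, mul_left_comm]

end DuBoisReymond

section SecondPrimitive

/-- The primitive of the primitive of `f`, both based at `c`: the solution of `u'' = f` with
`u(c) = u'(c) = 0`. It is the Volterra potential `∫ (x - t) f(t) dt` over `(c, x)`, see
`secondPrimitive_eq_integral_sub_mul`. -/
noncomputable def secondPrimitive (f : ℝ → ℝ) (c x : ℝ) : ℝ :=
  ∫ t in c..x, ∫ s in c..t, f s

theorem intervalIntegral_primitive_mul {f g : ℝ → ℝ} {a b : ℝ}
    (hf : IntervalIntegrable f volume a b) (hg : IntervalIntegrable g volume a b) :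
    ∫ x in a..b, (∫ t in a..x, f t) * g x = -∫ x in a..b, f x * ∫ t in b..x, g t := by
  have hF := hf.absolutelyContinuousOnInterval_intervalIntegral left_mem_uIcc
  have hG := hg.absolutelyContinuousOnInterval_intervalIntegral right_mem_uIcc
  have hF' : ∀ᵐ x, x ∈ uIoc a b → deriv (fun y => ∫ t in a..y, f t) x = f x := by
    filter_upwards [hf.ae_hasDerivAt_integral] with x hx hxab
    exact (hx (uIoc_subset_uIcc hxab) a left_mem_uIcc).deriv
  have hG' : ∀ᵐ x, x ∈ uIoc a b → deriv (fun y => ∫ t in b..y, g t) x = g x := by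
    filter_upwards [hg.ae_hasDerivAt_integral] with x hx hxab
    exact (hx (uIoc_subset_uIcc hxab) b right_mem_uIcc).deriv
  calc ∫ x in a..b, (∫ t in a..x, f t) * g x
      = ∫ x in a..b, (∫ t in a..x, f t) * deriv (fun y => ∫ t in b..y, g t) x :=
        intervalIntegral.integral_congr_ae <| by
          filter_upwards [hG'] with x hx hxab
          rw [hx hxab]
    _ = -∫ x in a..b, deriv (fun y => ∫ t in a..y, f t) x * ∫ t in b..x, g t := by
        simp [hF.integral_mul_deriv_eq_deriv_mul hG]
    _ = -∫ x in a..b, f x * ∫ t in b..x, g t := by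
        congr 1
        refine intervalIntegral.integral_congr_ae ?_
        filter_upwards [hF'] with x hx hxab
        rw [hx hxab]

theorem secondPrimitive_eq_integral_sub_mul {f : ℝ → ℝ} {c x : ℝ}
    (hf : IntervalIntegrable f volume c x) :
    secondPrimitive f c x = ∫ t in c..x, (x - t) * f t := by
  have h := intervalIntegral_primitive_mul hf (intervalIntegrable_const (c := (1 : ℝ)))
  simp only [mul_one, intervalIntegral.integral_const, smul_eq_mul,
    ← intervalIntegral.integral_neg] at h
  refine h.trans (intervalIntegral.integral_congr fun t _ => ?_)
  ring

theorem intervalIntegral_secondPrimitive_mul {f g : ℝ → ℝ} {a b : ℝ}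
    (hf : IntervalIntegrable f volume a b) (hg : IntervalIntegrable g volume a b) :
    ∫ x in a..b, secondPrimitive f a x * g x = ∫ x in a..b, f x * secondPrimitive g b x := by
  have hF : IntervalIntegrable (fun x => ∫ t in a..x, f t) volume a b :=
    (hf.absolutelyContinuousOnInterval_intervalIntegral left_mem_uIcc).continuousOn
      |>.intervalIntegrable
  have hG : IntervalIntegrable (fun x => ∫ t in b..x, g t) volume a b :=
    (hg.absolutelyContinuousOnInterval_intervalIntegral right_mem_uIcc).continuousOn
      |>.intervalIntegrable
  simp only [secondPrimitive]
  rw [intervalIntegral_primitive_mul hF hg, intervalIntegral_primitive_mul hf hG, neg_neg]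

variable {f : ℝ → ℝ}

theorem secondPrimitive_eq_setIntegral_posPart_mul {a b x : ℝ} (hx : x ∈ Icc a b)
    (hf : IntervalIntegrable f volume a x) :
    secondPrimitive f a x = ∫ t in Icc a b, max (x - t) 0 * f t := by
  rw [secondPrimitive_eq_integral_sub_mul hf, intervalIntegral.integral_of_le hx.1,
    ← integral_Icc_eq_integral_Ioc,
    setIntegral_eq_of_subset_of_forall_sdiff_eq_zero (s := Icc a x) measurableSet_Icc
      (Icc_subset_Icc_right hx.2)]
  · refine setIntegral_congr_fun measurableSet_Icc fun t ht => ?_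
    simp only [max_eq_left (sub_nonneg.2 ht.2)]
  · intro t ht
    have hxt : x < t := not_le.1 fun h => ht.2 ⟨ht.1.1, h⟩
    simp only [max_eq_right (sub_nonpos.2 hxt.le), zero_mul]

theorem hasDerivAt_secondPrimitive (hf : ∀ a b, IntervalIntegrable f volume a b) (c x : ℝ) :
    HasDerivAt (secondPrimitive f c) (∫ t in c..x, f t) x :=
  ((intervalIntegral.continuous_primitive hf c).integral_hasStrictDerivAt c x).hasDerivAt

theorem continuous_secondPrimitive (hf : ∀ a b, IntervalIntegrable f volume a b) (c : ℝ) :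
    Continuous (secondPrimitive f c) :=
  continuous_iff_continuousAt.2 fun x => (hasDerivAt_secondPrimitive hf c x).continuousAt

theorem deriv_secondPrimitive (hf : ∀ a b, IntervalIntegrable f volume a b) (c : ℝ) :
    deriv (secondPrimitive f c) = fun x => ∫ t in c..x, f t :=
  funext fun x => (hasDerivAt_secondPrimitive hf c x).deriv

theorem deriv_deriv_secondPrimitive (hf : Continuous f) (c : ℝ) :
    deriv (deriv (secondPrimitive f c)) = f := by
  rw [deriv_secondPrimitive hf.intervalIntegrable]
  exact funext fun x => hf.deriv_integral f c x

theorem contDiff_two_secondPrimitive (hf : Continuous f) (c : ℝ) :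
    ContDiff ℝ 2 (secondPrimitive f c) := by
  rw [← one_add_one_eq_two, contDiff_succ_iff_deriv, contDiff_one_iff_deriv,
    deriv_deriv_secondPrimitive hf c, deriv_secondPrimitive hf.intervalIntegrable]
  exact ⟨fun x => (hasDerivAt_secondPrimitive hf.intervalIntegrable c x).differentiableAt, by simp,
    fun x => (hf.integral_hasStrictDerivAt c x).hasDerivAt.differentiableAt, hf⟩

theorem secondPrimitive_eq_add_secondPrimitive (hf : ∀ a b, IntervalIntegrable f volume a b)
    (b c x : ℝ) :
    secondPrimitive f b x
      = secondPrimitive f b c + (x - c) * (∫ t in b..c, f t) + secondPrimitive f c x := by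
  have hF (c : ℝ) := intervalIntegral.continuous_primitive hf c
  have hshift : ∀ t, ∫ s in b..t, f s = (∫ s in b..c, f s) + ∫ s in c..t, f s := fun t =>
    (intervalIntegral.integral_add_adjacent_intervals (hf b c) (hf c t)).symm
  have htail : ∫ t in c..x, ∫ s in b..t, f s
      = (x - c) * (∫ s in b..c, f s) + secondPrimitive f c x := by
    rw [intervalIntegral.integral_congr fun t _ => hshift t,
      intervalIntegral.integral_add intervalIntegrable_const ((hF c).intervalIntegrable c x),
      intervalIntegral.integral_const, smul_eq_mul, secondPrimitive]
  rw [add_assoc, ← htail]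
  exact (intervalIntegral.integral_add_adjacent_intervals ((hF b).intervalIntegrable b c)
    ((hF b).intervalIntegrable c x)).symm

theorem exists_hasDerivWithinAt_of_eqOn_affine_add_secondPrimitive {G : ℝ → ℝ}
    (hf : LocallyIntegrable f) {s : Set ℝ} {k m c : ℝ}
    (hG : EqOn G (fun x => k * x + m + secondPrimitive f c x) s) :
    ∃ G' : ℝ → ℝ, Continuous G' ∧ (∀ x ∈ s, HasDerivWithinAt G (G' x) s x) ∧
      ∀ᵐ x, HasDerivAt G' (f x) x := by
  have hfi : ∀ a b, IntervalIntegrable f volume a b := fun a b =>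
    (hf.integrableOn_isCompact isCompact_uIcc).intervalIntegrable
  refine ⟨fun x => k + ∫ t in c..x, f t,
    continuous_const.add (intervalIntegral.continuous_primitive hfi c), fun x hx => ?_, ?_⟩
  · have haff : HasDerivAt (fun y => k * y + m) k x := by
      simpa using ((hasDerivAt_id x).const_mul k).add_const m
    exact (haff.add (hasDerivAt_secondPrimitive hfi c x)).hasDerivWithinAt.congr hG (hG hx)
  · filter_upwards [LocallyIntegrable.ae_hasDerivAt_integral hf] with x hx
    exact (hx c).const_add k

end SecondPrimitive

section WeakForm

variable {ι : Type*} {a b : ℝ} {x : ι → ℝ}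

theorem setIntegral_mul_eq_of_weak_form (hab : a ≤ b) (hx : ∀ i, x i ∈ Icc a b) {g q : ℝ → ℝ}
    (hq : IntervalIntegrable q volume a b)
    (h : ∀ v : ℝ → ℝ, ContDiff ℝ 2 v → (∀ i, v (x i) = 0) →
      ∫ t in Icc a b, g t * deriv (deriv v) t = ∫ t in Icc a b, q t * v t)
    {w : ℝ → ℝ} (hw : Continuous w) (hw0 : ∀ i, ∫ t in Icc a b, w t * max (x i - t) 0 = 0) :
    ∫ t in Icc a b, w t * g t = ∫ t in Icc a b, w t * secondPrimitive q b t := by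
  have hnode : ∀ i, secondPrimitive w a (x i) = 0 := fun i => by
    rw [← hw0 i, secondPrimitive_eq_setIntegral_posPart_mul (hx i) (hw.intervalIntegrable a (x i))]
    simp only [mul_comm]
  calc ∫ t in Icc a b, w t * g t
      = ∫ t in Icc a b, g t * deriv (deriv (secondPrimitive w a)) t := by
        simp only [deriv_deriv_secondPrimitive hw, mul_comm]
    _ = ∫ t in Icc a b, q t * secondPrimitive w a t :=
        h _ (contDiff_two_secondPrimitive hw a) hnode
    _ = ∫ t in a..b, secondPrimitive w a t * q t := by
        simp only [integral_Icc_eq_integral_Ioc, intervalIntegral.integral_of_le hab, mul_comm]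
    _ = ∫ t in a..b, w t * secondPrimitive q b t :=
        intervalIntegral_secondPrimitive_mul (hw.intervalIntegrable a b) hq
    _ = ∫ t in Icc a b, w t * secondPrimitive q b t := by
        rw [integral_Icc_eq_integral_Ioc, intervalIntegral.integral_of_le hab]

theorem exists_ae_eq_secondPrimitive_add_sum_of_weak_form [Fintype ι] (hab : a ≤ b)
    (hx : ∀ i, x i ∈ Icc a b) {g q : ℝ → ℝ} (hg : IntegrableOn g (Icc a b))
    (hq : ∀ c d, IntervalIntegrable q volume c d)
    (h : ∀ v : ℝ → ℝ, ContDiff ℝ 2 v → (∀ i, v (x i) = 0) →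
      ∫ t in Icc a b, g t * deriv (deriv v) t = ∫ t in Icc a b, q t * v t) :
    ∃ c : ι → ℝ, ∀ᵐ t ∂(volume.restrict (Icc a b)),
      g t = secondPrimitive q b t + ∑ i, c i * max (x i - t) 0 := by
  have hQ : IntegrableOn (secondPrimitive q b) (Icc a b) :=
    (continuous_secondPrimitive hq b).continuousOn.integrableOn_compact isCompact_Icc
  have hφ (i : ι) : LocallyIntegrable (fun t => max (x i - t) 0) (volume.restrict (Icc a b)) :=
    (by fun_prop : Continuous fun t => max (x i - t) 0).locallyIntegrable
  have hzero (w : C_c(ℝ, ℝ)) (hw : ∀ i, ∫ t in Icc a b, w t * max (x i - t) 0 = 0) :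
      ∫ t in Icc a b, w t * (g - secondPrimitive q b) t = 0 := by
    have hint {f : ℝ → ℝ} (hf : IntegrableOn f (Icc a b)) :
        IntegrableOn (fun t => w t * f t) (Icc a b) :=
      hf.continuousOn_mul w.continuous.continuousOn isCompact_Icc
    simp only [Pi.sub_apply, mul_sub]
    rw [integral_sub (hint hg) (hint hQ)]
    exact sub_eq_zero.2 (setIntegral_mul_eq_of_weak_form hab hx (hq a b) h w.continuous hw)
  obtain ⟨c, hc⟩ :=
    exists_ae_eq_sum_of_forall_integral_eq_zero (hg.sub hQ).locallyIntegrable hφ hzero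
  refine ⟨c, ?_⟩
  filter_upwards [hc] with t ht
  rw [← ht, Pi.sub_apply, add_sub_cancel]

theorem exists_sum_mul_posPart_eq_affine [Fintype ι] {ξ η : ℝ} (hx : Disjoint (range x) (Ioo ξ η))
    (c : ι → ℝ) :
    ∃ k m : ℝ, ∀ y ∈ Icc ξ η, ∑ i, c i * max (x i - y) 0 = k * y + m := by
  have hterm : ∀ i, ∃ k m : ℝ, ∀ y ∈ Icc ξ η, c i * max (x i - y) 0 = k * y + m := by
    intro i
    have hi : x i ∉ Ioo ξ η := disjoint_left.1 hx (mem_range_self i)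
    rcases le_or_gt (x i) ξ with h | h
    · exact ⟨0, 0, fun y hy => by simp [max_eq_right (sub_nonpos.2 (h.trans hy.1))]⟩
    · have hη : η ≤ x i := not_lt.1 fun h' => hi ⟨h, h'⟩
      refine ⟨-c i, c i * x i, fun y hy => ?_⟩
      rw [max_eq_left (sub_nonneg.2 (hy.2.trans hη))]
      ring
  choose k m hkm using hterm
  refine ⟨∑ i, k i, ∑ i, m i, fun y hy => ?_⟩
  rw [Finset.sum_congr rfl fun i _ => hkm i y hy, Finset.sum_add_distrib, Finset.sum_mul]

theorem exists_continuous_ae_eq_of_weak_form [Finite ι] (hab : a ≤ b) (hx : ∀ i, x i ∈ Icc a b)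
    {g q : ℝ → ℝ} (hg : IntegrableOn g (Icc a b)) (hq : ∀ c d, IntervalIntegrable q volume c d)
    (h : ∀ v : ℝ → ℝ, ContDiff ℝ 2 v → (∀ i, v (x i) = 0) →
      ∫ t in Icc a b, g t * deriv (deriv v) t = ∫ t in Icc a b, q t * v t) :
    ∃ G : ℝ → ℝ, Continuous G ∧ (∀ᵐ t ∂(volume.restrict (Icc a b)), g t = G t) ∧
      ∀ ξ η, Disjoint (range x) (Ioo ξ η) →
        ∃ k m, EqOn G (fun y => k * y + m + secondPrimitive q ξ y) (Icc ξ η) := by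
  cases nonempty_fintype ι
  obtain ⟨c, hc⟩ := exists_ae_eq_secondPrimitive_add_sum_of_weak_form hab hx hg hq h
  have hQ := continuous_secondPrimitive hq b
  refine ⟨_, by fun_prop, hc, fun ξ η hξη => ?_⟩
  obtain ⟨k, m, hkm⟩ := exists_sum_mul_posPart_eq_affine hξη c
  refine ⟨k + ∫ t in b..ξ, q t, m + secondPrimitive q b ξ - ξ * ∫ t in b..ξ, q t, fun y hy => ?_⟩
  simp only [hkm y hy, secondPrimitive_eq_add_secondPrimitive hq b ξ y]
  ring

end WeakForm

theorem hasDerivWithinAt_of_eq_add_integral {a b : ℝ} {u g G : ℝ → ℝ} (hG : Continuous G)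
    (hgG : ∀ᵐ x ∂(volume.restrict (Icc a b)), g x = G x)
    (hu : ∀ x ∈ Icc a b, u x = u a + ∫ t in a..x, g t) {x : ℝ} (hx : x ∈ Icc a b) :
    HasDerivWithinAt u (G x) (Icc a b) x := by
  have hu' : ∀ y ∈ Icc a b, u y = u a + ∫ t in a..y, G t := fun y hy => by
    rw [hu y hy, intervalIntegral.integral_of_le hy.1, intervalIntegral.integral_of_le hy.1]
    congr 1
    exact integral_congr_ae <| ae_restrict_of_ae_restrict_of_subset
      (Ioc_subset_Icc_self.trans (Icc_subset_Icc_right hy.2)) hgG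
  exact ((hG.integral_hasStrictDerivAt a x).hasDerivAt.const_add (u a)).hasDerivWithinAt.congr
    hu' (hu' x hx)

theorem stmt16_general {a b lam : ℝ} (hab : a ≤ b) {N : Set ℝ} (hN : N.Finite)
    (hNab : N ⊆ Icc a b) {p e e' g : ℝ → ℝ} (hp : IntegrableOn p (Icc a b))
    (he : ∀ x ∈ Icc a b, HasDerivWithinAt e (e' x) (Icc a b) x)
    (hg : IntegrableOn g (Icc a b))
    (hac : ∀ x ∈ Icc a b, e' x = e' a + ∫ t in a..x, g t)
    (hweak : ∀ v : ℝ → ℝ, ContDiff ℝ 2 v → (∀ x ∈ N, v x = 0) →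
      ∫ x in Icc a b, g x * deriv (deriv v) x = lam * ∫ x in Icc a b, p x * e x * v x) :
    ∃ G : ℝ → ℝ,
      ContinuousOn G (Icc a b) ∧
      (∀ᵐ x ∂(volume.restrict (Icc a b)), g x = G x) ∧
      (∀ x ∈ Icc a b, HasDerivWithinAt e' (G x) (Icc a b) x) ∧
      ∀ ξ η, Icc ξ η ⊆ Icc a b → Disjoint N (Ioo ξ η) →
        (∃ c d : ℝ, ∀ x ∈ Icc ξ η,
          G x = c * x + d + lam * ∫ t in ξ..x, (x - t) * (p t * e t)) ∧
        ∃ G₃ : ℝ → ℝ,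
          ContinuousOn G₃ (Icc ξ η) ∧
          (∀ x ∈ Icc ξ η, HasDerivWithinAt G (G₃ x) (Icc ξ η) x) ∧
          ∀ᵐ x ∂(volume.restrict (Ioo ξ η)), HasDerivAt G₃ (lam * (p x * e x)) x := by
  have := hN.to_subtype
  set q : ℝ → ℝ := (Icc a b).indicator fun x => lam * (p x * e x)
  have hq_eq {x : ℝ} (hx : x ∈ Icc a b) : q x = lam * (p x * e x) := indicator_of_mem hx _
  have hq : Integrable q := (integrable_indicator_iff measurableSet_Icc).2 <|
    (hp.mul_continuousOn (fun x hx => (he x hx).continuousWithinAt) isCompact_Icc).const_mul lam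
  obtain ⟨G, hG, hgG, hspan⟩ := exists_continuous_ae_eq_of_weak_form (x := ((↑) : N → ℝ)) hab
    (fun i => hNab i.2) hg (fun _ _ => hq.intervalIntegrable) fun v hv hv0 => by
      rw [hweak v hv fun x hx => hv0 ⟨x, hx⟩, ← integral_const_mul]
      refine setIntegral_congr_fun measurableSet_Icc fun x hx => ?_
      simp only [hq_eq hx, mul_assoc]
  refine ⟨G, hG.continuousOn, hgG,
    fun x hx => hasDerivWithinAt_of_eq_add_integral hG hgG hac hx, fun ξ η hsub hdisj => ?_⟩
  obtain ⟨c, d, hcd⟩ := hspan ξ η (by rwa [Subtype.range_coe])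
  refine ⟨⟨c, d, fun x hx => ?_⟩, ?_⟩
  · refine (hcd hx).trans ?_
    beta_reduce
    rw [secondPrimitive_eq_integral_sub_mul hq.intervalIntegrable,
      ← intervalIntegral.integral_const_mul]
    congr 1
    refine intervalIntegral.integral_congr fun t ht => ?_
    rw [uIcc_of_le hx.1] at ht
    simp only [hq_eq (hsub ⟨ht.1, ht.2.trans hx.2⟩), mul_left_comm]
  · obtain ⟨G₃, hG₃, hGG₃, hG₃'⟩ :=
      exists_hasDerivWithinAt_of_eqOn_affine_add_secondPrimitive hq.locallyIntegrable hcd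
    refine ⟨G₃, hG₃.continuousOn, hGG₃, (ae_restrict_iff' measurableSet_Ioo).2 ?_⟩
    filter_upwards [hG₃'] with x hx hxs
    rw [← hq_eq (hsub (Ioo_subset_Icc_self hxs))]
    exact hx

theorem Icc_subset_and_disjoint_Ioo_of_mem_consecutive {α : Type*} [LinearOrder α]
    {x₀ x₁ x₂ x₃ : α} (h₀₁ : x₀ ≤ x₁) (h₁₂ : x₁ ≤ x₂) (h₂₃ : x₂ ≤ x₃) {s : α × α}
    (hs : s ∈ ({(x₀, x₁), (x₁, x₂), (x₂, x₃)} : Set (α × α))) :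
    Icc s.1 s.2 ⊆ Icc x₀ x₃ ∧ Disjoint {x₀, x₁, x₂, x₃} (Ioo s.1 s.2) := by
  simp only [mem_insert_iff, mem_singleton_iff] at hs
  simp only [disjoint_left]
  rcases hs with rfl | rfl | rfl <;> refine ⟨Icc_subset_Icc ?_ ?_, ?_⟩ <;> grind

/-- Regularity of weak eigenfunctions of the weighted beam problem
`e'''' = λ p e` on `(-π, π)` with piers at `±aπ`: if `e ∈ C¹([-π, π])` has an
absolutely continuous first derivative with (integrable) a.e. second
derivative `g`, and `∫ g v'' = λ ∫ p e v` for all `C²` test functions `v`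
vanishing at `±π` and `±aπ`, then `g` agrees a.e. with a continuous function
`G` (the second derivative of `e`), which on each span
`[-π, -aπ]`, `[-aπ, aπ]`, `[aπ, π]` has the explicit Volterra form
`G(x) = cᵢx + dᵢ + λ∫_{ξᵢ}^x (x - t) p(t) e(t) dt`; in particular `e` is `C²`
on `[-π, π]`, `C³` on each closed span, and `e'''' = λ p e` a.e. on each
span. -/
theorem stmt16 (a α β lam : ℝ) (ha0 : 0 < a) (ha1 : a < 1)
    (hα0 : 0 < α) (hα1 : α < 1) (hβ : 1 < β)
    (p : ℝ → ℝ) (hpmeas : Measurable p)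
    (hpbd : ∀ᵐ x ∂(volume.restrict (Set.Icc (-π) π)), α ≤ p x ∧ p x ≤ β)
    (e e' g : ℝ → ℝ)
    (he : ∀ x ∈ Set.Icc (-π) π, HasDerivWithinAt e (e' x) (Set.Icc (-π) π) x)
    (he' : ContinuousOn e' (Set.Icc (-π) π))
    (hg : IntegrableOn g (Set.Icc (-π) π))
    (hac : ∀ x ∈ Set.Icc (-π) π, e' x = e' (-π) + ∫ t in (-π)..x, g t)
    (hweak : ∀ v : ℝ → ℝ, ContDiff ℝ 2 v →
      v (-π) = 0 → v π = 0 → v (-(a * π)) = 0 → v (a * π) = 0 →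
      (∫ x in Set.Icc (-π) π, g x * deriv (deriv v) x)
        = lam * ∫ x in Set.Icc (-π) π, p x * e x * v x) :
    ∃ G : ℝ → ℝ,
      ContinuousOn G (Set.Icc (-π) π) ∧
      (∀ᵐ x ∂(volume.restrict (Set.Icc (-π) π)), g x = G x) ∧
      (∀ x ∈ Set.Icc (-π) π, HasDerivWithinAt e' (G x) (Set.Icc (-π) π) x) ∧
      ∀ s ∈ ({(-π, -(a * π)), (-(a * π), a * π), (a * π, π)} : Set (ℝ × ℝ)),
        (∃ c d : ℝ, ∀ x ∈ Set.Icc s.1 s.2,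
          G x = c * x + d + lam * ∫ t in s.1..x, (x - t) * (p t * e t)) ∧
        ∃ G₃ : ℝ → ℝ,
          ContinuousOn G₃ (Set.Icc s.1 s.2) ∧
          (∀ x ∈ Set.Icc s.1 s.2, HasDerivWithinAt G (G₃ x) (Set.Icc s.1 s.2) x) ∧
          ∀ᵐ x ∂(volume.restrict (Set.Ioo s.1 s.2)),
            HasDerivAt G₃ (lam * (p x * e x)) x := by
  have hπ := Real.pi_pos
  have haπ : 0 ≤ a * π := by positivity
  have h₀₁ : -π ≤ -(a * π) := by nlinarith
  have h₁₂ : -(a * π) ≤ a * π := by linarith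
  have h₂₃ : a * π ≤ π := by nlinarith
  have hN : ({-π, -(a * π), a * π, π} : Set ℝ) ⊆ Icc (-π) π := by grind
  have hp := Integrable.of_mem_Icc α β hpmeas.aemeasurable hpbd
  obtain ⟨G, hG, hgG, hGd, hspan⟩ := stmt16_general (by linarith) (toFinite _) hN hp he hg hac
    fun v hv hv0 => by
      simp only [mem_insert_iff, mem_singleton_iff, forall_eq_or_imp, forall_eq] at hv0
      exact hweak v hv hv0.1 hv0.2.2.2 hv0.2.1 hv0.2.2.1
  refine ⟨G, hG, hgG, hGd, fun s hs => ?_⟩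
  obtain ⟨hsub, hdisj⟩ := Icc_subset_and_disjoint_Ioo_of_mem_consecutive h₀₁ h₁₂ h₂₃ hs
  exact hspan s.1 s.2 hsub hdisj
end
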